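/- arXiv:2505.19072 — 2 statements merged into one kernel-verified Lean document; each statement's English description precedes it below -/
import Mathlib

section
/- For any skew shape λ/μ and any n ≥ 1, the hybrid Grothendieck polynomial admits the Schur expansion G_{λ/μ}(x_1,...,x_n; t; w) = Σ_γ Σ_θ t^γ w^θ Σ_ν H^{ν,γ,θ}_{λ/μ,n} · s_ν(x_1,...,x_n), where γ and θ range over weak compositions, ν ranges over partitions with at most n parts, and H^{ν,γ,θ}_{λ/μ,n} is the number of T ∈ SVRPP^n(λ/μ) with ircont(T) = ν, ceq(T) = γ, and ex(T) = θ whose reading word read(T) is a reverse lattice word. In particular, G_{λ/μ}(x_1,...,x_n; t; w) is Schur positive. -/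
open scoped Classical

/-- A partition, given as its weakly decreasing sequence of parts (0-indexed),
with finitely many nonzero parts. -/
def IsPartitionFun (f : ℕ → ℕ) : Prop :=
  (∀ i, f (i + 1) ≤ f i) ∧ ∃ N, ∀ i, N ≤ i → f i = 0

/-- Box `(i, j)` (row `i`, column `j`, both 0-indexed) lies in the skew shape `lam/mu`. -/
def InShape (lam mu : ℕ → ℕ) (i j : ℕ) : Prop :=
  mu i ≤ j ∧ j < lam i

/-- `A ≤ B` for finite sets of naturals: every element of `A` is at most every
element of `B` (for nonempty sets this says `max A ≤ min B`). -/
def FinsetLE (A B : Finset ℕ) : Prop :=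
  ∀ a ∈ A, ∀ b ∈ B, a ≤ b

/-- A set-valued reverse plane partition of skew shape `lam/mu`: every box of the
shape is filled with a nonempty finite set of positive integers, the sets weakly
increase along rows and down columns, and boxes outside the shape are empty. -/
def IsSVRPP (lam mu : ℕ → ℕ) (T : ℕ → ℕ → Finset ℕ) : Prop :=
  (∀ i j, ¬ InShape lam mu i j → T i j = ∅) ∧
  (∀ i j, InShape lam mu i j → (T i j).Nonempty) ∧
  (∀ i j x, x ∈ T i j → 1 ≤ x) ∧
  (∀ i j, InShape lam mu i j → InShape lam mu i (j + 1) → FinsetLE (T i j) (T i (j + 1))) ∧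
  (∀ i j, InShape lam mu i j → InShape lam mu (i + 1) j → FinsetLE (T i j) (T (i + 1) j))

/-- An SVRPP all of whose entries are subsets of `{1, …, n}`. -/
def IsSVRPPn (lam mu : ℕ → ℕ) (n : ℕ) (T : ℕ → ℕ → Finset ℕ) : Prop :=
  IsSVRPP lam mu T ∧ ∀ i j, T i j ⊆ Finset.Icc 1 n

/-- `ircont T v` = number of columns of `T` containing a set that contains `v`. -/
noncomputable def ircont (T : ℕ → ℕ → Finset ℕ) (v : ℕ) : ℕ :=
  Set.ncard {j : ℕ | ∃ i, v ∈ T i j}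

/-- `ceq lam mu T i` = number of boxes `(i,j)` of the shape with `(i+1,j)` also in the
shape and `max T(i,j) = min T(i+1,j)`. -/
noncomputable def ceq (lam mu : ℕ → ℕ) (T : ℕ → ℕ → Finset ℕ) (i : ℕ) : ℕ :=
  Set.ncard {j : ℕ | InShape lam mu i j ∧ InShape lam mu (i + 1) j ∧
    ∃ m, m ∈ T i j ∧ (∀ x ∈ T i j, x ≤ m) ∧ m ∈ T (i + 1) j ∧ ∀ x ∈ T (i + 1) j, m ≤ x}

/-- `exv lam mu T i` = excess of row `i`: the sum over the boxes of row `i` of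
(cardinality of the filling minus one). -/
def exv (lam mu : ℕ → ℕ) (T : ℕ → ℕ → Finset ℕ) (i : ℕ) : ℕ :=
  ∑ j ∈ Finset.Ico (mu i) (lam i), ((T i j).card - 1)

/-- The hybrid Grothendieck polynomial `G_{lam/mu}(x_1,…,x_n; t; w)`, a polynomial in
`x_1, …, x_n` (variables `Sum.inl v`, `v : Fin n`, with `x_{v+1} = X (Sum.inl v)`) with
coefficients involving the variables `t_r = X (Sum.inr (Sum.inl r))` and
`w_r = X (Sum.inr (Sum.inr r))` (`r` ranging over the 0-indexed rows). -/
noncomputable def hybridG (lam mu : ℕ → ℕ) (n : ℕ) :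
    MvPolynomial (Fin n ⊕ ℕ ⊕ ℕ) ℤ :=
  ∑ᶠ T ∈ {T : ℕ → ℕ → Finset ℕ | IsSVRPPn lam mu n T},
    (∏ v : Fin n, MvPolynomial.X (Sum.inl v) ^ ircont T ((v : ℕ) + 1)) *
    (∏ᶠ r : ℕ, MvPolynomial.X (Sum.inr (Sum.inl r)) ^ ceq lam mu T r) *
    (∏ᶠ r : ℕ, MvPolynomial.X (Sum.inr (Sum.inr r)) ^ exv lam mu T r)

/-! ### Reading words -/

/-- The contribution of row `r` to the reading word of `T` (columns bounded by `C`; empty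
boxes are skipped). First the non-pivot entries are read from right to left, within each
box from largest to smallest; then the pivots (minima of boxes) are read from left to
right, omitting every pivot equal to the maximum entry of the (nonempty) box directly
above it. -/
noncomputable def rowRead (C : ℕ) (T : ℕ → ℕ → Finset ℕ) (r : ℕ) : List ℕ :=
  (((List.range C).reverse).flatMap
      (fun j => ((T r j).sort (· ≤ ·)).tail.reverse)) ++
  ((List.range C).filterMap
      (fun j =>
        if h : (T r j).Nonempty then
          (if r ≠ 0 ∧ (T r j).min' h ∈ T (r - 1) j ∧
              (∀ x ∈ T (r - 1) j, x ≤ (T r j).min' h)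
           then none else some ((T r j).min' h))
        else none))

/-- The reading word of `T`: rows are read from bottom (row `R - 1`) to top (row `0`). -/
noncomputable def readWord (R C : ℕ) (T : ℕ → ℕ → Finset ℕ) : List ℕ :=
  ((List.range R).reverse).flatMap (fun r => rowRead C T r)

/-- The height vector of `T`: the sequence of (0-indexed) row indices of the letters of
the reading word. -/
noncomputable def heightWord (R C : ℕ) (T : ℕ → ℕ → Finset ℕ) : List ℕ :=
  ((List.range R).reverse).flatMap (fun r => (rowRead C T r).map (fun _ => r))

/-- A word is a reverse lattice (Yamanouchi) word if every suffix contains at least as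
many `a`'s as `b`'s whenever `a < b` (for positive letters). -/
def IsReverseLatticeWord (w : List ℕ) : Prop :=
  ∀ k a b, 1 ≤ a → a < b → (w.drop k).count b ≤ (w.drop k).count a

/-! ### Schur polynomials via semistandard Young tableaux -/

/-- A semistandard Young tableau of shape `nu` (the part of row `r` is `nu (r+1)`,
matching the convention that `nu v` is the number of columns whose value is `v` for
weights) with entries in `{1,…,n}`: rows weakly increase, columns strictly increase. -/
def IsSSYT (nu : ℕ → ℕ) (n : ℕ) (U : ℕ → ℕ → ℕ) : Prop :=
  (∀ r j, ¬ j < nu (r + 1) → U r j = 0) ∧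
  (∀ r j, j < nu (r + 1) → 1 ≤ U r j ∧ U r j ≤ n) ∧
  (∀ r j, j + 1 < nu (r + 1) → U r j ≤ U r (j + 1)) ∧
  (∀ r j, j < nu (r + 2) → U r j < U (r + 1) j)

/-- `contentOf nu U v` = number of boxes of `U` (of shape `nu`) filled with `v`. -/
noncomputable def contentOf (nu : ℕ → ℕ) (U : ℕ → ℕ → ℕ) (v : ℕ) : ℕ :=
  Set.ncard {p : ℕ × ℕ | p.2 < nu (p.1 + 1) ∧ U p.1 p.2 = v}

/-- The Schur polynomial `s_nu(x_1,…,x_n)` (in the `x` variables `Sum.inl v`), as the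
generating function of semistandard Young tableaux of shape `nu` with entries in
`{1,…,n}`. -/
noncomputable def schurPoly (n : ℕ) (nu : ℕ → ℕ) : MvPolynomial (Fin n ⊕ ℕ ⊕ ℕ) ℤ :=
  ∑ᶠ U ∈ {U : ℕ → ℕ → ℕ | IsSSYT nu n U},
    ∏ v : Fin n, MvPolynomial.X (Sum.inl v) ^ contentOf nu U ((v : ℕ) + 1)

/-- `Hcoef lam mu n R C nu ga th` = number of `T ∈ SVRPP^n(lam/mu)` with
`ircont(T) = nu`, `ceq(T) = ga`, `ex(T) = th` whose reading word is a reverse lattice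
word. -/
noncomputable def Hcoef (lam mu : ℕ → ℕ) (n R C : ℕ) (nu ga th : ℕ → ℕ) : ℕ :=
  Set.ncard {T : ℕ → ℕ → Finset ℕ | IsSVRPPn lam mu n T ∧
    (∀ v, ircont T v = nu v) ∧
    (∀ r, ceq lam mu T r = ga r) ∧
    (∀ r, exv lam mu T r = th r) ∧
    IsReverseLatticeWord (readWord R C T)}

set_option linter.unusedVariables false
namespace HG

structure Fr (s e d : ℕ → ℤ) (R : ℕ) : Prop where
  hs : ∀ r, s (r+1) ≤ s r
  he : ∀ r, e (r+1) ≤ e r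
  hd : ∀ r, 0 ≤ d r
  s0 : ∀ r, R ≤ r → s r = 0
  e0 : ∀ r, R ≤ r → e r = 0

structure Cf (s e d c : ℕ → ℤ) : Prop where
  lo : ∀ r, s r ≤ c r - d r
  hi : ∀ r, c r ≤ e r
  st : ∀ r, c (r+1) ≤ c r - d r

def nA (s c : ℕ → ℤ) : ℕ → ℤ
  | 0 => c 0 - s 0
  | r+1 => min (c (r+1)) (s r) - s (r+1)

def nB (e d c : ℕ → ℤ) : ℕ → ℤ
  | 0 => e 0 - (c 0 - d 0)
  | r+1 => min (e (r+1)) (c r - d r) - (c (r+1) - d (r+1))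

def nP (s e d c : ℕ → ℤ) : ℕ → ℤ
  | 0 => nB e d c 0 - d 0
  | r+1 => nP s e d c r - nA s c r + d r + nB e d c (r+1) - d (r+1)

def nQ (s e d c : ℕ → ℤ) : ℕ → ℤ
  | 0 => nP s e d c 0
  | r+1 => nP s e d c (r+1) + max 0 (c (r+1) - s r)

theorem nQ_rec (s e d c : ℕ → ℤ) (r : ℕ) : nQ s e d c (r+1) =
    nQ s e d c r + max 0 (s r - c (r+1)) - max 0 (c r - d r - e (r+1)) := by
  cases r with
  | zero => simp only [nQ, nP, nA, nB]; omega
  | succ r => simp only [nQ, nP, nA, nB]; omega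

theorem nP_le_nQ (s e d c : ℕ → ℤ) (r : ℕ) : nP s e d c r ≤ nQ s e d c r := by
  cases r with
  | zero => simp only [nQ]; omega
  | succ r => simp only [nQ]; omega

theorem nQ_le {s e d c : ℕ → ℤ} (M : ℤ) (r : ℕ) (h : ∀ t ≤ r, nP s e d c t ≤ M) :
    nQ s e d c r ≤ M := by
  induction r with
  | zero => simpa [nQ] using h 0 le_rfl
  | succ r ih =>
    have h1 := ih (fun t ht => h t (by omega))
    have h2 := nQ_rec s e d c r
    have h3 := h (r+1) le_rfl
    have h4 : nQ s e d c (r+1) = nP s e d c (r+1) + max 0 (c (r+1) - s r) := rfl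
    omega

structure FC (s e d c : ℕ → ℤ) (p k : ℕ) : Prop where
  le : p ≤ k
  top : ∀ q, p = q + 1 → c p ≤ s q
  mid : ∀ t, p ≤ t → t < k → s t < c (t+1) ∧ c t - d t ≤ e (t+1)
  bot : e (k+1) < c k - d k
  pos : s k < c k - d k

structure EC (s e d c : ℕ → ℤ) (p k : ℕ) : Prop where
  le : p ≤ k
  top : ∀ q, p = q + 1 → c p < s q
  mid : ∀ t, p ≤ t → t < k → s t ≤ c (t+1) ∧ c t - d t < e (t+1)
  bot : e (k+1) ≤ c k - d k
  pos : c p < e p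

def sh (c : ℕ → ℤ) (p k : ℕ) (z : ℤ) (t : ℕ) : ℤ := if p ≤ t ∧ t ≤ k then c t + z else c t

theorem sh_in {c : ℕ → ℤ} {p k : ℕ} {z : ℤ} {t : ℕ} (h1 : p ≤ t) (h2 : t ≤ k) :
    sh c p k z t = c t + z := by simp [sh, h1, h2]
theorem sh_lt {c : ℕ → ℤ} {p k : ℕ} {z : ℤ} {t : ℕ} (h1 : t < p) :
    sh c p k z t = c t := by simp [sh]; omega
theorem sh_gt {c : ℕ → ℤ} {p k : ℕ} {z : ℤ} {t : ℕ} (h1 : k < t) :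
    sh c p k z t = c t := by simp [sh]; omega
theorem sh_sh (c : ℕ → ℤ) (p k : ℕ) (z w : ℤ) (h : z + w = 0) : sh (sh c p k z) p k w = c := by
  funext t
  simp only [sh]
  split_ifs <;> omega

theorem sh_cases (c : ℕ → ℤ) (p k : ℕ) (z : ℤ) (t : ℕ) :
    (t < p ∧ sh c p k z t = c t) ∨ (p ≤ t ∧ t ≤ k ∧ sh c p k z t = c t + z) ∨
    (k < t ∧ sh c p k z t = c t) := by
  by_cases h : p ≤ t
  · by_cases h' : t ≤ k
    · exact Or.inr (Or.inl ⟨h, h', sh_in h h'⟩)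
    · exact Or.inr (Or.inr ⟨by omega, sh_gt (by omega)⟩)
  · exact Or.inl ⟨by omega, sh_lt (by omega)⟩

theorem FC.cf {s e d c : ℕ → ℤ} {R p k : ℕ} (hF : Fr s e d R) (hc : Cf s e d c)
    (h : FC s e d c p k) : Cf s e d (sh c p k (-1)) := by
  have hle := h.le
  refine ⟨fun r => ?_, fun r => ?_, fun r => ?_⟩
  · have := hc.lo r
    rcases sh_cases c p k (-1) r with h1 | ⟨h1, h2, h3⟩ | h1
    · omega
    · rcases Nat.lt_or_ge r k with h4 | h4
      · have := h.mid r h1 h4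
        have := hc.st r
        omega
      · have : r = k := by omega
        subst this
        have := h.pos
        omega
    · omega
  · have := hc.hi r
    rcases sh_cases c p k (-1) r with h1 | ⟨h1, h2, h3⟩ | h1 <;> omega
  · have := hc.st r
    rcases sh_cases c p k (-1) r with h1 | ⟨h1, h2, h3⟩ | h1 <;>
    rcases sh_cases c p k (-1) (r+1) with h1' | ⟨h1', h2', h3'⟩ | h1' <;> try omega
    have : r = k := by omega
    subst this
    have := h.bot
    have := hc.hi (r+1)
    omega

theorem FC.ec {s e d c : ℕ → ℤ} {p k : ℕ} (hc : Cf s e d c)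
    (h : FC s e d c p k) : EC s e d (sh c p k (-1)) p k := by
  have hle := h.le
  refine ⟨hle, fun q hq => ?_, fun t h1 h2 => ?_, ?_, ?_⟩
  · rw [sh_in le_rfl hle]; have := h.top q hq; omega
  · rw [sh_in (by omega) (by omega), sh_in (by omega) (by omega)]; have := h.mid t h1 h2; omega
  · rw [sh_in hle le_rfl]; have := h.bot; omega
  · rw [sh_in le_rfl hle]; have := hc.hi p; omega

theorem EC.cf {s e d c : ℕ → ℤ} {R p k : ℕ} (hF : Fr s e d R) (hc : Cf s e d c)
    (h : EC s e d c p k) : Cf s e d (sh c p k 1) := by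
  have hle := h.le
  refine ⟨fun r => ?_, fun r => ?_, fun r => ?_⟩
  · have := hc.lo r
    rcases sh_cases c p k 1 r with h1 | ⟨h1, h2, h3⟩ | h1 <;> omega
  · have := hc.hi r
    rcases sh_cases c p k 1 r with h1 | ⟨h1, h2, h3⟩ | h1
    · omega
    · rcases Nat.lt_or_ge p r with h4 | h4
      · obtain ⟨q, rfl⟩ : ∃ q, r = q + 1 := ⟨r - 1, by omega⟩
        have := h.mid q (by omega) (by omega)
        have := hc.st q
        omega
      · have : r = p := by omega
        subst this
        have := h.pos
        omega
    · omega
  · have := hc.st r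
    rcases sh_cases c p k 1 r with h1 | ⟨h1, h2, h3⟩ | h1 <;>
    rcases sh_cases c p k 1 (r+1) with h1' | ⟨h1', h2', h3'⟩ | h1' <;> try omega
    have : p = r + 1 := by omega
    have h5 := h.top r this
    rw [this] at h5
    have := hc.lo r
    omega

theorem EC.fc {s e d c : ℕ → ℤ} {p k : ℕ} (hc : Cf s e d c)
    (h : EC s e d c p k) : FC s e d (sh c p k 1) p k := by
  have hle := h.le
  refine ⟨hle, fun q hq => ?_, fun t h1 h2 => ?_, ?_, ?_⟩
  · rw [sh_in le_rfl hle]; have := h.top q hq; omega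
  · rw [sh_in (by omega) (by omega), sh_in (by omega) (by omega)]; have := h.mid t h1 h2; omega
  · rw [sh_in hle le_rfl]; have := h.bot; omega
  · rw [sh_in hle le_rfl]; have := hc.lo k; omega

theorem FC.nA {s e d c : ℕ → ℤ} {p k : ℕ} (h : FC s e d c p k) (t : ℕ) :
    nA s (sh c p k (-1)) t = nA s c t - (if t = p then 1 else 0) := by
  have hle := h.le
  cases t with
  | zero =>
    simp only [HG.nA]
    rcases sh_cases c p k (-1) 0 with h1 | ⟨h1, h2, h3⟩ | h1 <;> split_ifs <;> omega
  | succ t =>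
    simp only [HG.nA]
    rcases sh_cases c p k (-1) (t+1) with h1 | ⟨h1, h2, h3⟩ | h1
    · split_ifs <;> omega
    · split_ifs with h4
      · have := h.top t h4.symm
        subst h4
        omega
      · have := h.mid t (by omega) (by omega)
        omega
    · split_ifs <;> omega

theorem FC.nB {s e d c : ℕ → ℤ} {p k : ℕ} (hc : Cf s e d c) (h : FC s e d c p k) (t : ℕ) :
    nB e d (sh c p k (-1)) t = nB e d c t + (if t = p then 1 else 0) := by
  have hle := h.le
  cases t with
  | zero =>
    simp only [HG.nB]
    rcases sh_cases c p k (-1) 0 with h1 | ⟨h1, h2, h3⟩ | h1 <;> split_ifs <;> omega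
  | succ t =>
    simp only [HG.nB]
    rcases sh_cases c p k (-1) (t) with h1' | ⟨h1', h2', h3'⟩ | h1' <;>
    rcases sh_cases c p k (-1) (t+1) with h1 | ⟨h1, h2, h3⟩ | h1 <;>
    split_ifs with h4 <;> try omega
    · have := h.mid t (by omega) (by omega)
      omega
    · have : t = k := by omega
      subst this
      have := h.bot
      omega

theorem FC.nP {s e d c : ℕ → ℤ} {p k : ℕ} (hc : Cf s e d c) (h : FC s e d c p k) (t : ℕ) :
    nP s e d (sh c p k (-1)) t =
      nP s e d c t + (if t < p then 0 else if t = p then 1 else 2) := by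
  induction t with
  | zero =>
    simp only [HG.nP]
    rw [h.nB hc]
    split_ifs <;> omega
  | succ t ih =>
    simp only [HG.nP]
    rw [h.nB hc, h.nA, ih]
    split_ifs <;> omega

theorem exF {s e d c : ℕ → ℤ} {R p : ℕ} (hF : Fr s e d R) (hc : Cf s e d c)
    (h1 : ∀ t, nP s e d c t ≤ nP s e d c p) (h2 : ∀ t, p < t → nP s e d c t < nP s e d c p) :
    ∃ k, FC s e d c p k := by
  have hQ : ∀ r, nQ s e d c r ≤ nP s e d c p := fun r => nQ_le _ r (fun t _ => h1 t)
  have top : ∀ q, p = q + 1 → c p ≤ s q := by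
    intro q hq
    have h3 := hQ p
    subst hq
    simp only [nQ] at h3
    omega
  have Qp : nQ s e d c p = nP s e d c p := le_antisymm (hQ p) (nP_le_nQ _ _ _ _ _)
  have key : ∀ k, p ≤ k → (∀ t, p ≤ t → t < k → c t - d t ≤ e (t+1)) →
      nQ s e d c k = nP s e d c p := by
    intro k hk
    induction k, hk using Nat.le_induction with
    | base => intro _; exact Qp
    | succ k hk ih =>
      intro hh
      have h3 := ih (fun t a b => hh t a (by omega))
      have h4 := hh k hk (by omega)
      have h5 := nQ_rec s e d c k
      have h6 := hQ (k+1)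
      omega
  have ex : ∃ k, p ≤ k ∧ e (k+1) < c k - d k := by
    by_contra hcon
    push Not at hcon
    have h3 := key (p + R + 1) (by omega) (fun t ht _ => hcon t ht)
    have h4 := h2 (p+R+1) (by omega)
    simp only [nQ] at h3
    have h5 := hF.s0 (p+R) (by omega)
    have h6 := hF.e0 (p+R+1) (by omega)
    have h7 := hc.hi (p+R+1)
    omega
  classical
  obtain ⟨hk1, hk2⟩ := Nat.find_spec ex
  have hmin : ∀ t, p ≤ t → t < Nat.find ex → c t - d t ≤ e (t+1) := by
    intro t ht1 ht2
    have := Nat.find_min ex ht2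
    push Not at this
    exact this ht1
  generalize Nat.find ex = k at *
  refine ⟨k, hk1, top, fun t ht1 ht2 => ⟨?_, hmin t ht1 ht2⟩, hk2, ?_⟩
  · have h3 := key (t+1) (by omega) (fun t' a b => hmin t' a (by omega))
    have h4 := h2 (t+1) (by omega)
    simp only [nQ] at h3
    omega
  · have h3 := key k hk1 hmin
    have h4 := h2 (k+1) (by omega)
    have h5 := nQ_rec s e d c k
    have h6 : nQ s e d c (k+1) = nP s e d c (k+1) + max 0 (c (k+1) - s k) := rfl
    have h7 := hc.lo k
    have h8 := hc.hi (k+1)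
    omega

theorem pos_of_first {s e d c : ℕ → ℤ} {p : ℕ} (hc : Cf s e d c) (M : ℤ) (hM : 0 ≤ M)
    (h2 : ∀ t, t < p → nP s e d c t ≤ M) (h3 : M < nP s e d c p) : c p < e p := by
  cases p with
  | zero =>
    simp only [nP, nB] at h3; omega
  | succ q =>
    have h4 := nQ_le M q (fun t ht => h2 t (by omega))
    have h5 := nQ_rec s e d c q
    have h6 := nP_le_nQ s e d c (q+1)
    have := hc.lo q
    have := hc.hi (q+1)
    omega

theorem exE {s e d c : ℕ → ℤ} {R p : ℕ} (hF : Fr s e d R) (hc : Cf s e d c)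
    (h1 : ∀ t, nP s e d c t ≤ nP s e d c p) (h2 : ∀ t, t < p → nP s e d c t < nP s e d c p)
    (h0 : 0 < nP s e d c p) :
    ∃ k, EC s e d c p k := by
  have hQ : ∀ r, nQ s e d c r ≤ nP s e d c p := fun r => nQ_le _ r (fun t _ => h1 t)
  have top : ∀ q, p = q + 1 → c p < s q := by
    intro q hq
    subst hq
    have h3 := nQ_le (s:=s) (e:=e) (d:=d) (c:=c) (nP s e d c (q+1) - 1) q (fun t ht => by have := h2 t (by omega); omega)
    have h4 := nP_le_nQ s e d c (q+1)
    have h5 := nQ_rec s e d c q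
    omega
  have Qp : nQ s e d c p = nP s e d c p := le_antisymm (hQ p) (nP_le_nQ _ _ _ _ _)
  have key : ∀ k, p ≤ k → (∀ t, p ≤ t → t < k → c t - d t < e (t+1)) →
      nQ s e d c k = nP s e d c p := by
    intro k hk
    induction k, hk using Nat.le_induction with
    | base => intro _; exact Qp
    | succ k hk ih =>
      intro hh
      have h3 := ih (fun t a b => hh t a (by omega))
      have h4 := hh k hk (by omega)
      have h5 := nQ_rec s e d c k
      have h6 := hQ (k+1)
      omega
  have ex : ∃ k, p ≤ k ∧ e (k+1) ≤ c k - d k := by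
    refine ⟨p + R, by omega, ?_⟩
    have h5 := hF.s0 (p+R) (by omega)
    have h6 := hF.e0 (p+R+1) (by omega)
    have h7 := hc.lo (p+R)
    omega
  classical
  obtain ⟨hk1, hk2⟩ := Nat.find_spec ex
  have hmin : ∀ t, p ≤ t → t < Nat.find ex → c t - d t < e (t+1) := by
    intro t ht1 ht2
    have := Nat.find_min ex ht2
    push Not at this
    exact this ht1
  generalize Nat.find ex = k at *
  refine ⟨k, hk1, top, fun t ht1 ht2 => ⟨?_, hmin t ht1 ht2⟩, hk2, ?_⟩
  · have h3 := key (t+1) (by omega) (fun t' a b => hmin t' a (by omega))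
    have h4 := key t (by omega) (fun t' a b => hmin t' a (by omega))
    have h5 := nQ_rec s e d c t
    have := hmin t ht1 ht2
    omega
  · exact pos_of_first hc (nP s e d c p - 1) (by omega) (fun t ht => by have := h2 t ht; omega) (by omega)

theorem FC.uniq {s e d c : ℕ → ℤ} {p k k' : ℕ} (h : FC s e d c p k) (h' : FC s e d c p k') :
    k = k' := by
  have a1 := h.le
  have a2 := h'.le
  rcases lt_trichotomy k k' with h1 | h1 | h1
  · have := h'.mid k a1 h1
    have := h.bot
    omega
  · exact h1
  · have := h.mid k' a2 h1
    have := h'.bot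
    omega

theorem EC.uniq {s e d c : ℕ → ℤ} {p k k' : ℕ} (h : EC s e d c p k) (h' : EC s e d c p k') :
    k = k' := by
  have a1 := h.le
  have a2 := h'.le
  rcases lt_trichotomy k k' with h1 | h1 | h1
  · have := h'.mid k a1 h1
    have := h.bot
    omega
  · exact h1
  · have := h.mid k' a2 h1
    have := h'.bot
    omega

/-! strings -/

theorem iter_aux {α : Type} (S : α → Prop) (f g : α → α) (φ ε : α → ℤ) (Rel : α → α → Prop)
    (rf : ∀ x, Rel x x) (tr : ∀ x y z, Rel x y → Rel y z → Rel x z)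
    (hf : ∀ x, S x → 0 < φ x → S (f x) ∧ g (f x) = x ∧ φ (f x) = φ x - 1 ∧ ε (f x) = ε x + 1
      ∧ Rel x (f x)) (m : ℕ) : ∀ x, S x → (m : ℤ) ≤ φ x →
      S (f^[m] x) ∧ g^[m] (f^[m] x) = x ∧ φ (f^[m] x) = φ x - m ∧ ε (f^[m] x) = ε x + m
        ∧ Rel x (f^[m] x) := by
  induction m with
  | zero => intro x hx _; simp [hx, rf]
  | succ m ih =>
    intro x hx hm
    push_cast at hm
    obtain ⟨h1, h2, h3, h4, h5⟩ := hf x hx (by omega)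
    obtain ⟨k1, k2, k3, k4, k5⟩ := ih (f x) h1 (by omega)
    rw [Function.iterate_succ_apply f, Function.iterate_succ_apply' g, k2]
    refine ⟨k1, h2, ?_, ?_, tr _ _ _ h5 k5⟩ <;> push_cast <;> omega

theorem string_inv {α : Type} (S : α → Prop) (step : α → α → Prop) (φ ε : α → ℤ)
    (Rel : α → α → Prop)
    (rf : ∀ x, Rel x x) (tr : ∀ x y z, Rel x y → Rel y z → Rel x z)
    (hφ : ∀ x, S x → 0 ≤ φ x) (hε : ∀ x, S x → 0 ≤ ε x)
    (F : ∀ x, S x → 0 < φ x → ∃ y, step x y ∧ S y)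
    (E : ∀ y, S y → 0 < ε y → ∃ x, step x y ∧ S x)
    (uF : ∀ x y y', step x y → step x y' → y = y')
    (uE : ∀ x x' y, step x y → step x' y → x = x')
    (wt : ∀ x y, S x → S y → step x y → φ y = φ x - 1 ∧ ε y = ε x + 1)
    (rel : ∀ x y, S x → S y → step x y → Rel x y ∧ Rel y x) :
    ∃ σ : α → α, ∀ x, S x → S (σ x) ∧ σ (σ x) = x ∧ φ (σ x) = ε x ∧ ε (σ x) = φ x ∧
      Rel x (σ x) := by
  classical
  let f : α → α := fun x => if h : ∃ y, step x y ∧ S y then h.choose else x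
  let g : α → α := fun y => if h : ∃ x, step x y ∧ S x then h.choose else y
  have hf1 : ∀ x, (∃ y, step x y ∧ S y) → step x (f x) ∧ S (f x) := by
    intro x h
    have : f x = h.choose := by simp only [f]; rw [dif_pos h]
    rw [this]; exact h.choose_spec
  have hg1 : ∀ y, (∃ x, step x y ∧ S x) → step (g y) y ∧ S (g y) := by
    intro x h
    have : g x = h.choose := by simp only [g]; rw [dif_pos h]
    rw [this]; exact h.choose_spec
  have hf : ∀ x, S x → 0 < φ x → S (f x) ∧ g (f x) = x ∧ φ (f x) = φ x - 1 ∧ ε (f x) = ε x + 1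
      ∧ Rel x (f x) := by
    intro x hx hp
    obtain ⟨h1, h2⟩ := hf1 x (F x hx hp)
    obtain ⟨h3, h4⟩ := hg1 (f x) ⟨x, h1, hx⟩
    exact ⟨h2, uE _ _ _ h3 h1, (wt _ _ hx h2 h1).1, (wt _ _ hx h2 h1).2, (rel _ _ hx h2 h1).1⟩
  have hg : ∀ x, S x → 0 < ε x → S (g x) ∧ f (g x) = x ∧ ε (g x) = ε x - 1 ∧ φ (g x) = φ x + 1
      ∧ Rel x (g x) := by
    intro x hx hp
    obtain ⟨h1, h2⟩ := hg1 x (E x hx hp)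
    obtain ⟨h3, h4⟩ := hf1 (g x) ⟨x, h1, hx⟩
    have := wt _ _ h2 hx h1
    exact ⟨h2, uF _ _ _ h3 h1, by omega, by omega, (rel _ _ h2 hx h1).2⟩
  have If := iter_aux S f g φ ε Rel rf tr hf
  have Ig := iter_aux S g f ε φ Rel rf tr hg
  refine ⟨fun x => if ε x ≤ φ x then f^[(φ x - ε x).toNat] x else g^[(ε x - φ x).toNat] x, ?_⟩
  intro x hx
  have p1 := hφ x hx
  have p2 := hε x hx
  by_cases h : ε x ≤ φ x
  · obtain ⟨k1, k2, k3, k4, k5⟩ := If (φ x - ε x).toNat x hx (by omega)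
    simp only [if_pos h]
    rw [show ((φ x - ε x).toNat : ℤ) = φ x - ε x by omega] at k3 k4
    refine ⟨k1, ?_, by omega, by omega, k5⟩
    rw [k3, k4]
    by_cases h' : φ x = ε x
    · simp [h']
    · rw [if_neg (by omega)]
      rw [show (ε x + (φ x - ε x) - (φ x - (φ x - ε x))).toNat = (φ x - ε x).toNat by congr 1; omega]
      exact k2
  · obtain ⟨k1, k2, k3, k4, k5⟩ := Ig (ε x - φ x).toNat x hx (by omega)
    simp only [if_neg h]
    rw [show ((ε x - φ x).toNat : ℤ) = ε x - φ x by omega] at k3 k4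
    refine ⟨k1, ?_, by omega, by omega, k5⟩
    rw [k3, k4, if_pos (by omega)]
    rw [show (φ x + (ε x - φ x) - (ε x - (ε x - φ x))).toNat = (ε x - φ x).toNat by congr 1; omega]
    exact k2

end HG

namespace HG

theorem Cf.zero {s e d c : ℕ → ℤ} {R : ℕ} (hF : Fr s e d R) (hc : Cf s e d c) {r : ℕ} (h : R ≤ r) :
    c r = 0 ∧ d r = 0 := by
  have := hF.s0 r h; have := hF.e0 r h; have := hc.lo r; have := hc.hi r; have := hF.hd r
  omega

theorem nA_zero {s e d c : ℕ → ℤ} {R : ℕ} (hF : Fr s e d R) (hc : Cf s e d c) {r : ℕ} (h : R ≤ r) :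
    nA s c r = 0 := by
  have h1 := hc.zero hF h
  have h2 := hF.s0 r h
  cases r with
  | zero => simp only [nA]; omega
  | succ r => have := hF.hs r; simp only [nA]; omega

theorem nP_const {s e d c : ℕ → ℤ} {R : ℕ} (hF : Fr s e d R) (hc : Cf s e d c) {r : ℕ} (h : R ≤ r) :
    nP s e d c r = nP s e d c R := by
  induction r, h using Nat.le_induction with
  | base => rfl
  | succ r hr ih =>
    have h1 := hc.zero hF hr
    have h1' := hc.zero hF (show R ≤ r + 1 by omega)
    have h2 := nA_zero hF hc hr
    have h3 := hF.e0 (r+1) (by omega)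
    simp only [nP, nB]
    omega

noncomputable def nM (s e d : ℕ → ℤ) (R : ℕ) (c : ℕ → ℤ) : ℤ :=
  (Finset.range (R+1)).sup' ⟨0, by simp⟩ (nP s e d c)

theorem nM_spec {s e d c : ℕ → ℤ} {R : ℕ} (hF : Fr s e d R) (hc : Cf s e d c) :
    (∀ t, nP s e d c t ≤ nM s e d R c) ∧ ∃ p, nP s e d c p = nM s e d R c := by
  constructor
  · intro t
    rcases Nat.lt_or_ge t (R+1) with h | h
    · exact Finset.le_sup' (nP s e d c) (by simpa using h)
    · rw [nP_const hF hc (by omega : R ≤ t)]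
      exact Finset.le_sup' (nP s e d c) (by simp)
  · obtain ⟨p, _, hp⟩ := Finset.exists_mem_eq_sup' (s := Finset.range (R+1)) ⟨0, by simp⟩ (nP s e d c)
    exact ⟨p, hp.symm⟩

theorem nM_eq {s e d c : ℕ → ℤ} {R : ℕ} (hF : Fr s e d R) (hc : Cf s e d c) {m : ℤ}
    (h1 : ∀ t, nP s e d c t ≤ m) {p : ℕ} (h2 : nP s e d c p = m) : nM s e d R c = m := by
  obtain ⟨h3, q, h4⟩ := nM_spec hF hc
  have := h3 p
  have := h1 q
  omega

def Step (s e d : ℕ → ℤ) (c c' : ℕ → ℤ) : Prop :=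
  ∃ p k, Cf s e d c ∧ FC s e d c p k ∧ (∀ t, nP s e d c t ≤ nP s e d c p) ∧
    (∀ t, p < t → nP s e d c t < nP s e d c p) ∧ c' = sh c p k (-1)

def Inv1 (s e d : ℕ → ℤ) (c c' : ℕ → ℤ) : Prop :=
  ∀ r, 0 < nP s e d c r → (∀ t < r, nP s e d c t ≤ 0) →
    0 < nP s e d c' r ∧ (∀ t < r, nP s e d c' t ≤ 0) ∧ ∀ t < r, c' t = c t

def nRel (s e d : ℕ → ℤ) (z : ℤ) (c c' : ℕ → ℤ) : Prop :=
  (∀ t, nA s c' t + nB e d c' t = nA s c t + nB e d c t) ∧ (z = 1 → Inv1 s e d c c')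

theorem last_max (f : ℕ → ℤ) (R : ℕ) (m : ℤ) (h1 : ∃ p, f p = m)
    (h3 : ∀ t, f t ≤ m) (h2 : ∀ t, R ≤ t → f t < m) :
    ∃ p, f p = m ∧ ∀ t, p < t → f t < m := by
  obtain ⟨p, hp⟩ := h1
  have hb : p ≤ R := by
    by_contra h
    have := h2 p (by omega)
    omega
  refine ⟨Nat.findGreatest (fun p => f p = m) R,
    Nat.findGreatest_spec (P := fun p => f p = m) hb hp, fun t ht => ?_⟩
  by_contra h
  have h4 := h3 t
  have h5 : t < R := by
    by_contra h6
    have := h2 t (by omega)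
    omega
  exact Nat.findGreatest_is_greatest ht h5.le (by show f t = m; omega)

theorem first_max (f : ℕ → ℤ) (m : ℤ) (h1 : ∃ p, f p = m) (h2 : ∀ t, f t ≤ m) :
    ∃ p, f p = m ∧ ∀ t, t < p → f t < m :=
  ⟨Nat.find h1, Nat.find_spec h1, fun t ht => lt_of_le_of_ne (h2 t) (Nat.find_min h1 ht)⟩

theorem num {s e d : ℕ → ℤ} {R : ℕ} (hF : Fr s e d R) (z : ℤ) (hz : z = 0 ∨ z = 1) :
    ∃ σ : (ℕ → ℤ) → (ℕ → ℤ), ∀ c, Cf s e d c → (z = 1 → ∃ t, 0 < nP s e d c t) →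
      Cf s e d (σ c) ∧ (z = 1 → ∃ t, 0 < nP s e d (σ c) t) ∧ σ (σ c) = c ∧
      nP s e d (σ c) R = 2 * z - nP s e d c R ∧ nRel s e d z c (σ c) := by
  have P0 : ∀ c, Cf s e d c → 0 ≤ nP s e d c 0 := by
    intro c hc
    have := hc.hi 0
    simp only [nP, nB]; omega
  obtain ⟨σ, hσ⟩ := string_inv (fun c => Cf s e d c ∧ z ≤ nM s e d R c) (Step s e d)
    (fun c => nM s e d R c - nP s e d c R) (fun c => nM s e d R c - z) (nRel s e d z)
    (fun c => ⟨fun t => rfl, fun _ r h1 h2 => ⟨h1, h2, fun _ _ => rfl⟩⟩)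
    (by
      rintro x y w ⟨a1, a2⟩ ⟨b1, b2⟩
      refine ⟨fun t => by rw [b1, a1], fun hz1 r h1 h2 => ?_⟩
      obtain ⟨k1, k2, k3⟩ := a2 hz1 r h1 h2
      obtain ⟨l1, l2, l3⟩ := b2 hz1 r k1 k2
      exact ⟨l1, l2, fun t ht => by rw [l3 t ht, k3 t ht]⟩)
    (by
      rintro c ⟨hc, _⟩
      have := (nM_spec hF hc).1 R
      omega)
    (by
      rintro c ⟨hc, h⟩
      omega)
    (by
      rintro c ⟨hc, h⟩ hp
      obtain ⟨h3, h4⟩ := nM_spec hF hc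
      obtain ⟨p, hp1, hp2⟩ := last_max (nP s e d c) R _ h4 h3
        (fun t ht => by rw [nP_const hF hc ht]; omega)
      rw [← hp1] at h3 hp2
      obtain ⟨k, hk⟩ := exF hF hc h3 hp2
      have hcf := hk.cf hF hc
      refine ⟨_, ⟨p, k, hc, hk, h3, hp2, rfl⟩, hcf, ?_⟩
      have h5 := (nM_spec hF hcf).1 p
      rw [hk.nP hc] at h5
      simp at h5
      omega)
    (by
      rintro c ⟨hc, h⟩ hp
      obtain ⟨h3, h4⟩ := nM_spec hF hc
      obtain ⟨p, hp1, hp2⟩ := first_max (nP s e d c) _ h4 h3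
      rw [← hp1] at h3 hp2
      obtain ⟨k, hk⟩ := exE hF hc h3 hp2 (by omega)
      have hcf := hk.cf hF hc
      have hfc := hk.fc hc
      have hs : sh (sh c p k 1) p k (-1) = c := sh_sh _ _ _ _ _ (by norm_num)
      have hP := hfc.nP hcf
      rw [hs] at hP
      have hPp := hP p
      simp at hPp
      refine ⟨_, ⟨p, k, hcf, hfc, fun t => ?_, fun t ht => ?_, hs.symm⟩, hcf, ?_⟩
      · have := hP t
        have := h3 t
        by_cases h : t < p
        · have := hp2 t h
          rw [if_pos h] at *
          omega
        · rw [if_neg h] at *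
          split_ifs at * <;> omega
      · have := hP t
        have := h3 t
        rw [if_neg (by omega), if_neg (by omega)] at *
        omega
      · have h5 := (nM_spec hF hcf).1 p
        omega)
    (by
      rintro c y y' ⟨p, k, hc, hk, a1, a2, rfl⟩ ⟨p', k', -, hk', a1', a2', rfl⟩
      have hp : p = p' := by
        rcases lt_trichotomy p p' with h | h | h
        · have := a2 _ h; have := a1' p; omega
        · exact h
        · have := a2' _ h; have := a1 p'; omega
      subst hp
      rw [hk.uniq hk'])
    (by
      rintro c c' y ⟨p, k, hc, hk, a1, a2, hy⟩ ⟨p', k', hc', hk', a1', a2', hy'⟩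
      have e1 := hk.ec hc
      have e2 := hk'.ec hc'
      have q1 := hk.nP hc
      have q2 := hk'.nP hc'
      rw [← hy] at e1 q1
      rw [← hy'] at e2 q2
      have hp : p = p' := by
        have b1 := q1 p; have b2 := q1 p'; have b3 := q2 p; have b4 := q2 p'
        have b5 := a1 p'; have b6 := a1' p
        rcases lt_trichotomy p p' with h | h | h
        · have := a2 _ h
          rw [if_neg (by omega), if_pos rfl] at b1 b4
          rw [if_neg (by omega), if_neg (by omega)] at b2
          rw [if_pos h] at b3
          omega
        · exact h
        · have := a2' _ h
          rw [if_neg (by omega), if_pos rfl] at b1 b4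
          rw [if_neg (by omega), if_neg (by omega)] at b3
          rw [if_pos h] at b2
          omega
      subst hp
      rw [e1.uniq e2] at hy
      have h1 : sh (sh c p k' (-1)) p k' 1 = c := sh_sh _ _ _ _ _ (by norm_num)
      have h2 : sh (sh c' p k' (-1)) p k' 1 = c' := sh_sh _ _ _ _ _ (by norm_num)
      rw [← h1, ← h2, ← hy, ← hy'])
    (by
      rintro c y ⟨hc, h⟩ ⟨hy, h'⟩ ⟨p, k, -, hk, a1, a2, rfl⟩
      have q1 := hk.nP hc
      have hpR : p < R := by
        by_contra hh
        have b1 := nP_const hF hc (show R ≤ p by omega)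
        have b2 := nP_const hF hc (show R ≤ p + 1 by omega)
        have := a2 (p+1) (by omega)
        omega
      have m1 := nM_eq hF hc (m := nP s e d c p) a1 rfl
      have m2 := nM_eq hF hy (m := nP s e d c p + 1) (p := p)
        (fun t => by
          rw [q1 t]
          have := a1 t
          split_ifs with g1 g2
          · omega
          · omega
          · have := a2 t (by omega)
            omega) (by rw [q1]; simp)
      have q2 := q1 R
      rw [if_neg (by omega), if_neg (by omega)] at q2
      constructor <;> omega)
    (by
      rintro c y ⟨hc, h⟩ ⟨hy, h'⟩ ⟨p, k, -, hk, a1, a2, rfl⟩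
      have q1 := hk.nP hc
      have m1 := nM_eq hF hc (m := nP s e d c p) a1 rfl
      refine ⟨⟨fun t => ?_, fun hz1 r h1 h2 => ?_⟩, ⟨fun t => ?_, fun hz1 r h1 h2 => ?_⟩⟩
      · rw [hk.nA, hk.nB hc]; omega
      · have hr : r ≤ p := by
          by_contra hh
          have := h2 p (by omega)
          have := a1 r
          omega
        refine ⟨?_, fun t ht => ?_, fun t ht => sh_lt (by omega)⟩
        · rw [q1]; split_ifs <;> omega
        · rw [q1, if_pos (by omega)]; have := h2 t ht; omega
      · rw [hk.nA, hk.nB hc]; omega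
      · have hr : r ≤ p := by
          by_contra hh
          have := h2 p (by omega)
          rw [q1, if_neg (by omega), if_pos rfl] at this
          omega
        refine ⟨?_, fun t ht => ?_, fun t ht => (sh_lt (by omega)).symm⟩
        · rw [q1] at h1
          rcases Nat.lt_or_ge r p with hh | hh
          · rw [if_pos hh] at h1; omega
          · have : r = p := by omega
            subst this
            omega
        · have := h2 t ht
          rw [q1, if_pos (by omega)] at this; omega)
  refine ⟨σ, fun c hc hpos => ?_⟩
  have hz' : z ≤ nM s e d R c := by
    have h3 := (nM_spec hF hc).1
    rcases hz with hz | hz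
    · have := P0 c hc
      have := h3 0
      omega
    · obtain ⟨t, ht⟩ := hpos hz
      have := h3 t
      omega
  obtain ⟨⟨h1, h1'⟩, h2, h3, h4, h5⟩ := hσ c ⟨hc, hz'⟩
  refine ⟨h1, fun hz1 => ?_, h2, by omega, h5⟩
  obtain ⟨_, p, hp⟩ := nM_spec hF h1
  exact ⟨p, by omega⟩

end HG

namespace HG

structure Shp (lam mu : ℕ → ℕ) (R C : ℕ) : Prop where
  hl : ∀ i, lam (i+1) ≤ lam i
  hm : ∀ i, mu (i+1) ≤ mu i
  sub : ∀ i, mu i ≤ lam i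
  hR : ∀ i, R ≤ i → lam i = 0
  hC : ∀ i, lam i ≤ C

theorem cut_ex (m l : ℕ) (hml : m ≤ l) (p : ℕ → Prop)
    (h : ∀ j, m ≤ j → j + 1 < l → p (j+1) → p j) :
    ∃ k, m ≤ k ∧ k ≤ l ∧ ∀ j, m ≤ j → j < l → (p j ↔ j < k) := by
  have ex : ∃ k, m ≤ k ∧ (l ≤ k ∨ ¬ p k) := ⟨l, hml, Or.inl le_rfl⟩
  obtain ⟨h1, h2⟩ := Nat.find_spec ex
  have h3 := fun j => Nat.find_min ex (m := j)
  have h4 : Nat.find ex ≤ l := Nat.find_min' ex ⟨hml, Or.inl le_rfl⟩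
  generalize Nat.find ex = k at *
  refine ⟨k, h1, h4, fun j hj1 hj2 => ⟨fun hp => ?_, fun hk => ?_⟩⟩
  · by_contra hk
    push Not at hk
    have : ∀ i, k ≤ i → i < l → ¬ p i := by
      intro i hi
      induction i, hi using Nat.le_induction with
      | base => intro hl; rcases h2 with h2 | h2
                · omega
                · exact h2
      | succ i hi ih => intro hl hp; exact ih (by omega) (h i (by omega) hl hp)
    exact this j hk hj2 hp
  · by_contra hp
    exact h3 j hk ⟨hj1, Or.inr hp⟩

structure Dat (lam mu : ℕ → ℕ) (R : ℕ) (T : ℕ → ℕ → Finset ℕ) (a : ℕ) (s e d c : ℕ → ℤ) : Prop where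
  low : ∀ r j, mu r ≤ j → j < lam r → ((∀ x ∈ T r j, x < a) ↔ (j:ℤ) < s r)
  ma : ∀ r j : ℕ, a ∈ T r j ↔ s r ≤ j ∧ (j:ℤ) < c r
  mb : ∀ r j : ℕ, a + 1 ∈ T r j ↔ c r - d r ≤ j ∧ (j:ℤ) < e r
  mus : ∀ r, (mu r : ℤ) ≤ s r
  el : ∀ r, e r ≤ lam r
  d1 : ∀ r, d r ≤ 1
  cf : Cf s e d c
  fr : Fr s e d R

theorem Dat.ab {lam mu : ℕ → ℕ} {R : ℕ} {T : ℕ → ℕ → Finset ℕ} {a : ℕ} {s e d c : ℕ → ℤ}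
    (h : Dat lam mu R T a s e d c) (r j : ℕ) :
    (a ∈ T r j ∨ a + 1 ∈ T r j) ↔ s r ≤ j ∧ (j:ℤ) < e r := by
  rw [h.ma, h.mb]
  have := h.cf.lo r
  have := h.cf.hi r
  have := h.fr.hd r
  omega

theorem Dat.uniq {lam mu : ℕ → ℕ} {R : ℕ} {T : ℕ → ℕ → Finset ℕ} {a : ℕ}
    {s e d c s' e' d' c' : ℕ → ℤ}
    (h : Dat lam mu R T a s e d c) (h' : Dat lam mu R T a s' e' d' c') :
    s = s' ∧ e = e' ∧ d = d' ∧ c = c' := by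
  have key : ∀ {s e d c s' e' d' c' : ℕ → ℤ}, 
    Dat lam mu R T a s e d c → Dat lam mu R T a s' e' d' c' → ∀ r, s' r ≤ s r := by
    intro s e d c s' e' d' c' h h' r
    by_contra hh
    have := h.mus r
    have := h'.el r
    have := h'.cf.lo r
    have := h'.cf.hi r
    have := h'.fr.hd r
    have h1 := h.low r (s r).toNat (by omega) (by omega)
    have h2 := h'.low r (s r).toNat (by omega) (by omega)
    have h3 := h1.1 (h2.2 (by omega))
    omega
  have hs : s = s' := funext fun r => le_antisymm (key h' h r) (key h h' r)
  subst hs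
  have key2 : ∀ {e d c e' d' c' : ℕ → ℤ}, 
    Dat lam mu R T a s e d c → Dat lam mu R T a s e' d' c' → ∀ r, c' r ≤ c r ∧ e' r ≤ e r := by
    intro e d c e' d' c' h h' r
    have := h.mus r
    have := h.cf.lo r
    have := h.cf.hi r
    have := h.fr.hd r
    constructor
    · by_contra hh
      have h1 := h.ma r (c r).toNat
      have h2 := h'.ma r (c r).toNat
      have := h1.1 (h2.2 (by omega))
      omega
    · by_contra hh
      have h1 := h.ab r (e r).toNat
      have h2 := h'.ab r (e r).toNat
      have := h1.1 (h2.2 (by omega))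
      omega
  have hc : c = c' := funext fun r => le_antisymm (key2 h' h r).1 (key2 h h' r).1
  have he : e = e' := funext fun r => le_antisymm (key2 h' h r).2 (key2 h h' r).2
  subst hc he
  have key3 : ∀ {d d' : ℕ → ℤ}, 
    Dat lam mu R T a s e d c → Dat lam mu R T a s e d' c → ∀ r, d' r ≤ d r := by
    intro d d' h h' r
    by_contra hh
    have := h.mus r
    have := h.cf.lo r
    have := h'.cf.lo r
    have := h.cf.hi r
    have := h.fr.hd r
    have h1 := h.mb r (c r - d' r).toNat
    have h2 := h'.mb r (c r - d' r).toNat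
    have := h1.1 (h2.2 (by omega))
    omega
  have hd : d = d' := funext fun r => le_antisymm (key3 h' h r) (key3 h h' r)
  exact ⟨rfl, rfl, hd, rfl⟩

theorem Dat.ex {lam mu : ℕ → ℕ} {R C : ℕ} (hS : Shp lam mu R C) {T : ℕ → ℕ → Finset ℕ}
    (hT : IsSVRPP lam mu T) (a : ℕ) : ∃ s e d c, Dat lam mu R T a s e d c := by
  obtain ⟨t0, t1, t2, t3, t4⟩ := hT
  have row : ∀ r j, mu r ≤ j → j + 1 < lam r → ∀ x ∈ T r j, ∀ y ∈ T r (j+1), x ≤ y :=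
    fun r j h1 h2 => t3 r j ⟨h1, by omega⟩ ⟨by omega, h2⟩
  have ne : ∀ r j, mu r ≤ j → j < lam r → (T r j).Nonempty := fun r j h1 h2 => t1 r j ⟨h1, h2⟩
  have c1 := fun r => cut_ex (mu r) (lam r) (hS.sub r) (fun j => ∀ x ∈ T r j, x < a) (by
    intro j h1 h2 hp x hx
    obtain ⟨y, hy⟩ := ne r (j+1) (by omega) h2
    exact lt_of_le_of_lt (row r j h1 h2 x hx y hy) (hp y hy))
  have c2 := fun r => cut_ex (mu r) (lam r) (hS.sub r)
    (fun j => (∀ x ∈ T r j, x ≤ a)∧ ((∀ x ∈ T r j, x < a) ∨ a ∈ T r j)) (by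
    intro j h1 h2 hp
    have h3 : ∀ x ∈ T r j, x ≤ a := by
      intro x hx
      rcases hp.2 with hp | hp
      · obtain ⟨y, hy⟩ := ne r (j+1) (by omega) h2
        have := row r j h1 h2 x hx y hy
        have := hp y hy
        omega
      · exact row r j h1 h2 x hx a hp
    refine ⟨h3, ?_⟩
    by_cases h : a ∈ T r j
    · exact Or.inr h
    · left; intro x hx
      have := h3 x hx
      rcases this.lt_or_eq with h' | h'
      · exact h'
      · exact absurd (h' ▸ hx) h)
  have c2' := fun r => cut_ex (mu r) (lam r) (hS.sub r)
    (fun j => ((∀ x ∈ T r j, x < a) ∨ a ∈ T r j) ∧ a + 1 ∉ T r j) (by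
    intro j h1 h2 hp
    have h3 : ∀ x ∈ T r j, x ≤ a := by
      intro x hx
      rcases hp.1 with hp | hp
      · obtain ⟨y, hy⟩ := ne r (j+1) (by omega) h2
        have := row r j h1 h2 x hx y hy
        have := hp y hy
        omega
      · exact row r j h1 h2 x hx a hp
    refine ⟨?_, fun h => by have := h3 _ h; omega⟩
    by_cases h : a ∈ T r j
    · exact Or.inr h
    · left; intro x hx
      have := h3 x hx
      rcases this.lt_or_eq with h' | h'
      · exact h'
      · exact absurd (h' ▸ hx) h)
  have c3 := fun r => cut_ex (mu r) (lam r) (hS.sub r)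
    (fun j => ((∀ x ∈ T r j, x < a) ∨ a ∈ T r j)) (by
    intro j h1 h2 hp
    have h3 : ∀ x ∈ T r j, x ≤ a := by
      intro x hx
      rcases hp with hp | hp
      · obtain ⟨y, hy⟩ := ne r (j+1) (by omega) h2
        have := row r j h1 h2 x hx y hy
        have := hp y hy
        omega
      · exact row r j h1 h2 x hx a hp
    by_cases h : a ∈ T r j
    · exact Or.inr h
    · left; intro x hx
      have := h3 x hx
      rcases this.lt_or_eq with h' | h'
      · exact h'
      · exact absurd (h' ▸ hx) h)
  have c4 := fun r => cut_ex (mu r) (lam r) (hS.sub r)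
    (fun j => (∀ x ∈ T r j, x < a) ∨ a ∈ T r j ∨ a + 1 ∈ T r j) (by
    intro j h1 h2 hp
    have h3 : ∀ x ∈ T r j, x ≤ a + 1 := by
      intro x hx
      rcases hp with hp | hp | hp
      · obtain ⟨y, hy⟩ := ne r (j+1) (by omega) h2
        have := row r j h1 h2 x hx y hy
        have := hp y hy
        omega
      · exact (row r j h1 h2 x hx a hp).trans (by omega)
      · exact row r j h1 h2 x hx _ hp
    by_cases h : a ∈ T r j
    · exact Or.inr (Or.inl h)
    by_cases h0 : a + 1 ∈ T r j
    · exact Or.inr (Or.inr h0)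
    · left; intro x hx
      have := h3 x hx
      by_contra h5
      have : x = a ∨ x = a + 1 := by omega
      rcases this with rfl | rfl
      · exact h hx
      · exact h0 hx)
  choose s hs1 hs2 hs3 using c1
  choose c hc1 hc2 hc3 using c3
  choose c' hd1 hd2 hd3 using c2'
  choose e he1 he2 he3 using c4
  clear c2
  have sub2 : ∀ r, ∀ {f g : ℕ → ℕ} , g r ≤ lam r → mu r ≤ f r →
     (∀ j, mu r ≤ j → j < lam r → j < g r → j < f r) → g r ≤ f r := by
    intro r f g h1 h2 h3
    by_contra hh
    have := h3 (f r) h2 (by omega) (by omega)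
    omega
  have sc' : ∀ r, s r ≤ c' r := fun r => sub2 r (hs2 r) (hd1 r) (fun j h1 h2 h3 => by
    rw [← hs3 r j h1 h2] at h3
    rw [← hd3 r j h1 h2]
    exact ⟨Or.inl h3, fun h => by have := h3 _ h; omega⟩)
  have c'c : ∀ r, c' r ≤ c r := fun r => sub2 r (hd2 r) (hc1 r) (fun j h1 h2 h3 => by
    rw [← hd3 r j h1 h2] at h3
    rw [← hc3 r j h1 h2]
    exact h3.1)
  have ce : ∀ r, c r ≤ e r := fun r => sub2 r (hc2 r) (he1 r) (fun j h1 h2 h3 => by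
    rw [← hc3 r j h1 h2] at h3
    rw [← he3 r j h1 h2]
    tauto)
  have emp : ∀ r j x, x ∈ T r j → mu r ≤ j ∧ j < lam r := by
    intro r j x hx
    by_contra h
    rw [t0 r j h] at hx
    simp at hx
  have col : ∀ r j, mu r ≤ j → j < lam (r+1) → ∀ x ∈ T r j, ∀ y ∈ T (r+1) j, x ≤ y :=
    fun r j h1 h2 => t4 r j ⟨h1, by have := hS.hl r; omega⟩ ⟨by have := hS.hm r; omega, h2⟩
  have dn : ∀ r, ∀ {f g : ℕ → ℕ} , g (r+1) ≤ lam (r+1) → mu r ≤ f r →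
     (∀ j, mu r ≤ j → j < lam r → mu (r+1) ≤ j → j < lam (r+1) → j < g (r+1) → j < f r) →
     g (r+1) ≤ f r := by
    intro r f g h1 h2 h3
    by_contra hh
    have := hS.hl r
    have := hS.hm r
    have := h3 (f r) h2 (by omega) (by omega) (by omega) (by omega)
    omega
  have s_anti : ∀ r, s (r+1) ≤ s r := fun r => dn r (hs2 _) (hs1 _) (fun j h1 h2 h1' h2' h3 => by
    rw [← hs3 _ j h1' h2'] at h3
    rw [← hs3 r j h1 h2]
    intro x hx
    obtain ⟨y, hy⟩ := ne (r+1) j h1' h2'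
    have := col r j h1 h2' x hx y hy
    have := h3 y hy
    omega)
  have e_anti : ∀ r, e (r+1) ≤ e r := fun r => dn r (he2 _) (he1 _) (fun j h1 h2 h1' h2' h3 => by
    rw [← he3 _ j h1' h2'] at h3
    rw [← he3 r j h1 h2]
    have h4 : ∀ x ∈ T r j, x ≤ a + 1 := by
      intro x hx
      rcases h3 with h3 | h3 | h3
      · obtain ⟨y, hy⟩ := ne (r+1) j h1' h2'
        have := col r j h1 h2' x hx y hy
        have := h3 y hy
        omega
      · have := col r j h1 h2' x hx _ h3
        omega
      · exact col r j h1 h2' x hx _ h3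
    by_cases h : a ∈ T r j
    · exact Or.inr (Or.inl h)
    by_cases h0 : a + 1 ∈ T r j
    · exact Or.inr (Or.inr h0)
    · left; intro x hx
      have := h4 x hx
      by_contra h5
      have : x = a ∨ x = a + 1 := by omega
      rcases this with rfl | rfl
      · exact h hx
      · exact h0 hx)
  have c_st : ∀ r, c (r+1) ≤ c' r := fun r => dn r (hc2 _) (hd1 _) (fun j h1 h2 h1' h2' h3 => by
    rw [← hc3 _ j h1' h2'] at h3
    rw [← hd3 r j h1 h2]
    have h4 : ∀ x ∈ T r j, x ≤ a := by
      intro x hx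
      rcases h3 with h3 | h3
      · obtain ⟨y, hy⟩ := ne (r+1) j h1' h2'
        have := col r j h1 h2' x hx y hy
        have := h3 y hy
        omega
      · exact col r j h1 h2' x hx _ h3
    refine ⟨?_, fun h => by have := h4 _ h; omega⟩
    by_cases h : a ∈ T r j
    · exact Or.inr h
    · left; intro x hx
      have := h4 x hx
      rcases this.lt_or_eq with h' | h'
      · exact h'
      · exact absurd (h' ▸ hx) h)
  have memb : ∀ r j, a + 1 ∈ T r j ↔ c' r ≤ j ∧ j < e r := by
    intro r j
    constructor
    · intro h
      obtain ⟨h1, h2⟩ := emp _ _ _ h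
      have h3 := hd3 r j h1 h2
      have h4 := he3 r j h1 h2
      refine ⟨?_, h4.1 (Or.inr (Or.inr h))⟩
      by_contra hh
      exact (h3.2 (by omega)).2 h
    · rintro ⟨h1, h2⟩
      have h5 : mu r ≤ j := (hd1 r).trans h1
      have h6 : j < lam r := by have := he2 r; omega
      have h3 := hd3 r j h5 h6
      have h4 := (he3 r j h5 h6).2 h2
      by_contra hh
      have : ¬ (j < c' r) := by omega
      rw [← h3] at this
      tauto
  have mema : ∀ r j, a ∈ T r j ↔ s r ≤ j ∧ j < c r := by
    intro r j
    constructor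
    · intro h
      obtain ⟨h1, h2⟩ := emp _ _ _ h
      have h3 := hs3 r j h1 h2
      have h4 := hc3 r j h1 h2
      refine ⟨?_, h4.1 (Or.inr h)⟩
      by_contra hh
      have := h3.2 (by omega) a h
      omega
    · rintro ⟨h1, h2⟩
      have h5 : mu r ≤ j := (hs1 r).trans h1
      have h6 : j < lam r := by have := hc2 r; omega
      have h3 := hs3 r j h5 h6
      have h4 := (hc3 r j h5 h6).2 h2
      have : ¬ (j < s r) := by omega
      rw [← h3] at this
      tauto
  refine ⟨fun r => s r, fun r => e r, fun r => c r - c' r, fun r => c r, ?_, ?_, ?_, ?_, ?_, ?_, ?_, ?_⟩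
  · intro r j h1 h2
    rw [hs3 r j h1 h2]; simp
  · intro r j; rw [mema]; simp
  · intro r j; rw [memb]; simp
  · intro r; simpa using hs1 r
  · intro r; simpa using he2 r
  · intro r
    by_contra hh
    have h1 : a + 1 ∈ T r (c' r) := (memb r _).2 ⟨le_rfl, by have := ce r; omega⟩
    have h2 : a ∈ T r (c' r + 1) := (mema r _).2 ⟨by have := sc' r; omega, by omega⟩
    have h3 := emp _ _ _ h1
    have h4 := emp _ _ _ h2
    have := row r (c' r) h3.1 h4.2 _ h1 _ h2
    omega
  · refine ⟨fun r => ?_, fun r => ?_, fun r => ?_⟩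
    · have := sc' r; omega
    · have := ce r; omega
    · have := c_st r; omega
  · refine ⟨fun r => ?_, fun r => ?_, fun r => ?_, fun r hr => ?_, fun r hr => ?_⟩
    · have := s_anti r; omega
    · have := e_anti r; omega
    · have := c'c r; omega
    · have := hs2 r; have := hS.hR r hr; omega
    · have := he2 r; have := hS.hR r hr; omega

noncomputable def bld (T : ℕ → ℕ → Finset ℕ) (a : ℕ) (s e d c : ℕ → ℤ) (r j : ℕ) : Finset ℕ :=
  ((T r j).erase a).erase (a+1) ∪ (if s r ≤ j ∧ (j:ℤ) < c r then {a} else ∅) ∪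
    (if c r - d r ≤ j ∧ (j:ℤ) < e r then {a+1} else ∅)

theorem mem_bld {T : ℕ → ℕ → Finset ℕ} {a : ℕ} {s e d c : ℕ → ℤ} {r j x : ℕ} :
    x ∈ bld T a s e d c r j ↔ (x ≠ a ∧ x ≠ a + 1 ∧ x ∈ T r j) ∨ (x = a ∧ s r ≤ j ∧ (j:ℤ) < c r) ∨
      (x = a + 1 ∧ c r - d r ≤ j ∧ (j:ℤ) < e r) := by
  unfold bld
  simp only [Finset.mem_union, Finset.mem_erase]
  by_cases h1 : s r ≤ j ∧ (j:ℤ) < c r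
  · by_cases h2 : c r - d r ≤ j ∧ (j:ℤ) < e r
    · simp only [if_pos h1, if_pos h2, Finset.mem_singleton]; tauto
    · simp only [if_pos h1, if_neg h2, Finset.mem_singleton, Finset.notMem_empty]; tauto
  · by_cases h2 : c r - d r ≤ j ∧ (j:ℤ) < e r
    · simp only [if_neg h1, if_pos h2, Finset.mem_singleton, Finset.notMem_empty]; tauto
    · simp only [if_neg h1, if_neg h2, Finset.notMem_empty]; tauto

theorem bld_self {lam mu : ℕ → ℕ} {R : ℕ} {T : ℕ → ℕ → Finset ℕ} {a : ℕ} {s e d c c' : ℕ → ℤ}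
    (h : Dat lam mu R T a s e d c) : bld (bld T a s e d c') a s e d c = T := by
  funext r j
  ext x
  rw [mem_bld, mem_bld, ← h.ma, ← h.mb]
  by_cases h1 : x = a
  · subst h1; simp
  · by_cases h2 : x = a + 1
    · subst h2; simp
    · simp [h1, h2]

theorem bld_ab {T : ℕ → ℕ → Finset ℕ} {a : ℕ} {s e d c' : ℕ → ℤ}
    (hd : ∀ r, 0 ≤ d r) (hc' : Cf s e d c') (r j : ℕ) :
    (a ∈ bld T a s e d c' r j ∨ a + 1 ∈ bld T a s e d c' r j) ↔ s r ≤ j ∧ (j:ℤ) < e r := by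
  rw [mem_bld, mem_bld]
  have := hc'.lo r
  have := hc'.hi r
  have := hd r
  simp
  omega

theorem bld_ok {lam mu : ℕ → ℕ} {R C n : ℕ} (hS : Shp lam mu R C)
    {T : ℕ → ℕ → Finset ℕ} {a : ℕ} {s e d c c' : ℕ → ℤ}
    (hT : IsSVRPPn lam mu n T) (h : Dat lam mu R T a s e d c) (hc' : Cf s e d c')
    (ha : 1 ≤ a) (han : a + 1 ≤ n) :
    IsSVRPPn lam mu n (bld T a s e d c') ∧ Dat lam mu R (bld T a s e d c') a s e d c' := by
  have hab := h.ab
  have hab' := bld_ab (T := T) (a := a) h.fr.hd hc'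
  obtain ⟨⟨t0, t1, t2, t3, t4⟩, t5⟩ := hT
  -- comparing two boxes
  have cmp : ∀ r j r' j', FinsetLE (T r j) (T r' j') →
      ¬ (a + 1 ∈ bld T a s e d c' r j ∧ a ∈ bld T a s e d c' r' j') →
      FinsetLE (bld T a s e d c' r j) (bld T a s e d c' r' j') := by
    intro r j r' j' hle hno x hx y hy
    have fx : x ≠ a → x ≠ a + 1 → x ∈ T r j := by
      intro h1 h2
      rcases mem_bld.1 hx with h3 | h3 | h3
      · exact h3.2.2
      · exact absurd h3.1 h1
      · exact absurd h3.1 h2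
    have fy : y ≠ a → y ≠ a + 1 → y ∈ T r' j' := by
      intro h1 h2
      rcases mem_bld.1 hy with h3 | h3 | h3
      · exact h3.2.2
      · exact absurd h3.1 h1
      · exact absurd h3.1 h2
    have gx : (x = a ∨ x = a + 1) → (a ∈ T r j ∨ a + 1 ∈ T r j) := by
      intro hh
      rw [hab, ← hab']
      rcases hh with hh | hh
      · exact Or.inl (hh ▸ hx)
      · exact Or.inr (hh ▸ hx)
    have gy : (y = a ∨ y = a + 1) → (a ∈ T r' j' ∨ a + 1 ∈ T r' j') := by
      intro hh
      rw [hab, ← hab']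
      rcases hh with hh | hh
      · exact Or.inl (hh ▸ hy)
      · exact Or.inr (hh ▸ hy)
    by_cases hx1 : x = a ∨ x = a + 1
    · by_cases hy1 : y = a ∨ y = a + 1
      · by_contra hlt
        have e1 : x = a + 1 := by omega
        have e2 : y = a := by omega
        exact hno ⟨e1 ▸ hx, e2 ▸ hy⟩
      · have hy2 := fy (fun hh => hy1 (Or.inl hh)) (fun hh => hy1 (Or.inr hh))
        rcases gx hx1 with h1 | h1
        · have := hle _ h1 _ hy2; omega
        · have := hle _ h1 _ hy2; omega
    · have hx2 := fx (fun hh => hx1 (Or.inl hh)) (fun hh => hx1 (Or.inr hh))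
      by_cases hy1 : y = a ∨ y = a + 1
      · rcases gy hy1 with h1 | h1
        · have := hle _ hx2 _ h1; omega
        · have := hle _ hx2 _ h1; omega
      · exact hle _ hx2 _ (fy (fun hh => hy1 (Or.inl hh)) (fun hh => hy1 (Or.inr hh)))
  refine ⟨⟨⟨?_, ?_, ?_, ?_, ?_⟩, ?_⟩, ?_⟩
  · intro r j hj
    ext x
    rw [mem_bld, t0 r j hj]
    have := h.mus r
    have := h.el r
    have := hc'.lo r
    have := hc'.hi r
    have := h.fr.hd r
    unfold InShape at hj
    simp
    omega
  · intro r j hj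
    by_cases hh : s r ≤ j ∧ (j:ℤ) < e r
    · rcases (hab' r j).2 hh with h1 | h1 <;> exact ⟨_, h1⟩
    · obtain ⟨x, hx⟩ := t1 r j hj
      rw [← hab] at hh
      refine ⟨x, mem_bld.2 (Or.inl ⟨?_, ?_, hx⟩)⟩
      · intro hx1; exact hh (Or.inl (hx1 ▸ hx))
      · intro hx1; exact hh (Or.inr (hx1 ▸ hx))
  · intro r j x hx
    rw [mem_bld] at hx
    rcases hx with ⟨_, _, hx⟩ | ⟨hx, _⟩ | ⟨hx, _⟩
    · exact t2 _ _ _ hx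
    · omega
    · omega
  · intro r j h1 h2
    refine cmp _ _ _ _ (t3 r j h1 h2) ?_
    rintro ⟨h3, h4⟩
    rw [mem_bld] at h3 h4
    have := h.d1 r
    simp at h3 h4
    omega
  · intro r j h1 h2
    refine cmp _ _ _ _ (t4 r j h1 h2) ?_
    rintro ⟨h3, h4⟩
    rw [mem_bld] at h3 h4
    have := hc'.st r
    simp at h3 h4
    omega
  · intro r j x hx
    rw [mem_bld] at hx
    rcases hx with ⟨_, _, hx⟩ | ⟨hx, _⟩ | ⟨hx, _⟩
    · exact t5 _ _ hx
    · simp; omega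
    · simp; omega
  · refine ⟨?_, ?_, ?_, h.mus, h.el, h.d1, hc', h.fr⟩
    · intro r j h1 h2
      rw [← h.low r j h1 h2]
      by_cases hh : s r ≤ j ∧ (j:ℤ) < e r
      · have k1 := (hab r j).2 hh
        have k2 := (hab' r j).2 hh
        constructor
        · intro k
          rcases k2 with k2 | k2 <;> have := k _ k2 <;> omega
        · intro k
          rcases k1 with k1 | k1 <;> have := k _ k1 <;> omega
      · have k1 : ¬ _ := fun k => hh ((hab r j).1 k)
        have k2 : ¬ _ := fun k => hh ((hab' r j).1 k)
        have : ∀ x, x ∈ bld T a s e d c' r j ↔ x ∈ T r j := by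
          intro x
          by_cases e1 : x = a
          · rw [e1]
            exact ⟨fun q => absurd (Or.inl q) k2, fun q => absurd (Or.inl q) k1⟩
          · by_cases e2 : x = a + 1
            · rw [e2]
              exact ⟨fun q => absurd (Or.inr q) k2, fun q => absurd (Or.inr q) k1⟩
            · rw [mem_bld]
              exact ⟨fun q => q.elim (fun q => q.2.2) (fun q => q.elim (fun q => absurd q.1 e1)
                (fun q => absurd q.1 e2)), fun q => Or.inl ⟨e1, e2, q⟩⟩
        simp only [this]
    · intro r j; rw [mem_bld]; simp
    · intro r j; rw [mem_bld]; simp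

end HG

namespace HG

noncomputable def V (C : ℕ) (T : ℕ → ℕ → Finset ℕ) (r v : ℕ) : ℕ :=
  ((Finset.range C).filter (fun j => v ∈ T r j ∧ (r = 0 ∨ v ∉ T (r-1) j))).card

noncomputable def N (C : ℕ) (T : ℕ → ℕ → Finset ℕ) (r v : ℕ) : ℕ :=
  ((Finset.range C).filter (fun j => v ∈ T r j)).card

noncomputable def bo (C : ℕ) (T : ℕ → ℕ → Finset ℕ) (r a : ℕ) : ℕ :=
  ((Finset.range C).filter (fun j => a ∈ T r j ∧ a + 1 ∈ T r j)).card

noncomputable def tP (C : ℕ) (T : ℕ → ℕ → Finset ℕ) (a : ℕ) : ℕ → ℤ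
  | 0 => V C T 0 (a+1) - bo C T 0 a
  | r+1 => tP C T a r - V C T r a + bo C T r a + V C T (r+1) (a+1) - bo C T (r+1) a

theorem cnt (C : ℕ) (x y : ℤ) (hx : 0 ≤ x) (hxy : x ≤ y) (hy : y ≤ C) (p : ℕ → Prop)
    [DecidablePred p] (hp : ∀ j : ℕ, p j ↔ x ≤ j ∧ (j:ℤ) < y) :
    (((Finset.range C).filter p).card : ℤ) = y - x := by
  have : (Finset.range C).filter p = Finset.Ico x.toNat y.toNat := by
    ext j
    rw [Finset.mem_filter, hp, Finset.mem_range, Finset.mem_Ico]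
    omega
  rw [this, Nat.card_Ico]
  omega

section
variable {lam mu : ℕ → ℕ} {R C : ℕ} {T : ℕ → ℕ → Finset ℕ} {a : ℕ} {s e d c : ℕ → ℤ}

theorem Dat.bd (hS : Shp lam mu R C) (h : Dat lam mu R T a s e d c) (r : ℕ) :
    0 ≤ s r ∧ s r ≤ c r - d r ∧ 0 ≤ d r ∧ c r ≤ e r ∧ e r ≤ C := by
  have h1 := h.mus r
  have h2 := h.cf.lo r
  have h3 := h.cf.hi r
  have h4 := h.fr.hd r
  have h5 := h.el r
  have h6 := hS.hC r
  omega

theorem Dat.V_a (hS : Shp lam mu R C) (h : Dat lam mu R T a s e d c) (r : ℕ) :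
    (V C T r a : ℤ) = nA s c r := by
  obtain ⟨h1, h2, h3, h4, h5⟩ := h.bd hS r
  cases r with
  | zero =>
    refine cnt C _ _ h1 (by omega) (by omega) _ (fun j => ?_)
    rw [h.ma]; simp
  | succ r =>
    obtain ⟨g1, g2, g3, g4, g5⟩ := h.bd hS r
    have := h.fr.hs r
    have := h.cf.st r
    refine cnt C _ _ h1 (by omega) (by omega) _ (fun j => ?_)
    rw [h.ma]
    simp only [Nat.add_sub_cancel, h.ma]
    omega

theorem Dat.V_b (hS : Shp lam mu R C) (h : Dat lam mu R T a s e d c) (r : ℕ) :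
    (V C T r (a+1) : ℤ) = nB e d c r := by
  obtain ⟨h1, h2, h3, h4, h5⟩ := h.bd hS r
  cases r with
  | zero =>
    refine cnt C _ _ (by omega) (by omega) (by omega) _ (fun j => ?_)
    rw [h.mb]; simp
  | succ r =>
    obtain ⟨g1, g2, g3, g4, g5⟩ := h.bd hS r
    have := h.fr.he r
    have := h.cf.st r
    refine cnt C _ _ (by omega) (by omega) (by omega) _ (fun j => ?_)
    rw [h.mb]
    simp only [Nat.add_sub_cancel, h.mb]
    omega

theorem Dat.bo_a (hS : Shp lam mu R C) (h : Dat lam mu R T a s e d c) (r : ℕ) :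
    (bo C T r a : ℤ) = d r := by
  obtain ⟨h1, h2, h3, h4, h5⟩ := h.bd hS r
  have := cnt C (c r - d r) (c r) (by omega) (by omega) (by omega)
    (fun j => a ∈ T r j ∧ a + 1 ∈ T r j) (fun j => by
      simp only [h.ma, h.mb]
      omega)
  unfold bo
  omega

theorem Dat.N_a (hS : Shp lam mu R C) (h : Dat lam mu R T a s e d c) (r : ℕ) :
    (N C T r a : ℤ) = c r - s r := by
  obtain ⟨h1, h2, h3, h4, h5⟩ := h.bd hS r
  exact cnt C _ _ (by omega) (by omega) (by omega) _ (fun j => h.ma r j)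

theorem Dat.N_b (hS : Shp lam mu R C) (h : Dat lam mu R T a s e d c) (r : ℕ) :
    (N C T r (a+1) : ℤ) = e r - (c r - d r) := by
  obtain ⟨h1, h2, h3, h4, h5⟩ := h.bd hS r
  exact cnt C _ _ (by omega) (by omega) (by omega) _ (fun j => h.mb r j)

theorem Dat.tP (hS : Shp lam mu R C) (h : Dat lam mu R T a s e d c) (r : ℕ) :
    HG.tP C T a r = nP s e d c r := by
  induction r with
  | zero => simp only [HG.tP, nP, h.V_b hS, h.bo_a hS]
  | succ r ih => simp only [HG.tP, nP, h.V_b hS, h.bo_a hS, h.V_a hS, ih]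

theorem Dat.last {n : ℕ} (hS : Shp lam mu R C) (hT : IsSVRPPn lam mu n T)
    (h : Dat lam mu R T a s e d c) (r : ℕ) (hr : c r < e r) (j : ℕ) :
    (a + 1 ∈ T r j ∧ a + 1 + 1 ∈ T r j) ↔ ((j:ℤ) = e r - 1 ∧ a + 1 + 1 ∈ T r j) := by
  obtain ⟨h1, h2, h3, h4, h5⟩ := h.bd hS r
  have h6 := h.mus r
  have h7 := h.el r
  constructor
  · rintro ⟨k1, k2⟩
    refine ⟨?_, k2⟩
    rw [h.mb] at k1
    by_contra hne
    have := (h.ab r (j+1)).2 (by push_cast; omega)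
    have hle := hT.1.2.2.2.1 r j ⟨by omega, by omega⟩ ⟨by omega, by omega⟩ _ k2
    rcases this with q | q
    · have := hle _ q; omega
    · have := hle _ q; omega
  · rintro ⟨k1, k2⟩
    refine ⟨?_, k2⟩
    rw [h.mb]; omega
end

structure TG (lam mu : ℕ → ℕ) (n R C a : ℕ) (z : ℤ) (T T' : ℕ → ℕ → Finset ℕ) : Prop where
  ok : IsSVRPPn lam mu n T'
  bad : z = 1 → ∃ t, 0 < tP C T' a t
  oth : ∀ r j v, v ≠ a → v ≠ a + 1 → (v ∈ T' r j ↔ v ∈ T r j)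
  VV : ∀ r, V C T' r a + V C T' r (a+1) = V C T r a + V C T r (a+1)
  NN : ∀ r, N C T' r a + N C T' r (a+1) = N C T r a + N C T r (a+1)
  tPR : tP C T' a R = 2 * z - tP C T a R
  first : z = 1 → ∀ r, 0 < tP C T a r → (∀ t < r, tP C T a t ≤ 0) → 0 < tP C T' a r ∧
    (∀ t < r, ∀ j, T' t j = T t j) ∧ bo C T' r (a+1) = bo C T r (a+1)

theorem toggle {lam mu : ℕ → ℕ} {n R C : ℕ} (hS : Shp lam mu R C) (a : ℕ) (ha : 1 ≤ a)
    (han : a + 1 ≤ n) (z : ℤ) (hz : z = 0 ∨ z = 1) :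
    ∃ τ : (ℕ → ℕ → Finset ℕ) → (ℕ → ℕ → Finset ℕ), ∀ T, IsSVRPPn lam mu n T →
      (z = 1 → ∃ t, 0 < tP C T a t) → τ (τ T) = T ∧ TG lam mu n R C a z T (τ T) := by
  have h1 : ∀ s e d : ℕ → ℤ, ∃ σ : (ℕ → ℤ) → (ℕ → ℤ), Fr s e d R →
      ∀ c, Cf s e d c → (z = 1 → ∃ t, 0 < nP s e d c t) →
        Cf s e d (σ c) ∧ (z = 1 → ∃ t, 0 < nP s e d (σ c) t) ∧ σ (σ c) = c ∧
        nP s e d (σ c) R = 2*z - nP s e d c R ∧ nRel s e d z c (σ c) := by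
    intro s e d
    by_cases hF : Fr s e d R
    · obtain ⟨σ, h⟩ := num hF z hz
      exact ⟨σ, fun _ => h⟩
    · exact ⟨id, fun h => absurd h hF⟩
  choose σ hσ using h1
  have h2 : ∀ T : ℕ → ℕ → Finset ℕ, ∃ s e d c, IsSVRPP lam mu T → Dat lam mu R T a s e d c := by
    intro T
    by_cases hT : IsSVRPP lam mu T
    · obtain ⟨s, e, d, c, h⟩ := Dat.ex hS hT a
      exact ⟨s, e, d, c, fun _ => h⟩
    · exact ⟨fun _ => 0, fun _ => 0, fun _ => 0, fun _ => 0, fun h => absurd h hT⟩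
  choose s e d c hD using h2
  refine ⟨fun T => bld T a (s T) (e T) (d T) (σ (s T) (e T) (d T) (c T)), fun T hT hb => ?_⟩
  have D := hD T hT.1
  have hb' : z = 1 → ∃ t, 0 < nP (s T) (e T) (d T) (c T) t := by
    intro h
    obtain ⟨t, ht⟩ := hb h
    exact ⟨t, by rwa [← D.tP hS]⟩
  obtain ⟨k1, k2, k3, k4, k5⟩ := hσ _ _ _ D.fr _ D.cf hb'
  obtain ⟨m1, D'⟩ := bld_ok hS hT D k1 ha han
  set T' := bld T a (s T) (e T) (d T) (σ (s T) (e T) (d T) (c T)) with hT'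
  refine ⟨?_, ?_⟩
  · obtain ⟨q1, q2, q3, q4⟩ := (hD T' m1.1).uniq D'
    show bld T' a (s T') (e T') (d T') (σ (s T') (e T') (d T') (c T')) = T
    rw [q1, q2, q3, q4, k3, hT']
    exact bld_self D
  · show TG lam mu n R C a z T T'
    refine ⟨m1, ?_, ?_, ?_, ?_, ?_, ?_⟩
    · intro h
      obtain ⟨t, ht⟩ := k2 h
      exact ⟨t, by rwa [D'.tP hS]⟩
    · intro r j v h1 h2
      rw [hT', mem_bld]
      simp [h1, h2]
    · intro r
      have := D.V_a hS r
      have := D.V_b hS r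
      have := D'.V_a hS r
      have := D'.V_b hS r
      have := k5.1 r
      omega
    · intro r
      have := D.N_a hS r
      have := D.N_b hS r
      have := D'.N_a hS r
      have := D'.N_b hS r
      omega
    · rw [D.tP hS, D'.tP hS, k4]
    · intro hz1 r hr1 hr2
      rw [D.tP hS] at hr1
      simp only [D.tP hS] at hr2
      obtain ⟨q1, q2, q3⟩ := k5.2 hz1 r hr1 hr2
      refine ⟨by rwa [D'.tP hS], ?_, ?_⟩
      · intro t ht j
        ext x
        by_cases e1 : x = a
        · subst e1; rw [D.ma, D'.ma, q3 t ht]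
        · by_cases e2 : x = a + 1
          · subst e2; rw [D.mb, D'.mb, q3 t ht]
          · rw [hT', mem_bld]; simp [e1, e2]
      · have p1 := pos_of_first D.cf 0 le_rfl hr2 hr1
        have p2 := pos_of_first D'.cf 0 le_rfl q2 q1
        unfold bo
        congr 1
        ext j
        simp only [Finset.mem_filter]
        rw [D.last hS hT r p1, D'.last hS m1 r p2]
        have hne : ¬ (a + 1 + 1 = a) := by omega
        rw [hT', mem_bld]; simp [hne]

end HG

namespace HG

section
variable {lam mu : ℕ → ℕ} {R C n : ℕ} {T : ℕ → ℕ → Finset ℕ}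

theorem mem_sh (hT : IsSVRPPn lam mu n T) {r j x : ℕ} (hx : x ∈ T r j) : mu r ≤ j ∧ j < lam r := by
  by_contra h
  rw [hT.1.1 r j h] at hx
  simp at hx

theorem mem_bd (hS : Shp lam mu R C) (hT : IsSVRPPn lam mu n T) {r j x : ℕ} (hx : x ∈ T r j) :
    r < R ∧ j < C ∧ 1 ≤ x ∧ x ≤ n := by
  have h1 := mem_sh hT hx
  have h2 := hS.hC r
  have h3 := Finset.mem_Icc.1 (hT.2 r j hx)
  refine ⟨?_, by omega, h3⟩
  by_contra h
  have := hS.hR r (by omega)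
  omega

theorem row_mono (hT : IsSVRPPn lam mu n T) {r j j' x y : ℕ} (hj : j < j') (hx : x ∈ T r j)
    (hy : y ∈ T r j') : x ≤ y := by
  induction j', hj using Nat.le_induction generalizing y with
  | base => exact hT.1.2.2.2.1 r j (mem_sh hT hx) (mem_sh hT hy) x hx y hy
  | succ k hk ih =>
    have h1 := mem_sh hT hx
    have h2 := mem_sh hT hy
    have h3 : InShape lam mu r k := ⟨by omega, by omega⟩
    obtain ⟨z, hz⟩ := hT.1.2.1 r k h3
    exact (ih hz).trans (hT.1.2.2.2.1 r k h3 h2 z hz y hy)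

theorem lam_anti (hS : Shp lam mu R C) : Antitone lam := antitone_nat_of_succ_le hS.hl
theorem mu_anti (hS : Shp lam mu R C) : Antitone mu := antitone_nat_of_succ_le hS.hm

theorem col_sh (hS : Shp lam mu R C) (hT : IsSVRPPn lam mu n T) {r t r' j x y : ℕ} (h1 : r ≤ t)
    (h2 : t ≤ r') (hx : x ∈ T r j) (hy : y ∈ T r' j) : InShape lam mu t j := by
  have h3 := mem_sh hT hx
  have h4 := mem_sh hT hy
  have h5 := lam_anti hS h2
  have h6 := mu_anti hS h1
  exact ⟨by omega, by omega⟩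

theorem col_mono (hS : Shp lam mu R C) (hT : IsSVRPPn lam mu n T) {r r' j x y : ℕ} (hr : r < r')
    (hx : x ∈ T r j) (hy : y ∈ T r' j) : x ≤ y := by
  induction r', hr using Nat.le_induction generalizing y with
  | base => exact hT.1.2.2.2.2 r j (mem_sh hT hx) (mem_sh hT hy) x hx y hy
  | succ k hk ih =>
    have h3 : InShape lam mu k j := col_sh hS hT (by omega) (by omega) hx hy
    obtain ⟨z, hz⟩ := hT.1.2.1 k j h3
    exact (ih hz).trans (hT.1.2.2.2.2 k j h3 (mem_sh hT hy) z hz y hy)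

theorem col_chain (hS : Shp lam mu R C) (hT : IsSVRPPn lam mu n T) {r t r' j v : ℕ} (h1 : r ≤ t)
    (h2 : t ≤ r') (hx : v ∈ T r j) (hy : v ∈ T r' j) : v ∈ T t j := by
  rcases h1.eq_or_lt with rfl | h1'
  · exact hx
  rcases h2.eq_or_lt with rfl | h2'
  · exact hy
  obtain ⟨z, hz⟩ := hT.1.2.1 t j (col_sh hS hT h1 h2 hx hy)
  have := col_mono hS hT h1' hx hz
  have := col_mono hS hT h2' hz hy
  have : z = v := by omega
  exact this ▸ hz

theorem ircont_eq (hS : Shp lam mu R C) (hT : IsSVRPPn lam mu n T) (v : ℕ) :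
    ircont T v = ∑ r ∈ Finset.range R, V C T r v := by
  have : {j : ℕ | ∃ i, v ∈ T i j} = ((Finset.range R).biUnion (fun r =>
      (Finset.range C).filter (fun j => v ∈ T r j ∧ (r = 0 ∨ v ∉ T (r-1) j))) : Finset ℕ) := by
    ext j
    simp only [Set.mem_ofPred_eq, Finset.coe_biUnion, Finset.coe_range, Set.mem_Iio,
      Finset.coe_filter, Finset.mem_range, Set.mem_iUnion]
    constructor
    · intro h
      have h1 := Nat.find_spec h
      have h2 := fun i => Nat.find_min h (m := i)
      have h3 := mem_bd hS hT h1
      refine ⟨Nat.find h, h3.1, h3.2.1, h1, ?_⟩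
      by_cases h0 : Nat.find h = 0
      · exact Or.inl h0
      · exact Or.inr (h2 _ (by omega))
    · rintro ⟨i, _, _, h, _⟩
      exact ⟨i, h⟩
  unfold ircont
  rw [this, Set.ncard_coe_finset, Finset.card_biUnion]
  · rfl
  · intro r _ r' _ hrr
    rw [Function.onFun, Finset.disjoint_left]
    have key : ∀ {r r' j}, r < r' → v ∈ T r j → v ∈ T r' j → v ∈ T (r'-1) j := by
      intro r r' j h1 h2 h3
      exact col_chain hS hT (by omega) (by omega) h2 h3
    intro j h1 h2
    simp only [Finset.mem_filter] at h1 h2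
    rcases lt_or_gt_of_ne hrr with h | h
    · rcases h2.2.2 with h3 | h3
      · omega
      · exact h3 (key h h1.2.1 h2.2.1)
    · rcases h1.2.2 with h3 | h3
      · omega
      · exact h3 (key h h2.2.1 h1.2.1)

theorem ceq_eq (hS : Shp lam mu R C) (hT : IsSVRPPn lam mu n T) (r : ℕ) :
    ceq lam mu T r + ∑ v ∈ Finset.Icc 1 n, V C T (r+1) v = ∑ v ∈ Finset.Icc 1 n, N C T (r+1) v := by
  have : {j : ℕ | InShape lam mu r j ∧ InShape lam mu (r + 1) j ∧
    ∃ m, m ∈ T r j ∧ (∀ x ∈ T r j, x ≤ m) ∧ m ∈ T (r + 1) j ∧ ∀ x ∈ T (r + 1) j, m ≤ x} =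
     ((Finset.Icc 1 n).biUnion (fun v =>
      (Finset.range C).filter (fun j => v ∈ T (r+1) j ∧ v ∈ T r j)) : Finset ℕ) := by
    ext j
    simp only [Set.mem_ofPred_eq, Finset.coe_biUnion, Finset.coe_Icc, Set.mem_Icc,
      Finset.coe_filter, Finset.mem_range, Set.mem_iUnion]
    constructor
    · rintro ⟨_, _, m, h1, _, h2, _⟩
      have h3 := mem_bd hS hT h1
      exact ⟨m, h3.2.2, h3.2.1, h2, h1⟩
    · rintro ⟨m, _, _, h2, h1⟩
      exact ⟨mem_sh hT h1, mem_sh hT h2, m, h1, fun x hx => col_mono hS hT (by omega) hx h2, h2,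
        fun x hx => col_mono hS hT (by omega) h1 hx⟩
  unfold ceq
  rw [this, Set.ncard_coe_finset, Finset.card_biUnion, ← Finset.sum_add_distrib]
  · refine Finset.sum_congr rfl (fun v _ => ?_)
    unfold V N
    rw [← Finset.filter_filter, add_comm, add_comm, ← Finset.filter_filter]
    rw [← Finset.card_filter_add_card_filter_not (s := (Finset.range C).filter (fun j => v ∈ T (r+1) j))
      (p := fun j => v ∈ T r j)]
    simp
  · intro v _ v' _ hrr
    rw [Function.onFun, Finset.disjoint_left]
    intro j h1 h2
    simp only [Finset.mem_filter] at h1 h2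
    have := col_mono hS hT (Nat.lt_succ_self r) h1.2.2 h2.2.1
    have := col_mono hS hT (Nat.lt_succ_self r) h2.2.2 h1.2.1
    omega

theorem exv_eq (hS : Shp lam mu R C) (hT : IsSVRPPn lam mu n T) (r : ℕ) :
    exv lam mu T r + (lam r - mu r) = ∑ v ∈ Finset.Icc 1 n, N C T r v := by
  have h1 : exv lam mu T r + (lam r - mu r) = ∑ j ∈ Finset.Ico (mu r) (lam r), (T r j).card := by
    unfold exv
    rw [← Nat.card_Ico, Finset.card_eq_sum_ones, ← Finset.sum_add_distrib]
    refine Finset.sum_congr rfl (fun j hj => ?_)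
    have := (hT.1.2.1 r j (Finset.mem_Ico.1 hj)).card_pos
    omega
  rw [h1]
  have h2 : ∑ j ∈ Finset.Ico (mu r) (lam r), (T r j).card = ∑ j ∈ Finset.range C, (T r j).card := by
    refine Finset.sum_subset (fun j hj => ?_) (fun j _ hj => ?_)
    · have := Finset.mem_Ico.1 hj
      have := hS.hC r
      simp; omega
    · rw [hT.1.1 r j (fun h => hj (Finset.mem_Ico.2 h))]; simp
  rw [h2]
  have h3 : ∀ j, (T r j).card = ∑ v ∈ Finset.Icc 1 n, if v ∈ T r j then 1 else 0 := by
    intro j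
    rw [← Finset.card_filter]
    congr 1
    ext x
    simp only [Finset.mem_filter]
    exact ⟨fun h => ⟨hT.2 r j h, h⟩, fun h => h.2⟩
  simp only [h3]
  rw [Finset.sum_comm]
  refine Finset.sum_congr rfl (fun v _ => ?_)
  rw [← Finset.card_filter]
  rfl

theorem tP_eq (a r : ℕ) : tP C T a r =
    ∑ t ∈ Finset.range r, ((V C T t (a+1) : ℤ) - V C T t a) + V C T r (a+1) - bo C T r a := by
  induction r with
  | zero => simp [tP]
  | succ r ih => rw [tP, ih, Finset.sum_range_succ]; ring

theorem tP_R (hS : Shp lam mu R C) (hT : IsSVRPPn lam mu n T) (a r : ℕ) (hr : R ≤ r) :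
    tP C T a r = (ircont T (a+1) : ℤ) - ircont T a := by
  have emp : ∀ t j x, R ≤ t → x ∉ T t j := by
    intro t j x ht h
    have := mem_bd hS hT h
    omega
  have h1 : ∀ t v, R ≤ t → V C T t v = 0 := by
    intro t v ht
    unfold V
    simp [emp t _ _ ht]
  have h2 : bo C T r a = 0 := by
    unfold bo
    simp [emp r _ _ hr]
  rw [tP_eq, h1 _ _ hr, h2, ircont_eq hS hT, ircont_eq hS hT]
  push_cast
  rw [← Finset.sum_sub_distrib]
  simp only [add_zero, sub_zero]
  symm
  refine Finset.sum_subset (fun t ht => ?_) (fun t _ ht => ?_)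
  · simp at ht ⊢; omega
  · have : R ≤ t := by simpa using ht
    rw [h1 _ _ this, h1 _ _ this]; simp

end

theorem sum2 (n a : ℕ) (ha : 1 ≤ a) (han : a + 1 ≤ n) (f g : ℕ → ℕ)
    (h : ∀ v, v ≠ a → v ≠ a + 1 → f v = g v) (h2 : f a + f (a+1) = g a + g (a+1)) :
    ∑ v ∈ Finset.Icc 1 n, f v = ∑ v ∈ Finset.Icc 1 n, g v := by
  have m1 : a ∈ Finset.Icc 1 n := by simp; omega
  have m2 : a + 1 ∈ (Finset.Icc 1 n).erase a := by simp; omega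
  have key : ∀ f : ℕ → ℕ, ∑ v ∈ Finset.Icc 1 n, f v =
      f a + (f (a+1) + ∑ v ∈ ((Finset.Icc 1 n).erase a).erase (a+1), f v) := by
    intro f
    rw [Finset.add_sum_erase _ _ m2, Finset.add_sum_erase _ _ m1]
  rw [key, key]
  have : ∑ v ∈ ((Finset.Icc 1 n).erase a).erase (a+1), f v =
      ∑ v ∈ ((Finset.Icc 1 n).erase a).erase (a+1), g v := by
    refine Finset.sum_congr rfl (fun v hv => ?_)
    simp at hv
    exact h v hv.2.1 hv.1
  omega

section
variable {lam mu : ℕ → ℕ} {R C n a : ℕ} {z : ℤ} {T T' : ℕ → ℕ → Finset ℕ}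

theorem TG.V_oth (h : TG lam mu n R C a z T T') (r v : ℕ) (h1 : v ≠ a) (h2 : v ≠ a + 1) :
    V C T' r v = V C T r v := by
  unfold V
  simp only [h.oth _ _ v h1 h2]

theorem TG.N_oth (h : TG lam mu n R C a z T T') (r v : ℕ) (h1 : v ≠ a) (h2 : v ≠ a + 1) :
    N C T' r v = N C T r v := by
  unfold N
  simp only [h.oth _ _ v h1 h2]

theorem TG.exv (hS : Shp lam mu R C) (ha : 1 ≤ a) (han : a + 1 ≤ n) (hT : IsSVRPPn lam mu n T)
    (h : TG lam mu n R C a z T T') (r : ℕ) : _root_.exv lam mu T' r = _root_.exv lam mu T r := by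
  have h1 := exv_eq hS hT r
  have h2 := exv_eq hS h.ok r
  have h3 := sum2 n a ha han (N C T' r) (N C T r) (h.N_oth r) (h.NN r)
  omega

theorem TG.ceq (hS : Shp lam mu R C) (ha : 1 ≤ a) (han : a + 1 ≤ n) (hT : IsSVRPPn lam mu n T)
    (h : TG lam mu n R C a z T T') (r : ℕ) : _root_.ceq lam mu T' r = _root_.ceq lam mu T r := by
  have h1 := ceq_eq hS hT r
  have h2 := ceq_eq hS h.ok r
  have h3 := sum2 n a ha han (N C T' (r+1)) (N C T (r+1)) (h.N_oth _) (h.NN _)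
  have h4 := sum2 n a ha han (V C T' (r+1)) (V C T (r+1)) (h.V_oth _) (h.VV _)
  omega

theorem TG.irc (hS : Shp lam mu R C) (hT : IsSVRPPn lam mu n T)
    (h : TG lam mu n R C a z T T') :
    (∀ v, v ≠ a → v ≠ a + 1 → ircont T' v = ircont T v) ∧
    (ircont T' a : ℤ) = ircont T (a+1) - z ∧ (ircont T' (a+1) : ℤ) = ircont T a + z := by
  have h1 := h.tPR
  rw [tP_R hS hT a R le_rfl, tP_R hS h.ok a R le_rfl] at h1
  have h2 : ircont T' a + ircont T' (a+1) = ircont T a + ircont T (a+1) := by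
    simp only [ircont_eq hS hT, ircont_eq hS h.ok, ← Finset.sum_add_distrib]
    exact Finset.sum_congr rfl (fun r _ => h.VV r)
  refine ⟨fun v h3 h4 => ?_, by omega, by omega⟩
  rw [ircont_eq hS hT, ircont_eq hS h.ok]
  exact Finset.sum_congr rfl (fun r _ => h.V_oth r v h3 h4)
end

end HG

namespace HG

def Good (C : ℕ) (T : ℕ → ℕ → Finset ℕ) : Prop := ∀ i r, 1 ≤ i → tP C T i r ≤ 0

structure Sel (C : ℕ) (T : ℕ → ℕ → Finset ℕ) (r i : ℕ) : Prop where
  one : 1 ≤ i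
  pos : 0 < tP C T i r
  row : ∀ i' t, 1 ≤ i' → t < r → tP C T i' t ≤ 0
  col : ∀ i', i < i' → tP C T i' r ≤ 0

theorem Sel.uniq {C : ℕ} {T : ℕ → ℕ → Finset ℕ} {r i r' i' : ℕ} (h : Sel C T r i)
    (h' : Sel C T r' i') : r = r' ∧ i = i' := by
  have h1 : r = r' := by
    rcases lt_trichotomy r r' with k | k | k
    · have := h'.row i r h.one k
      have := h.pos
      omega
    · exact k
    · have := h.row i' r' h'.one k
      have := h'.pos
      omega
  subst h1
  refine ⟨rfl, ?_⟩
  rcases lt_trichotomy i i' with k | k | k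
  · have := h.col i' k
    have := h'.pos
    omega
  · exact k
  · have := h'.col i k
    have := h.pos
    omega

section
variable {lam mu : ℕ → ℕ} {R C n : ℕ} {T T' : ℕ → ℕ → Finset ℕ}

theorem tP_big (hS : Shp lam mu R C) (hT : IsSVRPPn lam mu n T) (i r : ℕ) (hi : n ≤ i) :
    tP C T i r ≤ 0 := by
  have h1 : ∀ t, V C T t (i+1) = 0 := by
    intro t
    unfold V
    rw [Finset.card_eq_zero, Finset.filter_eq_empty_iff]
    rintro j _ ⟨h, _⟩
    have := mem_bd hS hT h
    omega
  rw [tP_eq]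
  simp only [h1]
  have : 0 ≤ ∑ t ∈ Finset.range r, (V C T t i : ℤ) := Finset.sum_nonneg (fun _ _ => by omega)
  simp only [Nat.cast_zero, zero_sub, Finset.sum_neg_distrib]
  omega

theorem Sel.ex (hS : Shp lam mu R C) (hT : IsSVRPPn lam mu n T) (hb : ¬ Good C T) :
    ∃ r i, Sel C T r i := by
  have ex : ∃ r, ∃ i, 1 ≤ i ∧ 0 < tP C T i r := by
    unfold Good at hb
    push Not at hb
    obtain ⟨i, r, h1, h2⟩ := hb
    exact ⟨r, i, h1, h2⟩
  obtain ⟨i0, h1, h2⟩ := Nat.find_spec ex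
  have h3 := fun m => Nat.find_min ex (m := m)
  generalize Nat.find ex = r at *
  have hi0 : i0 ≤ n := by
    by_contra h
    have := tP_big hS hT i0 r (by omega)
    omega
  set P : ℕ → Prop := fun i => 1 ≤ i ∧ 0 < tP C T i r with hP
  have g1 : P (Nat.findGreatest P n) := Nat.findGreatest_spec hi0 ⟨h1, h2⟩
  refine ⟨r, Nat.findGreatest P n, g1.1, g1.2, ?_, ?_⟩
  · intro i' t hi' ht
    by_contra h
    exact h3 t ht ⟨i', hi', by omega⟩
  · intro i' hi'
    by_cases hn : n ≤ i'
    · exact tP_big hS hT i' r hn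
    · have := Nat.findGreatest_is_greatest hi' (by omega)
      by_contra h
      exact this ⟨by have := g1.1; omega, by omega⟩

theorem V_congr (r v : ℕ) (h : ∀ t ≤ r, ∀ j, T' t j = T t j) : V C T' r v = V C T r v := by
  unfold V
  congr 1
  ext j
  simp only [Finset.mem_filter]
  rw [h r le_rfl, h (r-1) (by omega)]

theorem bo_congr (r v : ℕ) (h : ∀ j, T' r j = T r j) : bo C T' r v = bo C T r v := by
  unfold bo
  simp only [h]

theorem tP_congr (i r : ℕ) (h : ∀ t ≤ r, ∀ j, T' t j = T t j) : tP C T' i r = tP C T i r := by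
  rw [tP_eq, tP_eq, bo_congr r i (h r le_rfl), V_congr r (i+1) h]
  congr 2
  refine Finset.sum_congr rfl (fun t ht => ?_)
  have : t < r := by simpa using ht
  rw [V_congr t (i+1) (fun u hu => h u (by omega)), V_congr t i (fun u hu => h u (by omega))]

theorem Sel.tog {r i : ℕ} (h : Sel C T r i) (hg : TG lam mu n R C i 1 T T') : Sel C T' r i := by
  obtain ⟨f1, f2, f3⟩ := hg.first rfl r h.pos (fun t ht => h.row i t h.one ht)
  refine ⟨h.one, f1, ?_, ?_⟩
  · intro i' t hi' ht
    rw [tP_congr i' t (fun u hu => f2 u (by omega))]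
    exact h.row i' t hi' ht
  · intro i' hi'
    have h1 := h.col i' hi'
    suffices tP C T' i' r = tP C T i' r by rw [this]; exact h1
    rw [tP_eq, tP_eq, hg.V_oth r (i'+1) (by omega) (by omega)]
    have h2 : bo C T' r i' = bo C T r i' := by
      by_cases h3 : i' = i + 1
      · rw [h3]; exact f3
      · unfold bo
        simp only [hg.oth _ _ i' (by omega) h3, hg.oth _ _ (i'+1) (by omega) (by omega)]
    rw [h2]
    congr 2
    refine Finset.sum_congr rfl (fun t ht => ?_)
    have : t < r := by simpa using ht
    rw [V_congr t _ (fun u hu => f2 u (by omega)), V_congr t i' (fun u hu => f2 u (by omega))]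

theorem sel_inv (hS : Shp lam mu R C) : ∃ (ψ : (ℕ → ℕ → Finset ℕ) → (ℕ → ℕ → Finset ℕ))
    (idx : (ℕ → ℕ → Finset ℕ) → ℕ), ∀ T, IsSVRPPn lam mu n T → ¬ Good C T →
      ¬ Good C (ψ T) ∧ ψ (ψ T) = T ∧ 1 ≤ idx T ∧ idx T + 1 ≤ n ∧
        TG lam mu n R C (idx T) 1 T (ψ T) := by
  have h1 : ∀ a, ∃ τ : (ℕ → ℕ → Finset ℕ) → (ℕ → ℕ → Finset ℕ), 1 ≤ a → a + 1 ≤ n →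
      ∀ T, IsSVRPPn lam mu n T → ((1:ℤ) = 1 → ∃ t, 0 < tP C T a t) →
        τ (τ T) = T ∧ TG lam mu n R C a 1 T (τ T) := by
    intro a
    by_cases h : 1 ≤ a ∧ a + 1 ≤ n
    · obtain ⟨τ, hτ⟩ := toggle hS a h.1 h.2 1 (Or.inr rfl)
      exact ⟨τ, fun _ _ => hτ⟩
    · exact ⟨id, fun q1 q2 => absurd ⟨q1, q2⟩ h⟩
  choose τ hτ using h1
  have h2 : ∀ T, ∃ r i, IsSVRPPn lam mu n T → ¬ Good C T → Sel C T r i := by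
    intro T
    by_cases h : IsSVRPPn lam mu n T ∧ ¬ Good C T
    · obtain ⟨r, i, hs⟩ := Sel.ex hS h.1 h.2
      exact ⟨r, i, fun _ _ => hs⟩
    · exact ⟨0, 0, fun q1 q2 => absurd ⟨q1, q2⟩ h⟩
  choose r i hi using h2
  refine ⟨fun T => τ (i T) T, i, fun T hT hb => ?_⟩
  have s := hi T hT hb
  have hin : i T + 1 ≤ n := by
    by_contra h
    have := tP_big hS hT (i T) (r T) (by omega)
    have := s.pos
    omega
  obtain ⟨k1, k2⟩ := hτ (i T) s.one hin T hT (fun _ => ⟨_, s.pos⟩)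
  have s' := s.tog k2
  have hb' : ¬ Good C (τ (i T) T) := by
    intro h
    have := h _ (r T) s.one
    have := s'.pos
    omega
  refine ⟨hb', ?_, s.one, hin, k2⟩
  have := (hi _ k2.ok hb').uniq s'
  show τ (i (τ (i T) T)) (τ (i T) T) = T
  rw [this.2, k1]

end
end HG

namespace HG

noncomputable def Dl (C : ℕ) (T : ℕ → ℕ → Finset ℕ) (r : ℕ) : List ℕ :=
  ((List.range C).reverse).flatMap (fun j => ((T r j).sort (· ≤ ·)).tail.reverse)

noncomputable def Uf (T : ℕ → ℕ → Finset ℕ) (r j : ℕ) : Option ℕ :=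
  if h : (T r j).Nonempty then
          (if r ≠ 0 ∧ (T r j).min' h ∈ T (r - 1) j ∧
              (∀ x ∈ T (r - 1) j, x ≤ (T r j).min' h)
           then none else some ((T r j).min' h))
        else none

noncomputable def Ul (C : ℕ) (T : ℕ → ℕ → Finset ℕ) (r : ℕ) : List ℕ :=
  (List.range C).filterMap (Uf T r)

theorem rowRead_eq (C : ℕ) (T : ℕ → ℕ → Finset ℕ) (r : ℕ) : rowRead C T r = Dl C T r ++ Ul C T r := rfl

theorem cntU (f : ℕ → Option ℕ) (v : ℕ) (p : ℕ → Prop) [DecidablePred p]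
    (h : ∀ j, f j = some v ↔ p j) (C : ℕ) :
    ((List.range C).filterMap f).count v = ((Finset.range C).filter p).card := by
  induction C with
  | zero => simp
  | succ C ih =>
    rw [List.range_succ, List.filterMap_append, List.count_append, ih, Finset.range_add_one,
      Finset.filter_insert]
    by_cases hp : p C
    · rw [if_pos hp, Finset.card_insert_of_notMem (by simp)]
      simp [(h C).2 hp]
    · rw [if_neg hp]
      have : f C ≠ some v := fun k => hp ((h C).1 k)
      rcases hf : f C with _ | w
      · simp [hf]
      · have : w ≠ v := by rintro rfl; exact this hf
        simp [hf, this]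

theorem cntD (f : ℕ → List ℕ) (v : ℕ) (p : ℕ → Prop) [DecidablePred p]
    (h : ∀ j, (f j).count v = if p j then 1 else 0) (C : ℕ) :
    ((List.range C).reverse.flatMap f).count v = ((Finset.range C).filter p).card := by
  induction C with
  | zero => simp
  | succ C ih =>
    rw [List.range_succ, List.reverse_append, List.reverse_singleton, List.singleton_append,
      List.flatMap_cons, List.count_append, ih, Finset.range_add_one,
      Finset.filter_insert, h]
    by_cases hp : p C
    · rw [if_pos hp, if_pos hp, Finset.card_insert_of_notMem (by simp)]
      omega
    · rw [if_neg hp, if_neg hp]; omega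

theorem mem_tail_sort (A : Finset ℕ) (x : ℕ) :
    x ∈ (A.sort (· ≤ ·)).tail ↔ x ∈ A ∧ ∃ m ∈ A, m < x := by
  have h1 := Finset.sortedLT_sort A
  have h2 : ∀ y, y ∈ A ↔ y ∈ A.sort (· ≤ ·) := fun y => (Finset.mem_sort (· ≤ ·)).symm
  simp only [h2]
  have h1 := h1.pairwise
  generalize A.sort (· ≤ ·) = l at *
  cases l with
  | nil => simp
  | cons m l =>
    rw [List.pairwise_cons] at h1
    simp only [List.tail_cons, List.mem_cons]
    constructor
    · intro h
      exact ⟨Or.inr h, m, Or.inl rfl, h1.1 x h⟩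
    · rintro ⟨rfl | h, m', h3 | h3, h4⟩
      · omega
      · have := h1.1 m' h3; omega
      · exact h
      · exact h

theorem tail_pw (A : Finset ℕ) : (A.sort (· ≤ ·)).tail.reverse.Pairwise (· > ·) := by
  rw [List.pairwise_reverse]
  exact (Finset.sortedLT_sort A).pairwise.tail

section
variable {lam mu : ℕ → ℕ} {R C n : ℕ} {T : ℕ → ℕ → Finset ℕ}

theorem Dl_pw (hT : IsSVRPPn lam mu n T) (r : ℕ) : (Dl C T r).Pairwise (· > ·) := by
  unfold Dl
  rw [List.pairwise_flatMap]
  refine ⟨fun j _ => tail_pw _, ?_⟩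
  rw [List.pairwise_reverse]
  refine List.pairwise_lt_range.imp ?_
  intro j j' hj x hx y hy
  rw [List.mem_reverse, mem_tail_sort] at hx hy
  obtain ⟨hx1, m, hm, hm2⟩ := hx
  have := row_mono hT hj hy.1 hm
  omega

theorem Uf_some (hS : Shp lam mu R C) (hT : IsSVRPPn lam mu n T) (r j v : ℕ) :
    Uf T r j = some v ↔ (v ∈ T r j ∧ (r = 0 ∨ v ∉ T (r-1) j)) ∧ ¬ ∃ m ∈ T r j, m < v := by
  unfold Uf
  by_cases h : (T r j).Nonempty
  · rw [dif_pos h]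
    have hm := (T r j).min'_mem h
    have hle : ∀ x ∈ T r j, (T r j).min' h ≤ x := fun x hx => (T r j).min'_le x hx
    generalize (T r j).min' h = m at *
    have hiff : (r ≠ 0 ∧ m ∈ T (r-1) j ∧ ∀ x ∈ T (r-1) j, x ≤ m) ↔ (r ≠ 0 ∧ m ∈ T (r-1) j) := by
      constructor
      · exact fun k => ⟨k.1, k.2.1⟩
      · intro k
        refine ⟨k.1, k.2, fun x hx => col_mono hS hT (by have := k.1; omega) hx hm⟩
    constructor
    · intro k
      split_ifs at k with k1
      · have : m = v := by simpa using k
        subst this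
        refine ⟨⟨hm, ?_⟩, ?_⟩
        · by_cases hr : r = 0
          · exact Or.inl hr
          · exact Or.inr (fun hh => k1 (hiff.2 ⟨hr, hh⟩))
        · rintro ⟨m', h1, h2⟩
          have := hle m' h1; omega
    · rintro ⟨⟨h1, h2⟩, h3⟩
      have e : m = v := by
        have := hle v h1
        by_contra hne
        exact h3 ⟨m, hm, by omega⟩
      subst e
      rw [if_neg]
      intro q
      obtain ⟨q1, q2⟩ := hiff.1 q
      rcases h2 with h2 | h2
      · exact q1 h2
      · exact h2 q2
  · rw [dif_neg h]
    constructor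
    · intro k; simp at k
    · rintro ⟨⟨k, _⟩, _⟩
      exact absurd ⟨v, k⟩ h

theorem Ul_pw (hS : Shp lam mu R C) (hT : IsSVRPPn lam mu n T) (r : ℕ) :
    (Ul C T r).Pairwise (· ≤ ·) := by
  unfold Ul
  rw [List.pairwise_filterMap]
  refine List.pairwise_lt_range.imp ?_
  intro j j' hj x hx y hy
  rw [Uf_some hS hT] at hx hy
  exact row_mono hT hj hx.1.1 hy.1.1

noncomputable def np (C : ℕ) (T : ℕ → ℕ → Finset ℕ) (r v : ℕ) : ℕ :=
  ((Finset.range C).filter (fun j => v ∈ T r j ∧ ∃ m ∈ T r j, m < v)).card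

theorem count_Dl (r v : ℕ) : (Dl C T r).count v = np C T r v := by
  unfold Dl np
  refine cntD _ v _ (fun j => ?_) C
  have nd : (((T r j).sort (· ≤ ·)).tail.reverse).Nodup :=
    (tail_pw _).imp (fun h => ne_of_gt h)
  rw [nd.count]
  exact if_congr (List.mem_reverse.trans (mem_tail_sort _ _)) rfl rfl

theorem count_row (hS : Shp lam mu R C) (hT : IsSVRPPn lam mu n T) (r v : ℕ) :
    (Dl C T r).count v + (Ul C T r).count v = V C T r v := by
  rw [count_Dl]
  unfold Ul np V
  rw [cntU (Uf T r) v (fun j => (v ∈ T r j ∧ (r = 0 ∨ v ∉ T (r-1) j)) ∧ ¬ ∃ m ∈ T r j, m < v)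
    (fun j => Uf_some hS hT r j v)]
  rw [← Finset.card_filter_add_card_filter_not
    (s := (Finset.range C).filter (fun j => v ∈ T r j ∧ (r = 0 ∨ v ∉ T (r-1) j)))
      (p := fun j => ∃ m ∈ T r j, m < v), Finset.filter_filter, Finset.filter_filter]
  congr 2
  ext j
  simp only [Finset.mem_filter, Finset.mem_range]
  constructor
  · rintro ⟨h1, h2, m, hm, hlt⟩
    refine ⟨h1, ⟨h2, ?_⟩, m, hm, hlt⟩
    by_cases hr : r = 0
    · exact Or.inl hr
    · right; intro h
      have := col_mono hS hT (show r - 1 < r by omega) h hm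
      omega
  · rintro ⟨h1, ⟨h2, _⟩, h3⟩
    exact ⟨h1, h2, h3⟩

theorem bo_le (r a : ℕ) : bo C T r a ≤ np C T r (a+1) := by
  unfold bo np
  refine Finset.card_le_card (fun j hj => ?_)
  simp only [Finset.mem_filter] at hj ⊢
  exact ⟨hj.1, hj.2.2, a, hj.2.1, by omega⟩

theorem readWord_succ (R C : ℕ) (T : ℕ → ℕ → Finset ℕ) :
    readWord (R+1) C T = rowRead C T R ++ readWord R C T := by
  unfold readWord
  rw [List.range_succ, List.reverse_append, List.reverse_singleton, List.singleton_append,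
      List.flatMap_cons]

theorem count_read (hS : Shp lam mu R C) (hT : IsSVRPPn lam mu n T) (r v : ℕ) :
    (readWord r C T).count v = ∑ t ∈ Finset.range r, V C T t v := by
  induction r with
  | zero => simp [readWord]
  | succ r ih =>
    rw [readWord_succ, List.count_append, ih, rowRead_eq, List.count_append, count_row hS hT,
      Finset.sum_range_succ, add_comm]

theorem suf_app {A B s : List ℕ} (h : s <:+ A ++ B) :
    s <:+ B ∨ ∃ s', s = s' ++ B ∧ s' <:+ A := by
  obtain ⟨u, hu⟩ := h
  rcases List.append_eq_append_iff.1 hu with ⟨a', h1, h2⟩ | ⟨c', h1, h2⟩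
  · exact Or.inr ⟨a', h2, u, h1.symm⟩
  · exact Or.inl ⟨c', h2.symm⟩

/-- suffix form of the lattice condition -/
theorem lat_iff (w : List ℕ) : IsReverseLatticeWord w ↔
    ∀ s, s <:+ w → ∀ a, 1 ≤ a → s.count (a+1) ≤ s.count a := by
  unfold IsReverseLatticeWord
  constructor
  · intro h s hs a ha
    rw [List.suffix_iff_eq_drop] at hs
    rw [hs]
    exact h _ a (a+1) ha (by omega)
  · intro h k a b ha hab
    induction b, hab using Nat.le_induction with
    | base => exact h _ (List.drop_suffix _ _) a ha
    | succ b hb ih => exact (h _ (List.drop_suffix _ _) b (by omega)).trans ih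

theorem suf_read {R r : ℕ} (h : r ≤ R) : readWord r C T <:+ readWord R C T := by
  induction R, h using Nat.le_induction with
  | base => exact List.suffix_refl _
  | succ k hk ih => rw [readWord_succ]; exact ih.trans (List.suffix_append _ _)

theorem suf_cases {R : ℕ} {s : List ℕ} (h : s <:+ readWord R C T) :
    s = [] ∨ ∃ r < R, ∃ s', s' <:+ rowRead C T r ∧ s = s' ++ readWord r C T := by
  induction R with
  | zero =>
    left
    have : readWord 0 C T = [] := by simp [readWord]
    rw [this] at h
    exact List.suffix_nil.1 h
  | succ R ih =>
    rw [readWord_succ] at h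
    rcases suf_app h with h | ⟨s', h1, h2⟩
    · rcases ih h with h | ⟨r, hr, h⟩
      · exact Or.inl h
      · exact Or.inr ⟨r, by omega, h⟩
    · exact Or.inr ⟨R, by omega, s', h2, h1⟩

theorem lat_good (hS : Shp lam mu R C) (hT : IsSVRPPn lam mu n T) :
    IsReverseLatticeWord (readWord R C T) ↔ Good C T := by
  rw [lat_iff]
  have K : ∀ r v, ((readWord r C T).count v : ℤ) = ∑ t ∈ Finset.range r, (V C T t v : ℤ) := by
    intro r v
    rw [count_read hS hT]; push_cast; rfl
  have P : ∀ a r, tP C T a r = (readWord r C T).count (a+1) - (readWord r C T).count a +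
      V C T r (a+1) - bo C T r a := by
    intro a r
    rw [tP_eq, K, K, Finset.sum_sub_distrib]
  constructor
  · intro h a r ha
    by_cases hr : R ≤ r
    · have := h _ (List.suffix_refl _) a ha
      rw [tP_R hS hT a r hr, ircont_eq hS hT, ircont_eq hS hT, ← count_read hS hT,
        ← count_read hS hT]
      omega
    push Not at hr
    rw [P]
    by_cases hc : ∃ j, a + 1 ∈ T r j ∧ a ∉ T r j ∧ ∃ m ∈ T r j, m < a + 1
    · obtain ⟨j, h1, h2, m, hm, hlt⟩ := hc
      have hma : m < a := by
        rcases Nat.lt_or_ge m a with q | q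
        · exact q
        · have : m = a := by omega
          exact absurd (this ▸ hm) h2
      have no : ∀ j', a ∉ T r j' := by
        intro j' h3
        rcases lt_trichotomy j j' with q | q | q
        · have := row_mono hT q h1 h3; omega
        · exact h2 (q ▸ h3)
        · have := row_mono hT q h3 hm; omega
      have v0 : V C T r a = 0 := by unfold V; simp [no]
      have h4 := h _ (suf_read (show r + 1 ≤ R by omega)) a ha
      rw [count_read hS hT, count_read hS hT, Finset.sum_range_succ, Finset.sum_range_succ,
        ← count_read hS hT, ← count_read hS hT, v0] at h4
      omega
    · have h1 : np C T r (a+1) = bo C T r a := by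
        unfold np bo
        congr 1
        ext j
        simp only [Finset.mem_filter]
        constructor
        · rintro ⟨q1, q2, q3⟩
          refine ⟨q1, ?_, q2⟩
          by_contra q
          exact hc ⟨j, q2, q, q3⟩
        · rintro ⟨q1, q2, q3⟩
          exact ⟨q1, q3, a, q2, by omega⟩
      have h2 := count_row hS hT r (a+1)
      rw [count_Dl] at h2
      -- the part of U with entries > a
      have h3 : ∃ s, s <:+ Ul C T r ∧ s.count (a+1) = (Ul C T r).count (a+1) ∧ s.count a = 0 := by
        have := Ul_pw hS hT r
        generalize Ul C T r = l at this
        clear h2 h1 hc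
        induction l with
        | nil => exact ⟨[], List.suffix_refl _, rfl, rfl⟩
        | cons x l ih =>
          rw [List.pairwise_cons] at this
          by_cases hx : x ≤ a
          · obtain ⟨s, q1, q2, q3⟩ := ih this.2
            refine ⟨s, q1.trans (List.suffix_cons _ _), ?_, q3⟩
            rw [q2, List.count_cons_of_ne (by omega)]
          · refine ⟨x :: l, List.suffix_refl _, rfl, ?_⟩
            rw [List.count_eq_zero]
            intro hm
            rcases List.mem_cons.1 hm with q | q
            · omega
            · have := this.1 a q; omega
      obtain ⟨s, q1, q2, q3⟩ := h3
      have h4 : s ++ readWord r C T <:+ readWord R C T := by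
        refine List.IsSuffix.trans ?_ (suf_read (show r + 1 ≤ R by omega))
        rw [readWord_succ, rowRead_eq, List.append_assoc]
        refine List.IsSuffix.trans ?_ (List.suffix_append _ _)
        obtain ⟨u, hu⟩ := q1
        exact ⟨u, by rw [← List.append_assoc, hu]⟩
      have h5 := h _ h4 a ha
      rw [List.count_append, List.count_append, q2, q3] at h5
      omega
  · intro h s hs a ha
    rcases suf_cases hs with rfl | ⟨r, hr, s', hs', rfl⟩
    · simp
    rw [List.count_append, List.count_append]
    have g1 := h a r ha
    have g2 := h a (r+1) ha
    rw [P] at g1 g2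
    have b1 := bo_le (C := C) (T := T) r a
    have b2 := bo_le (C := C) (T := T) (r+1) a
    have c1 := count_row hS hT r (a+1)
    have c2 := count_row hS hT (r+1) (a+1)
    have c3 := count_row hS hT r a
    have d1 := count_Dl (C := C) (T := T) r (a+1)
    have d2 := count_Dl (C := C) (T := T) (r+1) (a+1)
    have e1 := count_read hS hT (r+1) (a+1)
    have e2 := count_read hS hT (r+1) a
    rw [Finset.sum_range_succ, ← count_read hS hT] at e1 e2
    rw [rowRead_eq] at hs'
    rcases suf_app hs' with hs' | ⟨D', rfl, hD⟩
    · have := hs'.sublist.count_le (a+1)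
      omega
    · rw [List.count_append, List.count_append]
      by_cases hb : a + 1 ∈ D'
      · have q1 := hD.sublist.count_le (a+1)
        have q2 : D'.count a = (Dl C T r).count a := by
          have pw := Dl_pw (C := C) hT r
          obtain ⟨D0, hD0⟩ := hD
          rw [← hD0, List.pairwise_append] at pw
          rw [← hD0, List.count_append]
          have : D0.count a = 0 := by
            rw [List.count_eq_zero]
            intro hm
            have := pw.2.2 _ hm _ hb
            omega
          omega
        omega
      · have := List.count_eq_zero.2 hb
        omega

end
end HG

namespace HG

noncomputable def xv {n : ℕ} (v : Fin n) : MvPolynomial (Fin n ⊕ ℕ ⊕ ℕ) ℤ := MvPolynomial.X (Sum.inl v)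

noncomputable def alt {n : ℕ} (α : Fin n → ℕ) : MvPolynomial (Fin n ⊕ ℕ ⊕ ℕ) ℤ :=
  (Matrix.of (fun v w : Fin n => xv v ^ α w)).det

def del (n : ℕ) (v : Fin n) : ℕ := n - 1 - v

theorem alt_swap {n : ℕ} (α : Fin n → ℕ) (i j : Fin n) (hij : i ≠ j) :
    alt (α ∘ Equiv.swap i j) = - alt α := by
  unfold alt
  have := Matrix.det_permute' (Equiv.swap i j) (Matrix.of (fun v w : Fin n => (xv v) ^ α w))
  rw [Equiv.Perm.sign_swap hij] at this
  simp only [Units.val_neg, Units.val_one, Int.cast_neg, Int.cast_one, neg_mul, one_mul] at this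
  rw [← this]
  rfl

theorem alt_del_ne (n : ℕ) : alt (del n) ≠ 0 := by
  have h1 : (Matrix.vandermonde (fun v : Fin n => (xv v))).det ≠ 0 := by
    rw [Matrix.det_vandermonde_ne_zero_iff]
    intro v w h
    exact Sum.inl_injective (MvPolynomial.X_injective h)
  have h2 := Matrix.det_permute' (Fin.revPerm) (Matrix.vandermonde (fun v : Fin n => (xv v)))
  have h3 : (Matrix.vandermonde (fun v : Fin n => (xv v))).submatrix id Fin.revPerm =
      Matrix.of (fun v w : Fin n => xv v ^ del n w) := by
    ext1 v w
    simp only [Matrix.submatrix_apply, Matrix.vandermonde_apply, Matrix.of_apply, id, del,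
      Fin.revPerm_apply, Fin.val_rev]
    congr 1
    omega
  rw [h3] at h2
  unfold alt
  rw [h2]
  refine mul_ne_zero ?_ h1
  rcases Int.units_eq_one_or (Equiv.Perm.sign (Fin.revPerm : Equiv.Perm (Fin n))) with h | h <;> rw [h] <;> simp

theorem sym_all {n : ℕ} {α A : Type} [CommRing A] (X : Finset α) (wt : α → Fin n → ℕ) (c : α → A)
    (h0 : ∀ i j : Fin n, (j:ℕ) = i + 1 → ∃ τ : α → α, ∀ T ∈ X, τ T ∈ X ∧ τ (τ T) = T ∧ c (τ T) = c T ∧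
      wt (τ T) = wt T ∘ Equiv.swap i j) (σ : Equiv.Perm (Fin n)) :
    ∀ y : Fin n → A, ∑ T ∈ X, c T * ∏ i, y (σ i) ^ wt T i = ∑ T ∈ X, c T * ∏ i, y i ^ wt T i := by
  cases n with
  | zero =>
    intro y
    simp
  | succ m =>
    have hσ : σ ∈ Submonoid.closure (Set.range fun i : Fin m => Equiv.swap i.castSucc i.succ) := by
      rw [Equiv.Perm.mclosure_swap_castSucc_succ]; trivial
    induction hσ using Submonoid.closure_induction with
    | one => intro y; rfl
    | mul σ₁ σ₂ _ _ h1 h2 =>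
      intro y
      have := h2 (fun i => y (σ₁ i))
      exact this.trans (h1 y)
    | mem σ hσ =>
      obtain ⟨i, rfl⟩ := hσ
      intro y
      obtain ⟨τ, hτ⟩ := h0 i.castSucc i.succ (by simp)
      refine Finset.sum_bij' (fun T _ => τ T) (fun T _ => τ T) (fun T hT => (hτ T hT).1)
        (fun T hT => (hτ T hT).1) (fun T hT => (hτ T hT).2.1) (fun T hT => (hτ T hT).2.1) ?_
      intro T hT
      obtain ⟨_, _, h3, h4⟩ := hτ T hT
      rw [h3, h4]
      congr 1
      rw [← Equiv.prod_comp (Equiv.swap i.castSucc i.succ)]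
      refine Finset.prod_congr rfl (fun k _ => ?_)
      simp

theorem abs_thm {n : ℕ} {α : Type} (X : Finset α) (wt : α → Fin n → ℕ)
    (c : α → MvPolynomial (Fin n ⊕ ℕ ⊕ ℕ) ℤ) (good : α → Prop)
    (h0 : ∀ i j : Fin n, (j:ℕ) = i + 1 → ∃ τ : α → α, ∀ T ∈ X, τ T ∈ X ∧ τ (τ T) = T ∧ c (τ T) = c T ∧
      wt (τ T) = wt T ∘ Equiv.swap i j)
    (h1 : ∃ ψ : α → α, ∀ T ∈ X, ¬ good T → ψ T ∈ X ∧ ¬ good (ψ T) ∧ ψ (ψ T) = T ∧ c (ψ T) = c T ∧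
      ∃ i j : Fin n, i ≠ j ∧ (wt (ψ T) + del n) = (wt T + del n) ∘ Equiv.swap i j) :
    alt (del n) * ∑ T ∈ X, c T * ∏ v, xv v ^ wt T v =
      ∑ T ∈ X.filter good, c T * alt (wt T + del n) := by
  have e1 : alt (del n) * ∑ T ∈ X, c T * ∏ v, xv v ^ wt T v = ∑ T ∈ X, c T * alt (wt T + del n) := by
    unfold alt
    simp only [Matrix.det_apply', Matrix.of_apply]
    rw [Finset.sum_mul]
    simp only [Finset.mul_sum]
    conv_rhs => rw [Finset.sum_comm]
    refine Finset.sum_congr rfl (fun σ _ => ?_)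
    rw [← Finset.mul_sum, ← sym_all X wt c h0 σ xv, Finset.mul_sum]
    refine Finset.sum_congr rfl (fun T _ => ?_)
    simp only [Pi.add_apply, pow_add, Finset.prod_mul_distrib]
    ring
  rw [e1, ← Finset.sum_filter_add_sum_filter_not X good]
  suffices ∑ T ∈ X.filter (fun T => ¬ good T), c T * alt (wt T + del n) = 0 by rw [this, add_zero]
  obtain ⟨ψ, hψ⟩ := h1
  have key : ∀ T ∈ X.filter (fun T => ¬ good T), c T * alt (wt T + del n) +
      c (ψ T) * alt (wt (ψ T) + del n) = 0 := by
    intro T hT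
    rw [Finset.mem_filter] at hT
    obtain ⟨_, _, _, k4, i, j, hij, k5⟩ := hψ T hT.1 hT.2
    rw [k4, k5, alt_swap _ _ _ hij]; ring
  refine Finset.sum_involution (fun T _ => ψ T) key ?_ ?_ ?_
  · intro T hT hne heq
    have := key T hT
    have heq2 : ψ T = T := heq
    rw [heq2, ← two_mul] at this
    rcases mul_eq_zero.1 this with h | h
    · exact two_ne_zero h
    · exact hne h
  · intro T hT
    rw [Finset.mem_filter] at hT ⊢
    exact ⟨(hψ T hT.1 hT.2).1, (hψ T hT.1 hT.2).2.1⟩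
  · intro T hT
    rw [Finset.mem_filter] at hT
    exact (hψ T hT.1 hT.2).2.2.1

section
variable {lam mu : ℕ → ℕ} {R C n : ℕ}

theorem fin_all (hS : Shp lam mu R C) (n : ℕ) : {T : ℕ → ℕ → Finset ℕ | IsSVRPPn lam mu n T}.Finite := by
  let f : (ℕ → ℕ → Finset ℕ) → (Fin R → Fin C → Finset ℕ) := fun T r j => T r j
  have fin : (Set.univ.pi (fun _ : Fin R => Set.univ.pi
      (fun _ : Fin C => (((Finset.Icc 1 n).powerset : Finset (Finset ℕ)) : Set (Finset ℕ))))).Finite :=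
    Set.Finite.pi' (fun _ => Set.Finite.pi' (fun _ => Finset.finite_toSet _)) |>.subset (by
      intro g hg r j
      exact hg r trivial j trivial)
  refine Set.Finite.of_injOn (f := f) ?_ ?_ fin
  · intro T hT r _ j _
    simp only [f, Finset.coe_powerset, Set.mem_preimage, Set.mem_powerset_iff, Finset.coe_subset]
    exact hT.2 r j
  · intro T hT T' hT' h
    have key : ∀ {T T' : ℕ → ℕ → Finset ℕ}, IsSVRPPn lam mu n T → f T = f T' → ∀ r j x, x ∈ T r j → x ∈ T' r j := by
      intro T T' hT h r j x hx
      have hb := mem_bd hS hT hx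
      have := congrFun (congrFun h ⟨r, hb.1⟩) ⟨j, hb.2.1⟩
      simp only [f] at this
      rw [← this]; exact hx
    funext r j
    ext x
    exact ⟨key hT h r j x, key hT' h.symm r j x⟩

noncomputable def All (hS : Shp lam mu R C) (n : ℕ) : Finset (ℕ → ℕ → Finset ℕ) := (fin_all hS n).toFinset

theorem mem_All (hS : Shp lam mu R C) {T : ℕ → ℕ → Finset ℕ} : T ∈ All hS n ↔ IsSVRPPn lam mu n T := by
  unfold All
  rw [Set.Finite.mem_toFinset]; rfl

noncomputable def wt (n : ℕ) (T : ℕ → ℕ → Finset ℕ) (v : Fin n) : ℕ := ircont T (v + 1)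

theorem main_X (hS : Shp lam mu R C) (c : (ℕ → ℕ → Finset ℕ) → MvPolynomial (Fin n ⊕ ℕ ⊕ ℕ) ℤ)
    (hc : ∀ T T', (∀ r, ceq lam mu T' r = ceq lam mu T r) → (∀ r, exv lam mu T' r = exv lam mu T r) →
      c T' = c T) :
    alt (del n) * ∑ T ∈ All hS n, c T * ∏ v, xv v ^ wt n T v =
      ∑ T ∈ (All hS n).filter (Good C), c T * alt (wt n T + del n) := by
  refine abs_thm _ _ _ _ ?_ ?_
  · intro i j hij
    obtain ⟨τ, hτ⟩ := toggle (n := n) hS (i+1) (by omega) (by omega) 0 (Or.inl rfl)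
    refine ⟨τ, fun T hT => ?_⟩
    rw [mem_All] at hT
    obtain ⟨k1, k2⟩ := hτ T hT (fun h => by omega)
    refine ⟨(mem_All hS).2 k2.ok, k1, hc _ _ (k2.ceq hS (by omega) (by omega) hT)
      (k2.exv hS (by omega) (by omega) hT), ?_⟩
    obtain ⟨g1, g2, g3⟩ := k2.irc hS hT
    funext v
    simp only [Function.comp, wt]
    by_cases e1 : v = i
    · subst e1
      rw [Equiv.swap_apply_left, hij]; omega
    · by_cases e2 : v = j
      · subst e2
        rw [Equiv.swap_apply_right, hij]; omega
      · rw [Equiv.swap_apply_of_ne_of_ne e1 e2]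
        have := Fin.val_ne_of_ne e1
        have := Fin.val_ne_of_ne e2
        exact g1 _ (by omega) (by omega)
  · obtain ⟨ψ, idx, h⟩ := sel_inv (n := n) hS
    refine ⟨ψ, fun T hT hb => ?_⟩
    rw [mem_All] at hT
    obtain ⟨k1, k2, k3, k4, k5⟩ := h T hT hb
    refine ⟨(mem_All hS).2 k5.ok, k1, k2, hc _ _ (k5.ceq hS k3 k4 hT)
      (k5.exv hS k3 k4 hT), ?_⟩
    obtain ⟨g1, g2, g3⟩ := k5.irc hS hT
    obtain ⟨a, ha⟩ : ∃ a, idx T = a + 1 := ⟨idx T - 1, by omega⟩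
    rw [ha] at g1 g2 g3 k4
    refine ⟨⟨a, by omega⟩, ⟨a + 1, by omega⟩, by simp, ?_⟩
    funext v
    simp only [Function.comp, wt, Pi.add_apply, del]
    by_cases e1 : v = ⟨a, by omega⟩
    · subst e1
      rw [Equiv.swap_apply_left]; simp only; omega
    · by_cases e2 : v = ⟨a + 1, by omega⟩
      · subst e2
        rw [Equiv.swap_apply_right]; simp only; omega
      · rw [Equiv.swap_apply_of_ne_of_ne e1 e2]
        have := Fin.val_ne_of_ne e1
        have := Fin.val_ne_of_ne e2
        simp only at *
        rw [g1 _ (by omega) (by omega)]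

end
end HG

namespace HG

noncomputable def Phi (nu : ℕ → ℕ) (U : ℕ → ℕ → ℕ) (r j : ℕ) : Finset ℕ :=
  if j < nu (r+1) then {U r j} else ∅

theorem mem_Phi {nu : ℕ → ℕ} {U : ℕ → ℕ → ℕ} {r j x : ℕ} :
    x ∈ Phi nu U r j ↔ j < nu (r+1) ∧ x = U r j := by
  unfold Phi
  split_ifs with h <;> simp [h]

def shl (nu : ℕ → ℕ) (r : ℕ) : ℕ := nu (r+1)

structure Pn (nu : ℕ → ℕ) (n : ℕ) : Prop where
  anti : ∀ v, 1 ≤ v → nu (v+1) ≤ nu v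
  zero : ∀ v, n < v → nu v = 0

theorem Pn.le1 {nu : ℕ → ℕ} {n : ℕ} (h : Pn nu n) (r : ℕ) : nu (r+1) ≤ nu 1 := by
  induction r with
  | zero => exact le_rfl
  | succ r ih => exact (h.anti _ (by omega)).trans ih

theorem Pn.shp {nu : ℕ → ℕ} {n : ℕ} (h : Pn nu n) : Shp (shl nu) (fun _ => 0) n (nu 1) where
  hl i := h.anti _ (by omega)
  hm i := le_rfl
  sub i := Nat.zero_le _
  hR i hi := h.zero _ (by omega)
  hC i := h.le1 i

def Sgl (nu : ℕ → ℕ) (n : ℕ) (T : ℕ → ℕ → Finset ℕ) : Prop :=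
  (∀ r, ceq (shl nu) (fun _ => 0) T r = 0) ∧ (∀ r, exv (shl nu) (fun _ => 0) T r = 0)

theorem inS {nu : ℕ → ℕ} {r j : ℕ} : InShape (shl nu) (fun _ => 0) r j ↔ j < nu (r+1) := by
  unfold InShape shl; simp

theorem Phi_ok {nu : ℕ → ℕ} {n : ℕ} {U : ℕ → ℕ → ℕ} (hU : IsSSYT nu n U) :
    IsSVRPPn (shl nu) (fun _ => 0) n (Phi nu U) ∧ Sgl nu n (Phi nu U) := by
  obtain ⟨h1, h2, h3, h4⟩ := hU
  refine ⟨⟨⟨?_, ?_, ?_, ?_, ?_⟩, ?_⟩, ?_, ?_⟩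
  · intro i j h
    rw [inS] at h
    simp [Phi, h]
  · intro i j h
    rw [inS] at h
    exact ⟨U i j, mem_Phi.2 ⟨h, rfl⟩⟩
  · intro i j x hx
    rw [mem_Phi] at hx
    rw [hx.2]; exact (h2 i j hx.1).1
  · intro i j _ hj a ha b hb
    rw [mem_Phi] at ha hb
    rw [ha.2, hb.2]; exact h3 i j hb.1
  · intro i j _ hj a ha b hb
    rw [mem_Phi] at ha hb
    rw [ha.2, hb.2]; exact (h4 i j hb.1).le
  · intro i j x hx
    rw [mem_Phi] at hx
    rw [Finset.mem_Icc, hx.2]; exact h2 i j hx.1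
  · intro r
    unfold ceq
    have : {j : ℕ | InShape (shl nu) (fun _ => 0) r j ∧ InShape (shl nu) (fun _ => 0) (r + 1) j ∧
      ∃ m, m ∈ Phi nu U r j ∧ (∀ x ∈ Phi nu U r j, x ≤ m) ∧ m ∈ Phi nu U (r + 1) j ∧
        ∀ x ∈ Phi nu U (r + 1) j, m ≤ x} = ∅ := by
      ext j
      simp only [Set.mem_setOf_eq, Set.mem_empty_iff_false, iff_false]
      rintro ⟨_, _, m, hm, _, hm', _⟩
      rw [mem_Phi] at hm hm'
      have := h4 r j hm'.1
      omega
    rw [this, Set.ncard_empty]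
  · intro r
    unfold exv
    refine Finset.sum_eq_zero (fun j hj => ?_)
    unfold Phi
    split_ifs <;> simp

theorem Phi_inj {nu : ℕ → ℕ} {n : ℕ} : Set.InjOn (Phi nu) {U | IsSSYT nu n U} := by
  intro U hU U' hU' h
  funext r j
  by_cases hj : j < nu (r+1)
  · have : U r j ∈ Phi nu U' r j := by rw [← h]; exact mem_Phi.2 ⟨hj, rfl⟩
    exact (mem_Phi.1 this).2
  · rw [hU.1 r j hj, hU'.1 r j hj]

theorem Phi_surj {nu : ℕ → ℕ} {n : ℕ} (hn : Pn nu n) {T : ℕ → ℕ → Finset ℕ}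
    (hT : IsSVRPPn (shl nu) (fun _ => 0) n T) (hs : Sgl nu n T) :
    ∃ U, IsSSYT nu n U ∧ Phi nu U = T := by
  have hS := hn.shp
  obtain ⟨⟨t1, t2, t3, t4, t5⟩, t6⟩ := hT
  have hsing : ∀ r j, ∃ u, (j < nu (r+1) → T r j = {u}) ∧ (¬ j < nu (r+1) → u = 0) := by
    intro r j
    by_cases hj : j < nu (r+1)
    · have h := hs.2 r
      unfold exv at h
      rw [Finset.sum_eq_zero_iff] at h
      have h' := h j (by simp [shl, hj])
      have h'' := Finset.card_pos.2 (t2 r j (inS.2 hj))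
      obtain ⟨u, hu⟩ := Finset.card_eq_one.1 (show (T r j).card = 1 by omega)
      exact ⟨u, fun _ => hu, fun h => absurd hj h⟩
    · exact ⟨0, fun h => absurd h hj, fun _ => rfl⟩
  choose U hU1 hU2 using hsing
  refine ⟨U, ⟨hU2, ?_, ?_, ?_⟩, ?_⟩
  · intro r j hj
    have : U r j ∈ T r j := by rw [hU1 r j hj]; simp
    exact Finset.mem_Icc.1 (t6 r j this)
  · intro r j hj
    have h1 : U r j ∈ T r j := by rw [hU1 r j (by omega)]; simp
    have h2 : U r (j+1) ∈ T r (j+1) := by rw [hU1 r (j+1) hj]; simp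
    exact t4 r j (inS.2 (by omega)) (inS.2 hj) _ h1 _ h2
  · intro r j hj
    have hj' : j < nu (r+1) := hj.trans_le (hn.anti _ (by omega))
    have e1 := hU1 r j hj'
    have e2 := hU1 (r+1) j hj
    have h1 : U r j ∈ T r j := by rw [e1]; simp
    have h2 : U (r+1) j ∈ T (r+1) j := by rw [e2]; simp
    refine lt_of_le_of_ne (t5 r j (inS.2 hj') (inS.2 hj) _ h1 _ h2) (fun he => ?_)
    have h := hs.1 r
    unfold ceq at h
    rw [Set.ncard_eq_zero ((Set.finite_Iio (nu (r+1))).subset (fun k hk => inS.1 hk.1))] at h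
    have : j ∈ (∅ : Set ℕ) := by
      rw [← h]
      refine ⟨inS.2 hj', inS.2 hj, U r j, h1, ?_, ?_, ?_⟩
      · rw [e1]; simp
      · rw [he]; exact h2
      · rw [e2, he]; simp
    exact this
  · funext r j
    unfold Phi
    split_ifs with hj
    · exact (hU1 r j hj).symm
    · exact (t1 r j (fun h => hj (inS.1 h))).symm

theorem ssyt_col {nu : ℕ → ℕ} {n : ℕ} (hn : Pn nu n) {U : ℕ → ℕ → ℕ} (hU : IsSSYT nu n U)
    {r r' j : ℕ} (hr : r < r') (hj : j < nu (r'+1)) : U r j < U r' j := by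
  induction r', hr using Nat.le_induction with
  | base => exact hU.2.2.2 r j hj
  | succ k hk ih =>
    exact (ih (hj.trans_le (hn.anti _ (by omega)))).trans (hU.2.2.2 k j hj)

theorem cont_eq {nu : ℕ → ℕ} {n : ℕ} (hn : Pn nu n) {U : ℕ → ℕ → ℕ} (hU : IsSSYT nu n U) (v : ℕ) :
    contentOf nu U v = ircont (Phi nu U) v := by
  unfold contentOf ircont
  have : {j | ∃ i, v ∈ Phi nu U i j} = Prod.snd '' {p : ℕ × ℕ | p.2 < nu (p.1 + 1) ∧ U p.1 p.2 = v} := by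
    ext j
    simp only [Set.mem_setOf_eq, Set.mem_image, mem_Phi]
    constructor
    · rintro ⟨i, h1, h2⟩
      exact ⟨(i, j), ⟨h1, h2.symm⟩, rfl⟩
    · rintro ⟨⟨i, k⟩, ⟨h1, h2⟩, rfl⟩
      exact ⟨i, h1, h2.symm⟩
  rw [this, Set.ncard_image_of_injOn]
  rintro ⟨i, j⟩ ⟨h1, h2⟩ ⟨i', j'⟩ ⟨h1', h2'⟩ h
  simp only at h h1 h2 h1' h2'
  subst h
  rcases lt_trichotomy i i' with h | h | h
  · have := ssyt_col hn hU h h1'; omega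
  · rw [h]
  · have := ssyt_col hn hU h h1; omega

def U0 (nu : ℕ → ℕ) (r j : ℕ) : ℕ := if j < nu (r+1) then r+1 else 0

theorem U0_ok {nu : ℕ → ℕ} {n : ℕ} (hn : Pn nu n) : IsSSYT nu n (U0 nu) := by
  refine ⟨?_, ?_, ?_, ?_⟩
  · intro r j h; simp [U0, h]
  · intro r j h
    simp only [U0, h, if_true]
    refine ⟨by omega, ?_⟩
    by_contra hc
    rw [hn.zero _ (by omega)] at h
    omega
  · intro r j h
    simp [U0, h, show j < nu (r+1) by omega]
  · intro r j h
    have : nu (r+2) ≤ nu (r+1) := hn.anti (r+1) (by omega)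
    simp [U0, h, show j < nu (r+1) by omega]

theorem mem_P0 {nu : ℕ → ℕ} {r j x : ℕ} : x ∈ Phi nu (U0 nu) r j ↔ j < nu (r+1) ∧ x = r+1 := by
  rw [mem_Phi]
  constructor
  · rintro ⟨h, h'⟩
    simp only [U0, h, if_true] at h'
    exact ⟨h, h'⟩
  · rintro ⟨h, h'⟩
    simp only [U0, h, if_true]
    exact ⟨trivial, h'⟩

theorem bo_Phi (C : ℕ) (nu : ℕ → ℕ) (U : ℕ → ℕ → ℕ) (r a : ℕ) : bo C (Phi nu U) r a = 0 := by
  unfold bo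
  rw [Finset.card_eq_zero, Finset.filter_eq_empty_iff]
  rintro j _ ⟨h1, h2⟩
  rw [mem_Phi] at h1 h2
  omega

theorem V_U0 {nu : ℕ → ℕ} {n : ℕ} (hn : Pn nu n) (t v : ℕ) :
    V (nu 1) (Phi nu (U0 nu)) t v = if v = t + 1 then nu (t+1) else 0 := by
  unfold V
  split_ifs with h
  · rw [← Finset.card_range (nu (t+1))]
    congr 1
    ext j
    have := hn.le1 t
    simp only [Finset.mem_filter, Finset.mem_range, mem_P0]
    omega
  · rw [Finset.card_eq_zero, Finset.filter_eq_empty_iff]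
    rintro j _ ⟨h1, h2⟩
    rw [mem_P0] at h1
    exact h h1.2

theorem good_U0 {nu : ℕ → ℕ} {n : ℕ} (hn : Pn nu n) : Good (nu 1) (Phi nu (U0 nu)) := by
  intro i r hi
  have : tP (nu 1) (Phi nu (U0 nu)) i r = if i ≤ r then (nu (i+1) : ℤ) - nu i else 0 := by
    induction r with
    | zero =>
      simp only [tP, bo_Phi, V_U0 hn]
      rw [if_neg (by omega), if_neg (by omega)]; simp
    | succ r ih =>
      simp only [tP, bo_Phi, V_U0 hn, ih]
      by_cases h1 : i ≤ r
      · rw [if_pos h1, if_neg (by omega), if_neg (by omega), if_pos (by omega)]; simp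
      · by_cases h2 : i = r + 1
        · subst h2
          simp
          ring
        · rw [if_neg h1, if_neg (by omega), if_neg (by omega), if_neg (by omega)]; simp
  rw [this]
  have := hn.anti i hi
  split_ifs <;> omega

theorem irc_U0 {nu : ℕ → ℕ} (v : ℕ) : ircont (Phi nu (U0 nu)) (v+1) = nu (v+1) := by
  unfold ircont
  have : {j | ∃ i, v + 1 ∈ Phi nu (U0 nu) i j} = ((Finset.range (nu (v+1)) : Finset ℕ) : Set ℕ) := by
    ext j
    simp only [Set.mem_setOf_eq, mem_P0, Finset.coe_range, Set.mem_Iio]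
    constructor
    · rintro ⟨i, h1, h2⟩
      have : v = i := by omega
      subst this; exact h1
    · intro h; exact ⟨v, h, rfl⟩
  rw [this, Set.ncard_coe_finset, Finset.card_range]

theorem uniq_U0 {nu : ℕ → ℕ} {n : ℕ} (hn : Pn nu n) {U : ℕ → ℕ → ℕ} (hU : IsSSYT nu n U)
    (hg : Good (nu 1) (Phi nu U)) : U = U0 nu := by
  have key : ∀ r j, j < nu (r+1) → U r j = r+1 := by
    intro r
    induction r using Nat.strong_induction_on with
    | _ r ih =>
      intro j hj
      have hlow : r + 1 ≤ U r j := by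
        cases r with
        | zero => exact (hU.2.1 0 j hj).1
        | succ r =>
          have h1 := hU.2.2.2 r j hj
          rw [ih r (by omega) j (hj.trans_le (hn.anti _ (by omega)))] at h1
          omega
      by_contra hne
      obtain ⟨a, ha⟩ : ∃ a, U r j = a + 1 := ⟨U r j - 1, by omega⟩
      have hga := hg a r (by omega)
      rw [tP_eq, bo_Phi] at hga
      have hV : ∀ t ∈ Finset.range r, (0:ℤ) ≤ (V (nu 1) (Phi nu U) t (a+1) : ℤ) - V (nu 1) (Phi nu U) t a := by
        intro t ht
        rw [Finset.mem_range] at ht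
        have : V (nu 1) (Phi nu U) t a = 0 := by
          unfold V
          rw [Finset.card_eq_zero, Finset.filter_eq_empty_iff]
          rintro k _ ⟨h1, h2⟩
          rw [mem_Phi] at h1
          rw [ih t ht k h1.1] at h1
          omega
        rw [this]; simp
      have hsum := Finset.sum_nonneg hV
      have hpos : 0 < V (nu 1) (Phi nu U) r (a+1) := by
        unfold V
        rw [Finset.card_pos]
        refine ⟨j, Finset.mem_filter.2 ⟨Finset.mem_range.2 (hj.trans_le (hn.le1 r)),
          mem_Phi.2 ⟨hj, ha.symm⟩, ?_⟩⟩
        cases r with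
        | zero => exact Or.inl rfl
        | succ r =>
          refine Or.inr (fun h => ?_)
          rw [Nat.add_sub_cancel, mem_Phi] at h
          rw [ih r (by omega) j h.1] at h
          omega
      push_cast at hga
      omega
  funext r j
  unfold U0
  split_ifs with h
  · exact key r j h
  · exact hU.1 r j h

theorem schur_alt {nu : ℕ → ℕ} {n : ℕ} (hn : Pn nu n) :
    alt (del n) * schurPoly n nu = alt ((fun v : Fin n => nu (v+1)) + del n) := by
  have hS := hn.shp
  have key := main_X (n := n) hS (fun T => if Sgl nu n T then 1 else 0) (by
    intro T T' h1 h2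
    have : Sgl nu n T' ↔ Sgl nu n T := by simp only [Sgl, h1, h2]
    by_cases h : Sgl nu n T
    · rw [if_pos h, if_pos (this.2 h)]
    · rw [if_neg h, if_neg (fun h' => h (this.1 h'))])
  have e1 : schurPoly n nu = ∑ T ∈ All hS n, (if Sgl nu n T then 1 else 0) * ∏ v, xv v ^ wt n T v := by
    simp only [ite_mul, one_mul, zero_mul]
    rw [← Finset.sum_filter]
    rw [← finsum_mem_coe_finset]
    unfold schurPoly
    refine finsum_mem_eq_of_bijOn (Phi nu) ⟨?_, Phi_inj, ?_⟩ ?_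
    · intro U hU
      have := Phi_ok hU
      simp only [Finset.coe_filter, mem_All]
      exact this
    · intro T hT
      simp only [Finset.coe_filter, mem_All] at hT
      exact Phi_surj hn hT.1 hT.2
    · intro U hU
      refine Finset.prod_congr rfl (fun v _ => ?_)
      rw [cont_eq hn hU]; rfl
  rw [e1, key, Finset.sum_eq_single (Phi nu (U0 nu))]
  · rw [if_pos (Phi_ok (U0_ok hn)).2, one_mul]
    congr 2
    funext v
    exact irc_U0 v
  · intro T hT hne
    rw [Finset.mem_filter, mem_All] at hT
    rw [if_neg, zero_mul]
    intro hs
    obtain ⟨U, hU, rfl⟩ := Phi_surj hn hT.1 hs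
    exact hne (by rw [uniq_U0 hn hU hT.2])
  · intro h
    exact absurd (Finset.mem_filter.2 ⟨(mem_All hS).2 (Phi_ok (U0_ok hn)).1, good_U0 hn⟩) h

end HG

namespace HG

theorem fs_ite {α β M : Type} [AddCommMonoid M] (G : Finset α) (k : α → β) (f : α → β → M) :
    ∑ᶠ b, ∑ T ∈ G, (if k T = b then f T b else 0) = ∑ T ∈ G, f T (k T) := by
  rw [finsum_sum_comm]
  · refine Finset.sum_congr rfl (fun T _ => ?_)
    rw [finsum_eq_single _ (k T)]
    · rw [if_pos rfl]
    · intro b hb; rw [if_neg (fun h => hb h.symm)]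
  · intro T _
    refine (Set.finite_singleton (k T)).subset (fun b hb => ?_)
    by_contra h
    exact hb (if_neg (fun h' => h h'.symm))

theorem final (lam mu : ℕ → ℕ) {R C n : ℕ} (hS : Shp lam mu R C) :
    hybridG lam mu n =
      ∑ᶠ ga : ℕ → ℕ, ∑ᶠ th : ℕ → ℕ, ∑ᶠ nu : ℕ → ℕ,
        (∏ᶠ r : ℕ, MvPolynomial.X (Sum.inr (Sum.inl r)) ^ ga r) *
        (∏ᶠ r : ℕ, MvPolynomial.X (Sum.inr (Sum.inr r)) ^ th r) *
        (Hcoef lam mu n R C nu ga th : MvPolynomial (Fin n ⊕ ℕ ⊕ ℕ) ℤ) *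
        schurPoly n nu := by
  let A : (ℕ → ℕ) → MvPolynomial (Fin n ⊕ ℕ ⊕ ℕ) ℤ := fun ga =>
    (∏ᶠ r : ℕ, MvPolynomial.X (Sum.inr (Sum.inl r)) ^ ga r)
  let B : (ℕ → ℕ) → MvPolynomial (Fin n ⊕ ℕ ⊕ ℕ) ℤ := fun th =>
    (∏ᶠ r : ℕ, MvPolynomial.X (Sum.inr (Sum.inr r)) ^ th r)
  let G := (All hS n).filter (Good C)
  have hH : ∀ nu ga th, (Hcoef lam mu n R C nu ga th : MvPolynomial (Fin n ⊕ ℕ ⊕ ℕ) ℤ) =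
      ∑ T ∈ G, (if ceq lam mu T = ga then if exv lam mu T = th then if ircont T = nu then 1 else 0 else 0 else 0) := by
    intro nu ga th
    have : Hcoef lam mu n R C nu ga th =
        (G.filter (fun T => ceq lam mu T = ga ∧ exv lam mu T = th ∧ ircont T = nu)).card := by
      unfold Hcoef
      rw [← Set.ncard_coe_finset]
      congr 1
      ext T
      simp only [G, Finset.coe_filter, Finset.mem_filter, mem_All, Set.mem_setOf_eq, funext_iff]
      constructor
      · rintro ⟨h1, h2, h3, h4, h5⟩
        exact ⟨⟨h1, (lat_good hS h1).1 h5⟩, h3, h4, h2⟩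
      · rintro ⟨⟨h1, h5⟩, h3, h4, h2⟩
        exact ⟨h1, h2, h3, h4, (lat_good hS h1).2 h5⟩
    rw [this, Finset.card_filter]
    push_cast
    refine Finset.sum_congr rfl (fun T _ => ?_)
    split_ifs <;> simp_all
  have e2 : (∑ᶠ ga : ℕ → ℕ, ∑ᶠ th : ℕ → ℕ, ∑ᶠ nu : ℕ → ℕ,
        A ga * B th *
        (Hcoef lam mu n R C nu ga th : MvPolynomial (Fin n ⊕ ℕ ⊕ ℕ) ℤ) *
        schurPoly n nu) = ∑ T ∈ G, A (ceq lam mu T) * B (exv lam mu T) * schurPoly n (ircont T) := by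
    rw [← fs_ite G (ceq lam mu) (fun T ga => A ga * B (exv lam mu T) * schurPoly n (ircont T))]
    refine finsum_congr (fun ga => ?_)
    rw [← fs_ite G (exv lam mu) (fun T th => if ceq lam mu T = ga then A ga * B th * schurPoly n (ircont T) else 0)]
    refine finsum_congr (fun th => ?_)
    rw [← fs_ite G ircont (fun T nu => if exv lam mu T = th then if ceq lam mu T = ga then A ga * B th * schurPoly n nu else 0 else 0)]
    refine finsum_congr (fun nu => ?_)
    rw [hH, Finset.mul_sum, Finset.sum_mul]
    refine Finset.sum_congr rfl (fun T _ => ?_)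
    split_ifs <;> simp
  have e1 : hybridG lam mu n = ∑ T ∈ All hS n, A (ceq lam mu T) * B (exv lam mu T) * ∏ v, xv v ^ wt n T v := by
    unfold hybridG
    rw [finsum_mem_eq_finite_toFinset_sum _ (fin_all hS n)]
    refine Finset.sum_congr rfl (fun T _ => ?_)
    rw [mul_assoc, mul_comm]
    rfl
  refine Eq.trans ?_ e2.symm
  refine mul_left_cancel₀ (alt_del_ne n) ?_
  rw [e1, main_X hS (fun T => A (ceq lam mu T) * B (exv lam mu T)), Finset.mul_sum]
  · refine Finset.sum_congr rfl (fun T hT => ?_)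
    rw [Finset.mem_filter, mem_All] at hT
    have hP : Pn (ircont T) n := by
      refine ⟨fun v hv => ?_, fun v hv => ?_⟩
      · have h1 := hT.2 v R hv
        rw [tP_R hS hT.1 v R le_rfl] at h1
        omega
      · unfold ircont
        have : {j | ∃ i, v ∈ T i j} = ∅ := by
          ext j
          simp only [Set.mem_setOf_eq, Set.mem_empty_iff_false, iff_false]
          rintro ⟨i, hi⟩
          have := mem_bd hS hT.1 hi
          omega
        rw [this, Set.ncard_empty]
    rw [mul_left_comm, schur_alt hP]
    rfl
  · intro T T' h1 h2
    rw [funext h1, funext h2]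

end HG

/-- **Schur expansion.** For any skew shape `lam/mu` and `n ≥ 1`,
`G_{lam/mu}(x_1,…,x_n; t; w) = Σ_γ Σ_θ t^γ w^θ Σ_ν H^{ν,γ,θ}_{lam/mu,n} s_ν(x_1,…,x_n)`,
where `H^{ν,γ,θ}_{lam/mu,n}` counts the `T ∈ SVRPP^n(lam/mu)` with `ircont(T) = ν`,
`ceq(T) = γ`, `ex(T) = θ` whose reading word is a reverse lattice word. In particular
the hybrid Grothendieck polynomial is Schur positive. -/
theorem hybridG_schur_expansion (lam mu : ℕ → ℕ)
    (hlam : IsPartitionFun lam) (hmu : IsPartitionFun mu) (hsub : ∀ r, mu r ≤ lam r)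
    (R C : ℕ) (hR : ∀ r, R ≤ r → lam r = 0) (hC : ∀ r, lam r ≤ C)
    (n : ℕ) (hn : 1 ≤ n) :
    hybridG lam mu n =
      ∑ᶠ ga : ℕ → ℕ, ∑ᶠ th : ℕ → ℕ, ∑ᶠ nu : ℕ → ℕ,
        (∏ᶠ r : ℕ, MvPolynomial.X (Sum.inr (Sum.inl r)) ^ ga r) *
        (∏ᶠ r : ℕ, MvPolynomial.X (Sum.inr (Sum.inr r)) ^ th r) *
        (Hcoef lam mu n R C nu ga th : MvPolynomial (Fin n ⊕ ℕ ⊕ ℕ) ℤ) *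
        schurPoly n nu := by
  exact HG.final lam mu ⟨hlam.1, hmu.1, hsub, hR, hC⟩
end

section
/- For any partition λ and any n ≥ 1, the polynomial G_λ(x_1,...,x_n; 1; 1) (the hybrid Grothendieck polynomial of straight shape λ with all t_i = w_i = 1) has saturated Newton polytope: every lattice point of its Newton polytope is the exponent vector of a monomial appearing with nonzero coefficient. -/
open scoped Classical

/-- The hybrid Grothendieck polynomial of straight shape `lam` with all `t_i = w_i = 1`:
`G_lam(x_1,…,x_n; 1; 1) = Σ_{T ∈ SVRPP^n(lam)} x^{ircont(T)}`, where `x_{v+1} = X v`. -/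
noncomputable def hybridG11 (lam : ℕ → ℕ) (n : ℕ) : MvPolynomial (Fin n) ℤ :=
  ∑ᶠ T ∈ {T : ℕ → ℕ → Finset ℕ | IsSVRPPn lam (fun _ => 0) n T},
    ∏ v : Fin n, MvPolynomial.X v ^ ircont T ((v : ℕ) + 1)


namespace HG

structure Shape (L : ℕ) (h : ℕ → ℕ) : Prop where
  anti : Antitone h
  zero : ∀ j, L ≤ j → h j = 0

noncomputable def cols (L : ℕ) (h a : ℕ → ℕ) : ℕ :=
  ((Finset.range L).filter (fun j => a j < h j)).card

noncomputable def cnt_s14 (L : ℕ) (h a : ℕ → ℕ) : ℕ :=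
  ((Finset.range L).filter (fun j => a j < h j ∨ a (j+1) < a j)).card

noncomputable def cc (L : ℕ) (h : ℕ → ℕ) : ℕ :=
  ((Finset.range L).filter (fun j => 0 < h j)).card

def Feas (L : ℕ) : ℕ → (ℕ → ℕ) → (ℕ → ℕ) → Prop
  | 0, h, _ => ∀ j, h j = 0
  | n+1, h, r => ∃ a, Antitone a ∧ (∀ j, a j ≤ h j) ∧ cols L h a ≤ r n ∧ r n ≤ cnt_s14 L h a ∧
      Feas L n a r

lemma Feas_congr (L n : ℕ) : ∀ (h r r' : ℕ → ℕ), (∀ t < n, r t = r' t) → Feas L n h r →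
    Feas L n h r' := by
  induction n with
  | zero => intro h r r' _ hf; exact hf
  | succ n ih =>
    intro h r r' hr ⟨a, h1, h2, h3, h4, h5⟩
    refine ⟨a, h1, h2, ?_, ?_, ih a r r' (fun t ht => hr t (by omega)) h5⟩
    · rw [← hr n (by omega)]; exact h3
    · rw [← hr n (by omega)]; exact h4

lemma Shape.sub {L : ℕ} {h a : ℕ → ℕ} (hh : Shape L h) (ha : Antitone a) (hle : ∀ j, a j ≤ h j) :
    Shape L a := ⟨ha, fun j hj => by have := hle j; have := hh.zero j hj; omega⟩

lemma thresh {L : ℕ} {f : ℕ → ℕ} (hf : Shape L f) (K : ℕ) :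
    ∃ q ≤ L, ∀ j, K < f j ↔ j < q := by
  have hex : ∃ q, f q ≤ K := ⟨L, by rw [hf.zero L le_rfl]; omega⟩
  refine ⟨Nat.find hex, Nat.find_min' hex (by rw [hf.zero L le_rfl]; omega), fun j => ?_⟩
  constructor
  · intro hj
    by_contra hc
    have h1 := hf.anti (not_lt.mp hc)
    have h2 := Nat.find_spec hex
    omega
  · intro hj
    have := Nat.find_min hex hj
    omega

lemma card_lt (L q : ℕ) (hq : q ≤ L) (P : ℕ → Prop) [DecidablePred P] (hP : ∀ j, P j ↔ j < q) :
    ((Finset.range L).filter P).card = q := by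
  have : (Finset.range L).filter P = Finset.range q := by
    ext j; simp [hP]; omega
  rw [this, Finset.card_range]

lemma cc_spec {L : ℕ} {h : ℕ → ℕ} (hh : Shape L h) : cc L h ≤ L ∧ ∀ j, 0 < h j ↔ j < cc L h := by
  obtain ⟨q, hq, hj⟩ := thresh hh 0
  have : cc L h = q := card_lt L q hq _ hj
  rw [this]; exact ⟨hq, hj⟩

lemma cols_le_cnt (L : ℕ) (h a : ℕ → ℕ) : cols L h a ≤ cnt_s14 L h a := by
  apply Finset.card_le_card
  intro j; simp only [Finset.mem_filter]; tauto

/-- number of columns at most size -/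
lemma Feas_low (L n : ℕ) : ∀ (h r : ℕ → ℕ), Feas L n h r → cc L h ≤ ∑ t ∈ Finset.range n, r t := by
  induction n with
  | zero =>
    intro h r hf
    have hf' : ∀ j, h j = 0 := hf
    simp [cc, hf']
  | succ n ih =>
    intro h r ⟨a, h1, h2, h3, h4, h5⟩
    rw [Finset.sum_range_succ]
    have := ih a r h5
    have : cc L h ≤ cc L a + cols L h a := by
      unfold cc cols
      refine le_trans (Finset.card_le_card ?_) (Finset.card_union_le _ _)
      intro j
      simp only [Finset.mem_union, Finset.mem_filter]
      rintro ⟨hj, hp⟩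
      by_cases h0 : 0 < a j
      · exact Or.inl ⟨hj, h0⟩
      · exact Or.inr ⟨hj, by omega⟩
    omega

lemma Feas_min (L n : ℕ) : ∀ (h r : ℕ → ℕ), Shape L h → cc L h = ∑ t ∈ Finset.range n, r t →
    Feas L n h r := by
  induction n with
  | zero =>
    intro h r hh hc j
    have := (cc_spec hh).2 j
    simp at hc
    omega
  | succ n ih =>
    intro h r hh hc
    rw [Finset.sum_range_succ] at hc
    obtain ⟨hcL, hcs⟩ := cc_spec hh
    set q := ∑ t ∈ Finset.range n, r t with hq
    have hanti : Antitone (fun j => if j < q then h j else 0) := by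
      intro i j hij
      have := hh.anti hij
      dsimp only
      split_ifs <;> omega
    have hle : ∀ j, (fun j => if j < q then h j else 0) j ≤ h j := by
      intro j; dsimp only; split_ifs <;> omega
    have hcol : cols L h (fun j => if j < q then h j else 0) = r n := by
      unfold cols
      have : (Finset.range L).filter (fun j => (if j < q then h j else 0) < h j) =
          Finset.Ico q (cc L h) := by
        ext j
        simp only [Finset.mem_filter, Finset.mem_range, Finset.mem_Ico]
        have := hcs j
        split_ifs <;> omega
      rw [this, Nat.card_Ico]; omega
    refine ⟨_, hanti, hle, hcol.le, hcol.ge.trans (cols_le_cnt _ _ _), ih _ r (hh.sub hanti hle) ?_⟩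
    rw [← hq]
    apply card_lt L q (by omega)
    intro j
    have := hcs j
    dsimp only
    split_ifs <;> omega

lemma Feas_mono (L n : ℕ) : ∀ (h r h' r' : ℕ → ℕ), Shape L h → Shape L h' → Feas L n h r →
    (∀ j, h j ≤ h' j) → (∀ t < n, r' t ≤ r t) → cc L h' ≤ ∑ t ∈ Finset.range n, r' t →
    Feas L n h' r' := by
  induction n with
  | zero =>
    intro h r h' r' hh hh' hf hle hr hc j
    have := (cc_spec hh').2 j
    simp at hc
    omega
  | succ n ih =>
    intro h r h' r' hh hh' ⟨a, ha, hah, h3, h4, h5⟩ hle hr hc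
    rw [Finset.sum_range_succ] at hc
    obtain ⟨hcL, hcs⟩ := cc_spec hh'
    have hsa := hh.sub ha hah
    obtain ⟨haL, has⟩ := cc_spec hsa
    have hrn := hr n (by omega)
    set q := ∑ t ∈ Finset.range n, r' t with hq
    let b : ℕ → ℕ → ℕ := fun s j => if j < s then h' j else if j < q then a j else 0
    have hbanti : ∀ s ≤ q, Antitone (b s) := by
      intro s hs i j hij
      have h1 := hh'.anti hij
      have h2 := ha hij
      have h3 := hah j
      have h4 := hle j
      simp only [b]
      split_ifs <;> omega
    have hble : ∀ s ≤ q, ∀ j, b s j ≤ h' j := by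
      intro s hs j
      have h3 := hah j
      have h4 := hle j
      simp only [b]
      split_ifs <;> omega
    have hbq : ∀ s ≤ q, ∀ j, q ≤ j → b s j = 0 := by
      intro s hs j hj
      simp only [b]
      split_ifs <;> omega
    have hbs : ∀ s ≤ q, Shape L (b s) := fun s hs => hh'.sub (hbanti s hs) (hble s hs)
    have hbF : ∀ s ≤ q, Feas L n (b s) r' := by
      intro s hs
      obtain ⟨hbL, hbc⟩ := cc_spec (hbs s hs)
      have hcq : cc L (b s) ≤ q := by
        by_contra hcon
        have := (hbc q).2 (by omega)
        have := hbq s hs q le_rfl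
        omega
      by_cases hca : cc L a ≤ q
      · refine ih a r (b s) r' hsa (hbs s hs) h5 ?_ (fun t ht => hr t (by omega)) hcq
        intro j
        have h3 := hah j
        have h4 := hle j
        have h6 := has j
        simp only [b]
        split_ifs <;> omega
      · apply Feas_min L n _ _ (hbs s hs)
        rw [← hq]
        refine le_antisymm hcq ?_
        by_contra hcon
        have h7 := hbc (cc L (b s))
        have h8 := has (cc L (b s))
        have h3 := hah (cc L (b s))
        have h4 := hle (cc L (b s))
        have h9 : 0 < b s (cc L (b s)) := by
          show 0 < (if _ < s then h' _ else if _ < q then a _ else 0)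
          split_ifs <;> omega
        omega
    have hcl2 : r' n ≤ cnt_s14 L h' (b 0) := by
      refine hrn.trans (h4.trans (Finset.card_le_card ?_))
      intro j
      simp only [Finset.mem_filter, b]
      rintro ⟨hj, hp⟩
      refine ⟨hj, ?_⟩
      have h3 := hah j
      have h4 := hle j
      split_ifs <;> omega
    have hlast : cols L h' (b q) ≤ r' n := by
      have : cols L h' (b q) ≤ (Finset.Ico q (cc L h')).card := by
        apply Finset.card_le_card
        intro j
        simp only [Finset.mem_filter, Finset.mem_Ico, b, Finset.mem_range]
        have := hcs j
        split_ifs <;> omega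
      rw [Nat.card_Ico] at this
      omega
    have hex : ∃ s, s ≤ q ∧ cols L h' (b s) ≤ r' n := ⟨q, le_rfl, hlast⟩
    obtain ⟨hsq, hsc⟩ := Nat.find_spec hex
    refine ⟨b (Nat.find hex), hbanti _ hsq, hble _ hsq, hsc, ?_, hbF _ hsq⟩
    rcases hs0 : Nat.find hex with _ | s
    · exact hcl2
    · have hmin := Nat.find_min hex (m := s) (by omega)
      have hsq' : s ≤ q := by omega
      have h7 : r' n < cols L h' (b s) := by
        by_contra hcon; exact hmin ⟨hsq', by omega⟩
      have h8 : cols L h' (b s) ≤ cols L h' (b (s+1)) + 1 := by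
        have : (Finset.range L).filter (fun j => b s j < h' j) ⊆
            (Finset.range L).filter (fun j => b (s+1) j < h' j) ∪ {s} := by
          intro j
          simp only [Finset.mem_filter, Finset.mem_union, Finset.mem_singleton, b]
          rintro ⟨hj, hp⟩
          by_cases hjs : j = s
          · exact Or.inr hjs
          · refine Or.inl ⟨hj, ?_⟩
            have e : j < s + 1 ↔ j < s := by omega
            simp only [e]; exact hp
        have h9 := (Finset.card_le_card this).trans (Finset.card_union_le _ _)
        simpa [cols] using h9
      have := cols_le_cnt L h' (b (s+1))
      omega

/-! ## the truncated column lengths of the maximal shape -/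

noncomputable def Mt (h : ℕ → ℕ) (j N : ℕ) : ℕ :=
  Nat.find (p := fun i => N ≤ i ∨ (i ≤ j ∧ h (j - i) ≤ i)) ⟨N, Or.inl le_rfl⟩

lemma Mt_le (h : ℕ → ℕ) (j N : ℕ) : Mt h j N ≤ N := Nat.find_min' _ (Or.inl le_rfl)

lemma Mt_lt {h : ℕ → ℕ} {j N i : ℕ} (hi : i < Mt h j N) (hij : i ≤ j) : i < h (j - i) := by
  have := Nat.find_min _ hi
  push Not at this
  exact this.2 hij

lemma Mt_spec {h : ℕ → ℕ} {j N : ℕ} (hi : Mt h j N < N) :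
    Mt h j N ≤ j ∧ h (j - Mt h j N) ≤ Mt h j N := by
  have : N ≤ Mt h j N ∨ (Mt h j N ≤ j ∧ h (j - Mt h j N) ≤ Mt h j N) :=
    Nat.find_spec (p := fun i => N ≤ i ∨ (i ≤ j ∧ h (j - i) ≤ i)) ⟨N, Or.inl le_rfl⟩
  rcases this with h1 | h1
  · omega
  · exact h1

lemma Mt_le_of {h : ℕ → ℕ} {j N i : ℕ} (hij : i ≤ j) (hi : h (j - i) ≤ i) : Mt h j N ≤ i :=
  Nat.find_min' _ (Or.inr ⟨hij, hi⟩)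

lemma le_Mt {h : ℕ → ℕ} {j N i : ℕ} (hN : i ≤ N) (H : ∀ i' < i, i' ≤ j → i' < h (j - i')) :
    i ≤ Mt h j N := by
  by_contra hc
  have h1 := Mt_spec (h := h) (j := j) (N := N) (by omega)
  have := H _ (not_le.mp hc) h1.1
  omega

lemma Mt_min (h : ℕ → ℕ) (j : ℕ) {k N : ℕ} (hk : k ≤ N) : Mt h j k = min k (Mt h j N) := by
  apply le_antisymm
  · refine le_min (Mt_le _ _ _) (le_Mt ((Mt_le _ _ _).trans hk) fun i hi hij => Mt_lt hi hij)
  · exact le_Mt (min_le_left _ _) fun i hi hij => Mt_lt (lt_of_lt_of_le hi (min_le_right _ _)) hij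

lemma Mt_mono {h a : ℕ → ℕ} (hle : ∀ j, a j ≤ h j) (j N : ℕ) : Mt a j N ≤ Mt h j N :=
  le_Mt (Mt_le _ _ _) fun _ hi hij => lt_of_lt_of_le (Mt_lt hi hij) (hle _)

lemma Mt_shape {L : ℕ} {h : ℕ → ℕ} (hh : Shape L h) (N : ℕ) : Shape L (fun j => Mt h j N) := by
  constructor
  · intro j j' hjj
    refine le_Mt (Mt_le _ _ _) fun i hi hij => ?_
    by_cases hij' : i ≤ j'
    · exact lt_of_lt_of_le (Mt_lt hi hij') (hh.anti (by omega))
    · omega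
  · intro j hj
    have : Mt h j N ≤ 0 := Mt_le_of (Nat.zero_le _) (by simp [hh.zero j hj])
    show Mt h j N = 0
    omega

noncomputable def F (L : ℕ) (h : ℕ → ℕ) (k : ℕ) : ℕ := ∑ j ∈ Finset.range L, Mt h j k

lemma F_one {L : ℕ} {h : ℕ → ℕ} : F L h 1 = cc L h := by
  unfold F cc
  rw [Finset.card_filter]
  apply Finset.sum_congr rfl
  intro j _
  split_ifs with h0
  · refine le_antisymm (Mt_le _ _ _) (le_Mt le_rfl fun i hi _ => ?_)
    have : i = 0 := by omega
    subst this; simpa using h0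
  · have : Mt h j 1 ≤ 0 := Mt_le_of (Nat.zero_le _) (by simp; omega)
    omega

lemma F_succ (L : ℕ) (h : ℕ → ℕ) {k N : ℕ} (hk : k + 1 ≤ N) :
    F L h (k+1) = F L h k + ((Finset.range L).filter (fun j => k < Mt h j N)).card := by
  unfold F
  rw [Finset.card_filter, ← Finset.sum_add_distrib]
  apply Finset.sum_congr rfl
  intro j _
  rw [Mt_min h j hk, Mt_min h j (show k ≤ N by omega)]
  split_ifs <;> omega

lemma F_step (L : ℕ) {h a : ℕ → ℕ} (hh : Antitone h) (ha : Antitone a) (hle : ∀ j, a j ≤ h j)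
    (k : ℕ) : F L a k + cnt_s14 L h a ≤ F L h (k+1) := by
  have hcnt : cnt_s14 L h a + ((Finset.range L).filter
      (fun j => ¬ (a j < h j ∨ a (j+1) < a j))).card = L := by
    have := Finset.card_filter_add_card_filter_not (s := Finset.range L)
      (fun j => a j < h j ∨ a (j+1) < a j)
    rw [Finset.card_range] at this
    exact this
  have hz : ((Finset.range L).filter (fun j => ¬ (Mt a j k < Mt h j (k+1)))).card ≤
     ((Finset.range L).filter (fun j => ¬ (a j < h j ∨ a (j+1) < a j))).card := by
    have key : ∀ j, ¬ (Mt a j k < Mt h j (k+1)) → Mt h j (k+1) = Mt a j k ∧ Mt a j k ≤ j ∧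
        h (j - Mt a j k) = Mt a j k ∧
        ¬ (a (j - Mt a j k) < h (j - Mt a j k) ∨ a (j - Mt a j k +1) < a (j - Mt a j k)) := by
      intro j hj
      have h0 := Mt_le a j k
      have h1 : Mt a j k ≤ Mt h j (k+1) :=
        le_Mt (by omega) fun i hi hij => lt_of_lt_of_le (Mt_lt hi hij) (hle _)
      have h2 : Mt h j (k+1) = Mt a j k := by omega
      have h3 := Mt_spec (h := h) (j := j) (N := k+1) (by omega)
      rw [h2] at h3
      refine ⟨h2, h3.1, ?_⟩
      have h4 := hle (j - Mt a j k)
      have h5 := ha (show j - Mt a j k ≤ j - Mt a j k + 1 by omega)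
      rcases Nat.eq_zero_or_pos (Mt a j k) with h6 | h6
      · omega
      · have h7 := Mt_lt (h := a) (j := j) (N := k) (i := Mt a j k - 1) (by omega) (by omega)
        have h8 : j - (Mt a j k - 1) = j - Mt a j k + 1 := by omega
        rw [h8] at h7
        omega
    refine Finset.card_le_card_of_injOn (fun j => j - Mt a j k) ?_ ?_
    · intro j hj
      simp only [Finset.coe_filter, Finset.mem_range, Set.mem_setOf_eq] at hj ⊢
      obtain ⟨-, -, -, h4⟩ := key j hj.2
      exact ⟨by omega, h4⟩
    · intro j hj j' hj' hjj
      simp only [Finset.coe_filter, Finset.mem_range, Set.mem_setOf_eq] at hj hj' hjj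
      obtain ⟨-, h2, h3, -⟩ := key j hj.2
      obtain ⟨-, h2', h3', -⟩ := key j' hj'.2
      rw [hjj] at h3
      omega
  have hz2 := Finset.card_filter_add_card_filter_not (s := Finset.range L)
      (fun j => Mt a j k < Mt h j (k+1))
  rw [Finset.card_range] at hz2
  have hsum : F L a k + ((Finset.range L).filter (fun j => Mt a j k < Mt h j (k+1))).card ≤
      F L h (k+1) := by
    unfold F
    rw [Finset.card_filter, ← Finset.sum_add_distrib]
    apply Finset.sum_le_sum
    intro j _
    have h0 := Mt_le a j k
    have h1 : Mt a j k ≤ Mt h j (k+1) :=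
        le_Mt (by omega) fun i hi hij => lt_of_lt_of_le (Mt_lt hi hij) (hle _)
    split_ifs <;> omega
  omega

lemma Feas_up (L n : ℕ) : ∀ (h r : ℕ → ℕ), Antitone h → Feas L n h r →
    ∀ I ⊆ Finset.range n, ∑ t ∈ I, r t ≤ F L h I.card := by
  induction n with
  | zero =>
    intro h r _ _ I hI
    have : I = ∅ := by simpa using hI
    simp [this]
  | succ n ih =>
    intro h r hh ⟨a, ha, hle, h3, h4, h5⟩ I hI
    by_cases hn : n ∈ I
    · have h6 := ih a r ha h5 (I.erase n) (by
        intro t ht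
        have h7 := hI (Finset.mem_of_mem_erase ht)
        have h8 := Finset.ne_of_mem_erase ht
        simp at h7 ⊢; omega)
      have h7 := F_step L hh ha hle (I.erase n).card
      rw [Finset.card_erase_add_one hn] at h7
      rw [← Finset.add_sum_erase I r hn]
      omega
    · have h6 := ih a r ha h5 I (by
        intro t ht
        have h7 := hI ht
        have h8 : t ≠ n := fun h => hn (h ▸ ht)
        simp at h7 ⊢; omega)
      exact h6.trans (Finset.sum_le_sum fun j _ => Mt_mono hle j _)

lemma step (L n : ℕ) (h : ℕ → ℕ) (hh : Shape L h) (m : ℕ) (hm : m ≤ F L h 1) :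
    ∃ a, Antitone a ∧ (∀ j, a j ≤ h j) ∧ m ≤ cnt_s14 L h a ∧
      ∀ k ≤ n, F L h k ≤ F L a k ∨ F L h (k+1) ≤ F L a k + m := by
  rcases Nat.eq_zero_or_pos m with rfl | hm0
  · exact ⟨h, hh.anti, fun _ => le_rfl, Nat.zero_le _, fun k _ => Or.inl le_rfl⟩
  rw [F_one] at hm
  obtain ⟨hcL, hcs⟩ := cc_spec hh
  have hMs := Mt_shape hh (n+1)
  set M : ℕ → ℕ := fun j => Mt h j (n+1) with hM
  set K := M (m-1) with hK
  have hKn : K ≤ n + 1 := Mt_le _ _ _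
  have hK1 : 1 ≤ K := by
    refine le_Mt (by omega) fun i hi _ => ?_
    have : i = 0 := by omega
    subst this
    have := (hcs (m-1)).2 (by omega)
    simpa using this
  obtain ⟨q, hqL, hq⟩ := thresh hMs K
  obtain ⟨w, hwL, hw⟩ := thresh hMs (K-1)
  have hqm : q < m := by
    have := hq (m-1); omega
  have hmw : m ≤ w := by
    have := hw (m-1); omega
  obtain ⟨θ, hθ⟩ : ∃ θ, θ + m = q + w := ⟨q + w - m, by omega⟩
  let D : ℕ → Prop := fun p => 1 ≤ p ∧ h p = h (p-1) ∧
    (M (p + h p - 1) < h p ∨ K < h p ∨ (h p = K ∧ θ ≤ p + h p - 1))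
  let a : ℕ → ℕ := fun p => if D p then h p - 1 else h p
  have hle : ∀ j, a j ≤ h j := by
    intro j; simp only [a]; split_ifs <;> omega
  have hanti : Antitone a := by
    apply antitone_nat_of_succ_le
    intro p
    have h1 := hh.anti (show p ≤ p + 1 by omega)
    simp only [a]
    by_cases hD : D p
    · by_cases hD' : D (p+1)
      · rw [if_pos hD, if_pos hD']; omega
      · rw [if_pos hD, if_neg hD']
        by_contra hcon
        have h2 : h (p+1) = h p := by omega
        apply hD'
        obtain ⟨d1, d2, d3⟩ := hD
        have h3 : M (p + 1 + h (p+1) - 1) ≤ M (p + h p - 1) := hMs.anti (by omega)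
        refine ⟨by omega, by simpa using h2, ?_⟩
        rcases d3 with d3 | d3 | d3
        · left; omega
        · right; left; omega
        · right; right; omega
    · rw [if_neg hD]
      split_ifs <;> omega
  refine ⟨a, hanti, hle, ?_, ?_⟩
  · -- counting
    have hcnt : cnt_s14 L h a + ((Finset.range L).filter
        (fun j => ¬ (a j < h j ∨ a (j+1) < a j))).card = L := by
      have := Finset.card_filter_add_card_filter_not (s := Finset.range L)
        (fun j => a j < h j ∨ a (j+1) < a j)
      rw [Finset.card_range] at this
      exact this
    have key : ∀ p, p < L → ¬ (a p < h p ∨ a (p+1) < a p) →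
        M (p + h p) = h p ∧ p + h p < L ∧
          ((q ≤ p + h p ∧ p + h p < θ) ∨ w ≤ p + h p) := by
      intro p hpL hp
      push Not at hp
      have hMle : M (p + h p) ≤ h p := Mt_le_of (by omega) (by simp)
      have hqq := hq (p + h p)
      have hww := hw (p + h p)
      rcases Nat.eq_zero_or_pos (h p) with h0 | h0
      · refine ⟨by omega, by omega, ?_⟩
        right; omega
      · have h1 := hle p
        have h2 := hle (p+1)
        have h3 := hh.anti (show p ≤ p + 1 by omega)
        have h4 : h (p+1) = h p := by omega
        have hnD : ¬ D (p+1) := by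
          intro hD
          have : a (p+1) = h (p+1) - 1 := if_pos hD
          omega
        have h5 : ¬ (M (p + 1 + h (p+1) - 1) < h (p+1) ∨ K < h (p+1) ∨
            (h (p+1) = K ∧ θ ≤ p + 1 + h (p+1) - 1)) := by
          intro hc; exact hnD ⟨by omega, by simpa using h4, hc⟩
        have h6 : p + 1 + h (p+1) - 1 = p + h p := by omega
        rw [h6, h4] at h5
        have h7 : p + h p < L := by
          by_contra hcon
          have := hMs.zero (p + h p) (by omega)
          omega
        refine ⟨by omega, h7, ?_⟩
        omega
    have hz : ((Finset.range L).filter (fun j => ¬ (a j < h j ∨ a (j+1) < a j))).card ≤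
        (Finset.Ico q θ ∪ Finset.Ico w L).card := by
      refine Finset.card_le_card_of_injOn (fun p => p + h p) ?_ ?_
      · intro p hp
        simp only [Finset.coe_filter, Finset.mem_range, Set.mem_setOf_eq] at hp
        obtain ⟨-, k2, k3⟩ := key p hp.1 hp.2
        simp only [Finset.coe_union, Finset.coe_Ico, Set.mem_union, Set.mem_Ico]
        omega
      · intro p hp p' hp' hpp
        simp only [Finset.coe_filter, Finset.mem_range, Set.mem_setOf_eq] at hp hp' hpp
        obtain ⟨k1, -, -⟩ := key p hp.1 hp.2
        obtain ⟨k1', -, -⟩ := key p' hp'.1 hp'.2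
        rw [hpp] at k1
        omega
    have hz2 := Finset.card_union_le (Finset.Ico q θ) (Finset.Ico w L)
    simp only [Nat.card_Ico] at hz2
    omega
  · intro k hk
    have key : ∀ j, Mt h j k ≤ Mt a j k + if (j < q ∨ (θ ≤ j ∧ j < w)) ∧ M j ≤ k then 1 else 0 := by
      intro j
      have e1 := Mt_min h j (show k ≤ n + 1 by omega)
      change _ = min k (M j) at e1
      by_cases hc : Mt h j k ≤ Mt a j k
      · omega
      · have h1 := Mt_le h j k
        have h2 := Mt_spec (h := a) (j := j) (N := k) (by omega)
        have h3 := Mt_lt (h := h) (j := j) (N := k) (i := Mt a j k) (by omega) h2.1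
        set i := Mt a j k with hi
        have hD : D (j - i) := by
          by_contra hD
          have : a (j - i) = h (j - i) := if_neg hD
          omega
        have h4 : a (j - i) = h (j - i) - 1 := if_pos hD
        have h5 : h (j - i) = i + 1 := by omega
        obtain ⟨d1, d2, d3⟩ := hD
        have h6 : M j ≤ i + 1 := Mt_le_of (by omega) (by
          have : j - (i+1) = j - i - 1 := by omega
          rw [this]; omega)
        have h7 : j - i + h (j - i) - 1 = j := by omega
        rw [h7] at d3
        have hqq := hq j
        have hww := hw j
        have hE : (j < q ∨ (θ ≤ j ∧ j < w)) ∧ M j ≤ k := by omega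
        rw [if_pos hE]
        omega
    have hsum : F L h k ≤ F L a k +
        ((Finset.range L).filter (fun j => (j < q ∨ (θ ≤ j ∧ j < w)) ∧ M j ≤ k)).card := by
      unfold F
      rw [Finset.card_filter, ← Finset.sum_add_distrib]
      exact Finset.sum_le_sum fun j _ => key j
    by_cases hkK : k < K
    · left
      have : (Finset.range L).filter (fun j => (j < q ∨ (θ ≤ j ∧ j < w)) ∧ M j ≤ k) = ∅ := by
        apply Finset.filter_eq_empty_iff.2
        intro j _
        have hqq := hq j
        have hww := hw j
        omega
      rw [this] at hsum
      simpa using hsum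
    · right
      rw [F_succ L h (show k + 1 ≤ n + 1 by omega)]
      have hdis : Disjoint
          ((Finset.range L).filter (fun j => (j < q ∨ (θ ≤ j ∧ j < w)) ∧ M j ≤ k))
          ((Finset.range L).filter (fun j => k < M j)) := by
        rw [Finset.disjoint_left]
        intro j
        simp only [Finset.mem_filter]
        omega
      have h1 := Finset.card_union_of_disjoint hdis
      have h2 : ((Finset.range L).filter (fun j => (j < q ∨ (θ ≤ j ∧ j < w)) ∧ M j ≤ k) ∪
          (Finset.range L).filter (fun j => k < M j)).card ≤
          (Finset.range q ∪ Finset.Ico θ w).card := by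
        apply Finset.card_le_card
        intro j
        simp only [Finset.mem_union, Finset.mem_filter, Finset.mem_range, Finset.mem_Ico]
        have hqq := hq j
        have hww := hw j
        omega
      have h3 := Finset.card_union_le (Finset.range q) (Finset.Ico θ w)
      simp only [Nat.card_Ico, Finset.card_range] at h3
      show F L h k + ((Finset.range L).filter (fun j => k < M j)).card ≤ _
      omega

lemma weak (L n : ℕ) : ∀ (h r : ℕ → ℕ), Shape L h →
    (∀ I ⊆ Finset.range (n+1), ∑ t ∈ I, r t ≤ F L h I.card) →
    ∃ r', (∀ t < n+1, r t ≤ r' t) ∧ Feas L (n+1) h r' := by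
  induction n with
  | zero =>
    intro h r hh hI
    have h1 := hI {0} (by simp)
    simp only [Finset.sum_singleton, Finset.card_singleton, F_one] at h1
    refine ⟨fun _ => cc L h, ?_, fun _ => 0, antitone_const, by simp, le_rfl, ?_, fun _ => rfl⟩
    · intro t ht
      have : t = 0 := by omega
      subst this; exact h1
    · exact cols_le_cnt L h fun _ => 0
  | succ n ih =>
    intro h r hh hI
    have h1 := hI {n+1} (by simp)
    simp only [Finset.sum_singleton, Finset.card_singleton] at h1
    obtain ⟨a, ha, hle, hcnt, hF⟩ := step L (n+1) h hh (r (n+1)) h1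
    obtain ⟨r', hr', hf⟩ := ih a r (hh.sub ha hle) (by
      intro I hIs
      have hcard : I.card ≤ n + 1 := by simpa using Finset.card_le_card hIs
      have hnI : n + 1 ∉ I := fun hc => by simpa using hIs hc
      rcases hF I.card hcard with h2 | h2
      · refine (hI I (hIs.trans ?_)).trans h2
        intro t; simp; omega
      · have h3 := hI (insert (n+1) I) (by
          intro t ht
          rcases Finset.mem_insert.1 ht with rfl | ht
          · simp
          · have := hIs ht
            simp at this ⊢; omega)
        rw [Finset.sum_insert hnI, Finset.card_insert_of_notMem hnI] at h3
        omega)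
    refine ⟨Function.update r' (n+1) (cnt_s14 L h a), ?_, a, ha, hle, ?_, ?_, ?_⟩
    · intro t ht
      by_cases htn : t = n + 1
      · subst htn; simpa using hcnt
      · rw [Function.update_of_ne htn]; exact hr' t (by omega)
    · simpa using cols_le_cnt L h a
    · simp
    · refine Feas_congr L (n+1) a r' _ ?_ hf
      intro t ht
      rw [Function.update_of_ne (by omega)]

theorem Feas_iff (L n : ℕ) (hn : 1 ≤ n) (h r : ℕ → ℕ) (hh : Shape L h) :
    Feas L n h r ↔ (∀ I ⊆ Finset.range n, ∑ t ∈ I, r t ≤ F L h I.card) ∧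
      cc L h ≤ ∑ t ∈ Finset.range n, r t := by
  constructor
  · intro hf
    exact ⟨Feas_up L n h r hh.anti hf, Feas_low L n h r hf⟩
  · rintro ⟨h1, h2⟩
    obtain ⟨n, rfl⟩ : ∃ n', n = n' + 1 := ⟨n - 1, by omega⟩
    obtain ⟨r', h3, h4⟩ := weak L n h r hh h1
    exact Feas_mono L (n+1) h r' h r hh hh h4 (fun _ => le_rfl) h3 h2

structure Tab (n : ℕ) (h : ℕ → ℕ) (T : ℕ → ℕ → Finset ℕ) : Prop where
  ne : ∀ i j, (T i j).Nonempty ↔ i < h j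
  sub : ∀ i j x, x ∈ T i j → 1 ≤ x ∧ x ≤ n
  row : ∀ i j, FinsetLE (T i j) (T i (j+1))
  col : ∀ i j, FinsetLE (T i j) (T (i+1) j)

lemma Tab.memlt {n : ℕ} {h : ℕ → ℕ} {T : ℕ → ℕ → Finset ℕ} (hT : Tab n h T) {i j x : ℕ}
    (hx : x ∈ T i j) : i < h j := (hT.ne i j).1 ⟨x, hx⟩

lemma Tab.colle {n : ℕ} {h : ℕ → ℕ} {T : ℕ → ℕ → Finset ℕ} (hT : Tab n h T) {i j x : ℕ}
    (hx : x ∈ T i j) : ∀ i' ≤ i, ∃ y ∈ T i' j, y ≤ x := by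
  intro i' hi'
  induction i, hi' using Nat.le_induction generalizing x with
  | base => exact ⟨x, hx, le_rfl⟩
  | succ i hi ih =>
    obtain ⟨z, hz⟩ := (hT.ne i j).2 (by have := hT.memlt hx; omega)
    obtain ⟨y, hy, hyz⟩ := ih hz
    exact ⟨y, hy, hyz.trans (hT.col i j z hz x hx)⟩

lemma ircont_eq_s14 {L n : ℕ} {h : ℕ → ℕ} (hh : Shape L h) {T : ℕ → ℕ → Finset ℕ} (hT : Tab n h T)
    (v : ℕ) : ircont T v = ((Finset.range L).filter (fun j => ∃ i, v ∈ T i j)).card := by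
  unfold ircont
  rw [← Set.ncard_coe_finset]
  congr 1
  ext j
  simp only [Finset.coe_filter, Finset.mem_range, Set.mem_setOf_eq]
  constructor
  · rintro ⟨i, hi⟩
    refine ⟨?_, i, hi⟩
    by_contra hc
    have := hh.zero j (by omega)
    have := hT.memlt hi
    omega
  · exact fun h => h.2

lemma Feas_of_Tab (L n : ℕ) : ∀ (h : ℕ → ℕ) (T : ℕ → ℕ → Finset ℕ), Shape L h → Tab n h T →
    Feas L n h (fun t => ircont T (t+1)) := by
  induction n with
  | zero =>
    intro h T hh hT j
    by_contra hc
    obtain ⟨x, hx⟩ := (hT.ne 0 j).2 (by omega)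
    have := hT.sub _ _ _ hx
    omega
  | succ n ih =>
    intro h T hh hT
    let R : ℕ → ℕ → Finset ℕ := fun i j => (T i j).filter (· ≤ n)
    have hRm : ∀ i j x, x ∈ R i j ↔ x ∈ T i j ∧ x ≤ n := fun i j x => by simp [R]
    have hex : ∀ j, ∃ i, ¬ (R i j).Nonempty := by
      intro j
      refine ⟨h j, ?_⟩
      rintro ⟨x, hx⟩
      have := hT.memlt ((hRm _ _ _).1 hx).1
      omega
    let a : ℕ → ℕ := fun j => Nat.find (hex j)
    have hne : ∀ i j, (R i j).Nonempty ↔ i < a j := by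
      intro i j
      constructor
      · rintro ⟨x, hx⟩
        by_contra hc
        have h1 := Nat.find_spec (hex j)
        obtain ⟨hx1, hx2⟩ := (hRm _ _ _).1 hx
        obtain ⟨y, hy, hyx⟩ := hT.colle hx1 (a j) (by omega)
        exact h1 ⟨y, (hRm _ _ _).2 ⟨hy, by omega⟩⟩
      · intro hi
        by_contra hc
        exact Nat.find_min (hex j) hi hc
    have hRT : Tab n a R := by
      refine ⟨hne, ?_, ?_, ?_⟩
      · intro i j x hx
        obtain ⟨h1, h2⟩ := (hRm _ _ _).1 hx
        exact ⟨(hT.sub _ _ _ h1).1, h2⟩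
      · intro i j x hx y hy
        exact hT.row i j x ((hRm _ _ _).1 hx).1 y ((hRm _ _ _).1 hy).1
      · intro i j x hx y hy
        exact hT.col i j x ((hRm _ _ _).1 hx).1 y ((hRm _ _ _).1 hy).1
    have hle : ∀ j, a j ≤ h j := by
      intro j
      by_contra hc
      obtain ⟨x, hx⟩ := (hne (h j) j).2 (by omega)
      have := hT.memlt ((hRm _ _ _).1 hx).1
      omega
    have hanti : Antitone a := by
      apply antitone_nat_of_succ_le
      intro j
      by_contra hc
      obtain ⟨x, hx⟩ := (hne (a j) (j+1)).2 (by omega)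
      obtain ⟨hx1, hx2⟩ := (hRm _ _ _).1 hx
      have h1 := hT.memlt hx1
      have h2 := hh.anti (show j ≤ j + 1 by omega)
      obtain ⟨y, hy⟩ := (hT.ne (a j) j).2 (by omega)
      have h3 := hT.row _ _ y hy x hx1
      have h4 := (hne (a j) j).1 ⟨y, (hRm _ _ _).2 ⟨hy, by omega⟩⟩
      omega
    refine ⟨a, hanti, hle, ?_, ?_, ?_⟩
    · show cols L h a ≤ ircont T (n+1)
      rw [ircont_eq_s14 hh hT]
      apply Finset.card_le_card
      intro j
      simp only [Finset.mem_filter]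
      rintro ⟨hj, hlt⟩
      refine ⟨hj, a j, ?_⟩
      obtain ⟨x, hx⟩ := (hT.ne (a j) j).2 hlt
      have h1 := hT.sub _ _ _ hx
      by_cases h2 : x = n + 1
      · exact h2 ▸ hx
      · have h4 := (hne (a j) j).1 ⟨x, (hRm _ _ _).2 ⟨hx, by omega⟩⟩
        omega
    · show ircont T (n+1) ≤ cnt_s14 L h a
      rw [ircont_eq_s14 hh hT]
      apply Finset.card_le_card
      intro j
      simp only [Finset.mem_filter]
      rintro ⟨hj, i, hi⟩
      refine ⟨hj, ?_⟩
      have h1 := hT.memlt hi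
      by_cases h2 : a j < h j
      · exact Or.inl h2
      · right
        have h3 : a (j+1) ≤ i := by
          by_contra hc
          obtain ⟨x, hx⟩ := (hne i (j+1)).2 (by omega)
          obtain ⟨hx1, hx2⟩ := (hRm _ _ _).1 hx
          have := hT.row _ _ _ hi x hx1
          omega
        omega
    · refine Feas_congr L n a _ _ ?_ (ih a R (hh.sub hanti hle) hRT)
      intro t ht
      show ircont R (t+1) = ircont T (t+1)
      unfold ircont
      congr 1
      ext j
      simp only [Set.mem_setOf_eq, hRm]
      constructor
      · rintro ⟨i, hi, _⟩; exact ⟨i, hi⟩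
      · rintro ⟨i, hi⟩; exact ⟨i, hi, by omega⟩

lemma Tab_of_Feas (L n : ℕ) : ∀ (h r : ℕ → ℕ), Shape L h → Feas L n h r →
    ∃ T, Tab n h T ∧ ∀ t < n, ircont T (t+1) = r t := by
  induction n with
  | zero =>
    intro h r hh hf
    have hf' : ∀ j, h j = 0 := hf
    refine ⟨fun _ _ => ∅, ⟨?_, ?_, ?_, ?_⟩, ?_⟩ <;> simp [hf', FinsetLE]
  | succ n ih =>
    intro h r hh ⟨a, ha, hle, h3, h4, h5⟩
    obtain ⟨R, hR, hRr⟩ := ih a r (hh.sub ha hle) h5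
    obtain ⟨C, hC1, hC2, hC3⟩ := Finset.exists_subsuperset_card_eq
      (s := (Finset.range L).filter (fun j => a j < h j))
      (t := (Finset.range L).filter (fun j => a j < h j ∨ a (j+1) < a j)) (n := r n)
      (by intro j; simp only [Finset.mem_filter]; tauto) h3 h4
    let P : ℕ → ℕ → Prop := fun i j =>
      (a j ≤ i ∧ i < h j) ∨ (j ∈ C ∧ h j = a j ∧ i + 1 = a j)
    let T : ℕ → ℕ → Finset ℕ := fun i j => R i j ∪ (if P i j then {n+1} else ∅)
    have hTm : ∀ i j x, x ∈ T i j ↔ x ∈ R i j ∨ (x = n + 1 ∧ P i j) := by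
      intro i j x
      simp only [T, Finset.mem_union]
      split_ifs with hp <;> simp [hp]
    have hTle : ∀ i j x, x ∈ T i j → 1 ≤ x ∧ x ≤ n + 1 := by
      intro i j x hx
      rcases (hTm _ _ _).1 hx with hx | ⟨hx, _⟩
      · have := hR.sub _ _ _ hx; omega
      · omega
    have hTab : Tab (n+1) h T := by
      refine ⟨?_, hTle, ?_, ?_⟩
      · intro i j
        have := hle j
        constructor
        · rintro ⟨x, hx⟩
          rcases (hTm _ _ _).1 hx with hx | ⟨_, hx⟩
          · have := hR.memlt hx; omega
          · rcases hx with hx | hx <;> omega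
        · intro hi
          by_cases hia : i < a j
          · obtain ⟨x, hx⟩ := (hR.ne i j).2 hia
            exact ⟨x, (hTm _ _ _).2 (Or.inl hx)⟩
          · exact ⟨n+1, (hTm _ _ _).2 (Or.inr ⟨rfl, Or.inl (by omega)⟩)⟩
      · intro i j x hx y hy
        rcases (hTm _ _ _).1 hy with hy | ⟨hy, _⟩
        · have hy' := hR.memlt hy
          rcases (hTm _ _ _).1 hx with hx | ⟨hx, hp⟩
          · exact hR.row _ _ x hx y hy
          · exfalso
            have := ha (show j ≤ j + 1 by omega)
            rcases hp with hp | ⟨hp1, hp2, hp3⟩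
            · omega
            · have := hC2 hp1
              simp only [Finset.mem_filter] at this
              omega
        · have := hTle _ _ _ hx; omega
      · intro i j x hx y hy
        rcases (hTm _ _ _).1 hy with hy | ⟨hy, _⟩
        · have hy' := hR.memlt hy
          rcases (hTm _ _ _).1 hx with hx | ⟨hx, hp⟩
          · exact hR.col _ _ x hx y hy
          · exfalso
            rcases hp with hp | ⟨hp1, hp2, hp3⟩ <;> omega
        · have := hTle _ _ _ hx; omega
    refine ⟨T, hTab, ?_⟩
    intro t ht
    by_cases htn : t = n
    · subst htn
      rw [ircont_eq_s14 hh hTab, ← hC3]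
      congr 1
      ext j
      simp only [Finset.mem_filter]
      constructor
      · rintro ⟨hj, i, hi⟩
        rcases (hTm _ _ _).1 hi with hi | ⟨_, hp⟩
        · have := hR.sub _ _ _ hi; omega
        · rcases hp with hp | hp
          · exact hC1 (Finset.mem_filter.2 ⟨hj, by omega⟩)
          · exact hp.1
      · intro hj
        have h1 := hC2 hj
        simp only [Finset.mem_filter] at h1
        have h2 := hle j
        refine ⟨h1.1, ?_⟩
        by_cases h0 : a j < h j
        · exact ⟨a j, (hTm _ _ _).2 (Or.inr ⟨rfl, Or.inl ⟨le_rfl, h0⟩⟩)⟩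
        · exact ⟨a j - 1, (hTm _ _ _).2 (Or.inr ⟨rfl, Or.inr ⟨hj, by omega, by omega⟩⟩)⟩
    · rw [← hRr t (by omega)]
      unfold ircont
      congr 1
      ext j
      simp only [Set.mem_setOf_eq, hTm]
      constructor
      · rintro ⟨i, hi | hi⟩
        · exact ⟨i, hi⟩
        · omega
      · rintro ⟨i, hi⟩; exact ⟨i, Or.inl hi⟩

/-- conjugate partition -/
lemma conj (lam : ℕ → ℕ) (hlam : IsPartitionFun lam) :
    ∃ h : ℕ → ℕ, Shape (lam 0) h ∧ ∀ i j, i < h j ↔ j < lam i := by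
  obtain ⟨hl, N, hN⟩ := hlam
  have hanti : Antitone lam := antitone_nat_of_succ_le hl
  have hex : ∀ j, ∃ i, lam i ≤ j := fun j => ⟨N, by rw [hN N le_rfl]; omega⟩
  have key : ∀ i j, i < Nat.find (hex j) ↔ j < lam i := by
    intro i j
    constructor
    · intro hi
      have := Nat.find_min (hex j) hi
      omega
    · intro hi
      by_contra hc
      have h1 := Nat.find_spec (hex j)
      have h2 := hanti (not_lt.1 hc)
      omega
  refine ⟨fun j => Nat.find (hex j), ⟨?_, ?_⟩, key⟩
  · intro j j' hjj
    by_contra hc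
    have h1 := (key (Nat.find (hex j)) j').1 (not_le.1 hc)
    have h2 := Nat.find_spec (hex j)
    omega
  · intro j hj
    by_contra hc
    have := (key 0 j).1 (by omega)
    omega

lemma Tab_iff (lam h : ℕ → ℕ) (hk : ∀ i j, i < h j ↔ j < lam i) (hanti : Antitone h) (n : ℕ)
    (T : ℕ → ℕ → Finset ℕ) : IsSVRPPn lam (fun _ => 0) n T ↔ Tab n h T := by
  have hsh : ∀ i j, InShape lam (fun _ => 0) i j ↔ i < h j := by
    intro i j; simp [InShape, hk]
  unfold IsSVRPPn IsSVRPP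
  simp only [hsh]
  constructor
  · rintro ⟨⟨h1, h2, h3, h4, h5⟩, h6⟩
    have hne : ∀ i j, (T i j).Nonempty ↔ i < h j := by
      intro i j
      refine ⟨fun hx => ?_, h2 i j⟩
      by_contra hc
      rw [h1 i j hc] at hx
      simp at hx
    refine ⟨hne, ?_, ?_, ?_⟩
    · intro i j x hx; simpa using h6 i j hx
    · intro i j x hx y hy
      exact h4 i j ((hne _ _).1 ⟨x, hx⟩) ((hne _ _).1 ⟨y, hy⟩) x hx y hy
    · intro i j x hx y hy
      exact h5 i j ((hne _ _).1 ⟨x, hx⟩) ((hne _ _).1 ⟨y, hy⟩) x hx y hy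
  · intro hT
    refine ⟨⟨?_, fun i j => (hT.ne i j).2, fun i j x hx => (hT.sub i j x hx).1,
      fun i j _ _ => hT.row i j, fun i j _ _ => hT.col i j⟩, ?_⟩
    · intro i j hc
      rw [← hT.ne, Finset.not_nonempty_iff_eq_empty] at hc
      exact hc
    · intro i j x hx
      simpa using hT.sub i j x hx

lemma Tab_finite (L n : ℕ) (h : ℕ → ℕ) (hh : Shape L h) : {T | Tab n h T}.Finite := by
  let g : (ℕ → ℕ → Finset ℕ) → (Fin (h 0) → Fin L → (Finset.Icc 1 n).powerset) :=
    fun T i j => ⟨(T i j).filter (· ∈ Finset.Icc 1 n), by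
      rw [Finset.mem_powerset]; intro x hx; exact (Finset.mem_filter.1 hx).2⟩
  refine Set.Finite.of_injOn (f := g) (t := Set.univ) (fun _ _ => Set.mem_univ _) ?_ Set.finite_univ
  intro T hT T' hT' hg
  have hT : Tab n h T := hT
  have hT' : Tab n h T' := hT'
  have aux : ∀ S, Tab n h S → ∀ i j, (S i j).filter (· ∈ Finset.Icc 1 n) = S i j := by
    intro S hS i j
    apply Finset.filter_true_of_mem
    intro x hx
    simpa using hS.sub i j x hx
  funext i j
  by_cases hij : i < h j
  · have hj : j < L := by
      by_contra hc
      have := hh.zero j (by omega)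
      omega
    have hi : i < h 0 := lt_of_lt_of_le hij (hh.anti (Nat.zero_le _))
    have := congrFun (congrFun hg ⟨i, hi⟩) ⟨j, hj⟩
    have := congrArg Subtype.val this
    simp only [g] at this
    rw [aux T hT, aux T' hT'] at this
    exact this
  · have h1 := hij
    rw [← hT.ne, Finset.not_nonempty_iff_eq_empty] at h1
    have h2 := hij
    rw [← hT'.ne, Finset.not_nonempty_iff_eq_empty] at h2
    rw [h1, h2]

lemma mem_support (lam : ℕ → ℕ) (n : ℕ)
    (hfin : {T : ℕ → ℕ → Finset ℕ | IsSVRPPn lam (fun _ => 0) n T}.Finite) (m : Fin n →₀ ℕ) :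
    m ∈ (hybridG11 lam n).support ↔
      ∃ T, IsSVRPPn lam (fun _ => 0) n T ∧ ∀ v : Fin n, m v = ircont T ((v : ℕ) + 1) := by
  have hmono : ∀ T : ℕ → ℕ → Finset ℕ, (∏ v : Fin n, (MvPolynomial.X v : MvPolynomial (Fin n) ℤ) ^
      ircont T ((v : ℕ) + 1)) =
      MvPolynomial.monomial (Finsupp.equivFunOnFinite.symm
        (fun v : Fin n => ircont T ((v : ℕ) + 1))) 1 := by
    intro T
    rw [MvPolynomial.monomial_eq]
    simp [Finsupp.prod_fintype]
  have hco : MvPolynomial.coeff m (hybridG11 lam n) =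
      ((hfin.toFinset.filter (fun T => Finsupp.equivFunOnFinite.symm
        (fun v : Fin n => ircont T ((v : ℕ) + 1)) = m)).card : ℤ) := by
    unfold hybridG11
    rw [finsum_mem_eq_finite_toFinset_sum _ hfin, MvPolynomial.coeff_sum, Finset.card_filter]
    push_cast
    apply Finset.sum_congr rfl
    intro T _
    rw [hmono, MvPolynomial.coeff_monomial]
  rw [MvPolynomial.mem_support_iff, hco]
  rw [Nat.cast_ne_zero, ← Nat.pos_iff_ne_zero, Finset.card_pos]
  constructor
  · rintro ⟨T, hT⟩
    simp only [Finset.mem_filter, Set.Finite.mem_toFinset, Set.mem_setOf_eq] at hT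
    refine ⟨T, hT.1, fun v => ?_⟩
    rw [← hT.2]; rfl
  · rintro ⟨T, hT, hm⟩
    refine ⟨T, ?_⟩
    simp only [Finset.mem_filter, Set.Finite.mem_toFinset, Set.mem_setOf_eq]
    refine ⟨hT, ?_⟩
    ext v
    rw [hm v]; rfl

def ext0 {n : ℕ} (m : Fin n → ℕ) (t : ℕ) : ℕ := if ht : t < n then m ⟨t, ht⟩ else 0

lemma mem_support_iff' (lam : ℕ → ℕ) (hlam : IsPartitionFun lam) (n : ℕ) (hn : 1 ≤ n) :
    ∃ (G : ℕ → ℕ) (c : ℕ), ∀ m : Fin n →₀ ℕ, m ∈ (hybridG11 lam n).support ↔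
      (∀ I : Finset (Fin n), ∑ v ∈ I, m v ≤ G I.card) ∧ c ≤ ∑ v, m v := by
  obtain ⟨h, hh, hk⟩ := conj lam hlam
  have hiff := Tab_iff lam h hk hh.anti n
  have hfin : {T : ℕ → ℕ → Finset ℕ | IsSVRPPn lam (fun _ => 0) n T}.Finite := by
    simp only [hiff]; exact Tab_finite _ n h hh
  refine ⟨F (lam 0) h, cc (lam 0) h, fun m => ?_⟩
  have h1 : m ∈ (hybridG11 lam n).support ↔ Feas (lam 0) n h (ext0 m) := by
    rw [mem_support lam n hfin]
    constructor
    · rintro ⟨T, hT, hm⟩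
      refine Feas_congr _ n h _ _ ?_ (Feas_of_Tab _ n h T hh ((hiff T).1 hT))
      intro t ht
      simp [ext0, ht, hm]
    · intro hf
      obtain ⟨T, hT, hr⟩ := Tab_of_Feas _ n h _ hh hf
      refine ⟨T, (hiff T).2 hT, fun v => ?_⟩
      rw [hr v v.2]
      simp [ext0]
  rw [h1, Feas_iff _ n hn h _ hh]
  have hs : ∀ I : Finset (Fin n), ∑ t ∈ I.map Fin.valEmbedding, ext0 m t = ∑ v ∈ I, m v := by
    intro I
    rw [Finset.sum_map]
    apply Finset.sum_congr rfl
    intro v _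
    simp [ext0]
  have hu : (Finset.univ : Finset (Fin n)).map Fin.valEmbedding = Finset.range n := by
    ext t; simp only [Finset.mem_map, Finset.mem_univ, true_and, Finset.mem_range]
    exact ⟨by rintro ⟨v, rfl⟩; exact v.2, fun ht => ⟨⟨t, ht⟩, rfl⟩⟩
  rw [← hu, hs]
  refine and_congr_left fun _ => ⟨fun H I => ?_, fun H I hI => ?_⟩
  · have := H (I.map Fin.valEmbedding) (Finset.map_subset_map.2 (Finset.subset_univ _))
    rwa [hs, Finset.card_map] at this
  · obtain ⟨J, -, rfl⟩ := Finset.subset_map_iff.1 hI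
    rw [hs, Finset.card_map]
    exact H J

end HG

/-- **saturated Newton polytope.** For any partition `lam` and any `n ≥ 1`,
`G_lam(x_1,…,x_n; 1; 1)` has saturated Newton polytope: every lattice point of the convex
hull of its exponent vectors is itself an exponent vector. -/
theorem hybridG11_SNP (lam : ℕ → ℕ) (hlam : IsPartitionFun lam) (n : ℕ) (hn : 1 ≤ n)
    (p : Fin n → ℤ)
    (hp : (fun v => (p v : ℝ)) ∈ convexHull ℝ
      {d : Fin n → ℝ | ∃ m ∈ (hybridG11 lam n).support, ∀ v, d v = (m v : ℝ)}) :
    ∃ m ∈ (hybridG11 lam n).support, ∀ v, ((m v : ℤ) = p v) := by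
  obtain ⟨G, c, H⟩ := HG.mem_support_iff' lam hlam n hn
  have hlin : ∀ (I : Finset (Fin n)), IsLinearMap ℝ (fun d : Fin n → ℝ => ∑ v ∈ I, d v) := by
    intro I
    constructor
    · intro x y; simp [Finset.sum_add_distrib]
    · intro a x; simp [Finset.mul_sum]
  have hpos : ∀ v, 0 ≤ p v := by
    intro v
    have hc := convex_halfSpace_ge (hlin {v}) 0
    have := convexHull_min (s := {d : Fin n → ℝ | ∃ m ∈ (hybridG11 lam n).support,
      ∀ v, d v = (m v : ℝ)}) (by
        rintro d ⟨m, hm, hd⟩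
        simp [hd]) hc hp
    simpa using this
  have hup : ∀ I : Finset (Fin n), ∑ v ∈ I, p v ≤ G I.card := by
    intro I
    have hc := convex_halfSpace_le (hlin I) (G I.card : ℝ)
    have := convexHull_min (s := {d : Fin n → ℝ | ∃ m ∈ (hybridG11 lam n).support,
      ∀ v, d v = (m v : ℝ)}) (by
        rintro d ⟨m, hm, hd⟩
        have := ((H m).1 hm).1 I
        simp only [Set.mem_setOf_eq, hd]
        exact_mod_cast this) hc hp
    simp only [Set.mem_setOf_eq] at this
    exact_mod_cast this
  have hlow : (c : ℤ) ≤ ∑ v, p v := by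
    have hc := convex_halfSpace_ge (hlin Finset.univ) (c : ℝ)
    have := convexHull_min (s := {d : Fin n → ℝ | ∃ m ∈ (hybridG11 lam n).support,
      ∀ v, d v = (m v : ℝ)}) (by
        rintro d ⟨m, hm, hd⟩
        have := ((H m).1 hm).2
        simp only [Set.mem_setOf_eq, hd]
        exact_mod_cast this) hc hp
    simp only [Set.mem_setOf_eq] at this
    exact_mod_cast this
  have hcast : ∀ v, ((p v).toNat : ℤ) = p v := fun v => Int.toNat_of_nonneg (hpos v)
  refine ⟨Finsupp.equivFunOnFinite.symm (fun v => (p v).toNat), (H _).2 ⟨fun I => ?_, ?_⟩,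
    fun v => hcast v⟩
  · have := hup I
    zify
    simpa [hpos] using this
  · zify
    simpa [hpos] using hlow
end
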